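/- arXiv:1707.02501 — 3 statements merged into one kernel-verified Lean document; each statement's English description precedes it below -/
import Mathlib

section
/- There is no pair (t,x) ∈ ℚ × ℚ satisfying x² + 256t³ + 576t² + 432t + 540 = 0, and there is no pair (t,x) ∈ ℚ × ℚ satisfying x² + 16(16t² − 8t + 5)(64t³ + 144t² + 108t + 135) = 0. -/
namespace CurvesC4C5

/-- The Eisenstein integers `ℤ[ω]`, `ω² = -1 - ω`. -/
abbrev Eis := QuadraticAlgebra ℤ (-1) (-1)

/-- The norm form of the Eisenstein integers. -/
def nm (z : Eis) : ℤ := z.re ^ 2 - z.re * z.im + z.im ^ 2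

lemma nm_mul (z w : Eis) : nm (z * w) = nm z * nm w := by
  simp only [nm, QuadraticAlgebra.re_mul, QuadraticAlgebra.im_mul]; ring

lemma nm_nonneg (z : Eis) : 0 ≤ nm z := by
  unfold nm; nlinarith [sq_nonneg (z.re - z.im), sq_nonneg z.re, sq_nonneg z.im]

lemma nm_eq_zero {z : Eis} (h : nm z = 0) : z = 0 := by
  unfold nm at h
  have h1 : z.re = 0 := by
    have : z.re ^ 2 = 0 := by
      nlinarith [sq_nonneg (z.re - 2 * z.im), sq_nonneg z.re]
    exact pow_eq_zero_iff (by norm_num) |>.1 this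
  have h2 : z.im = 0 := by
    have : z.im ^ 2 = 0 := by
      nlinarith [sq_nonneg (z.im - 2 * z.re), sq_nonneg z.im]
    exact pow_eq_zero_iff (by norm_num) |>.1 this
  ext <;> simp [h1, h2]

lemma nm_pos {z : Eis} (h : z ≠ 0) : 0 < nm z :=
  lt_of_le_of_ne (nm_nonneg z) (fun h0 => h (nm_eq_zero h0.symm))

/-- Conjugation. -/
def cj (z : Eis) : Eis := ⟨z.re - z.im, -z.im⟩

lemma nm_cj (z : Eis) : nm (cj z) = nm z := by simp only [nm, cj]; ring

/-- Nearest integer quotient. -/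
def rnd (t n : ℤ) : ℤ := (2 * t + n) / (2 * n)

lemma rnd_spec (t n : ℤ) (hn : 0 < n) :
    -n ≤ 2 * (t - n * rnd t n) ∧ 2 * (t - n * rnd t n) ≤ n := by
  unfold rnd
  have h1 := Int.emod_add_mul_ediv (2 * t + n) (2 * n)
  have h2 := Int.emod_nonneg (2 * t + n) (b := 2 * n) (by omega)
  have h3 := Int.emod_lt_of_pos (2 * t + n) (b := 2 * n) (by omega)
  constructor <;> nlinarith

/-- Euclidean quotient. -/
def quo (a b : Eis) : Eis :=
  ⟨rnd (a * cj b).re (nm b), rnd (a * cj b).im (nm b)⟩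

lemma nm_rem (a : Eis) {b : Eis} (hb : b ≠ 0) : nm (a - b * quo a b) < nm b := by
  have hN := nm_pos hb
  obtain ⟨e1, e2⟩ := rnd_spec (a * cj b).re (nm b) hN
  obtain ⟨f1, f2⟩ := rnd_spec (a * cj b).im (nm b) hN
  set e := (a * cj b).re - nm b * rnd (a * cj b).re (nm b) with he
  set f := (a * cj b).im - nm b * rnd (a * cj b).im (nm b) with hf
  have key : nm (a - b * quo a b) * nm b = e ^ 2 - e * f + f ^ 2 := by
    rw [← nm_cj b, ← nm_mul]
    have h1 : ((a - b * quo a b) * cj b).re = e := by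
      rw [he]
      simp only [quo, cj, nm, QuadraticAlgebra.re_mul, QuadraticAlgebra.im_mul,
        QuadraticAlgebra.re_sub, QuadraticAlgebra.im_sub]
      ring
    have h2 : ((a - b * quo a b) * cj b).im = f := by
      rw [hf]
      simp only [quo, cj, nm, QuadraticAlgebra.re_mul, QuadraticAlgebra.im_mul,
        QuadraticAlgebra.re_sub, QuadraticAlgebra.im_sub]
      ring
    rw [nm, h1, h2]
  have hb2 : e ^ 2 - e * f + f ^ 2 < nm b * nm b := by
    generalize nm b = N at *
    have a1 : 0 ≤ (N - 2 * e) * (N + 2 * e) := mul_nonneg (by linarith) (by linarith)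
    have a2 : 0 ≤ (N - 2 * f) * (N + 2 * f) := mul_nonneg (by linarith) (by linarith)
    nlinarith [sq_nonneg (e + f), mul_pos hN hN]
  rw [← key] at hb2
  exact lt_of_mul_lt_mul_right hb2 hN.le

instance : EuclideanDomain Eis where
  quotient := quo
  quotient_zero a := by
    ext <;> simp [quo, rnd, nm]
  remainder a b := a - b * quo a b
  quotient_mul_add_remainder_eq a b := by ring
  r a b := (nm a).toNat < (nm b).toNat
  r_wellFounded := (measure fun a : Eis => (nm a).toNat).wf
  remainder_lt a b hb := by
    have := nm_rem a hb
    have := nm_nonneg (a - b * quo a b)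
    show (nm (a - b * quo a b)).toNat < _
    omega
  mul_left_not_lt a b hb := by
    have h1 := nm_mul a b
    have h2 := nm_pos hb
    have h3 := nm_nonneg a
    have : nm a ≤ nm (a * b) := by rw [h1]; nlinarith
    omega

lemma unit_cases (u : Eisˣ) : ∃ x y : ℤ, (u : Eis) = ⟨x, y⟩ ∧
    ((x, y) = (1, 0) ∨ (x, y) = (-1, 0) ∨ (x, y) = (0, 1) ∨ (x, y) = (0, -1) ∨
     (x, y) = (1, 1) ∨ (x, y) = (-1, -1)) := by
  have h : nm (u : Eis) * nm ((u⁻¹ : Eisˣ) : Eis) = 1 := by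
    rw [← nm_mul, Units.mul_inv]; simp [nm, QuadraticAlgebra.re_one, QuadraticAlgebra.im_one]
  have h1 : nm (u : Eis) = 1 := by
    rcases Int.mul_eq_one_iff_eq_one_or_neg_one.1 h with h | h
    · exact h.1
    · have := nm_nonneg (u : Eis); omega
  refine ⟨(u : Eis).re, (u : Eis).im, rfl, ?_⟩
  unfold nm at h1
  generalize (u : Eis).re = x at *
  generalize (u : Eis).im = y at *
  have x1 : x ≤ 1 := by nlinarith [sq_nonneg (x - 2 * y)]
  have x2 : -1 ≤ x := by nlinarith [sq_nonneg (x - 2 * y)]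
  have y1 : y ≤ 1 := by nlinarith [sq_nonneg (y - 2 * x)]
  have y2 : -1 ≤ y := by nlinarith [sq_nonneg (y - 2 * x)]
  interval_cases x <;> interval_cases y <;> simp_all

/-- A cube of the form `p² + 3q²`. -/
lemma cube_form {p q s : ℤ} (hpq : IsCoprime p q) (hs : Odd s) (h : p ^ 2 + 3 * q ^ 2 = s ^ 3) :
    ∃ m n : ℤ, p = m ^ 3 - 9 * m * n ^ 2 ∧ q = 3 * m ^ 2 * n - 3 * n ^ 3 := by
  have hps : IsCoprime (2 * p) (s ^ 3) := by
    apply IsCoprime.pow_right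
    apply IsCoprime.mul_left
    · exact Int.isCoprime_two_left.2 hs
    · apply Int.isCoprime_iff_gcd_eq_one.2
      by_contra hg
      obtain ⟨l, hl, hd⟩ := Nat.exists_prime_and_dvd hg
      have hl' := Nat.prime_iff_prime_int.1 hl
      have d1 : (l : ℤ) ∣ p := (Int.natCast_dvd_natCast.2 hd).trans (Int.gcd_dvd_left _ _)
      have d2 : (l : ℤ) ∣ s := (Int.natCast_dvd_natCast.2 hd).trans (Int.gcd_dvd_right _ _)
      have nq : ¬ (l : ℤ) ∣ q := fun hq => hl'.not_isUnit (hpq.isUnit_of_dvd' d1 hq)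
      obtain ⟨a, rfl⟩ := d1
      obtain ⟨b, rfl⟩ := d2
      have h3 : 3 * q ^ 2 = (l : ℤ) ^ 2 * (l * b ^ 3 - a ^ 2) := by linear_combination h
      have d3 : (l : ℤ) ∣ 3 * q ^ 2 := ⟨l * (l * b ^ 3 - a ^ 2), by rw [h3]; ring⟩
      rcases hl'.dvd_or_dvd d3 with d | d
      · have : l = 3 := by
          have : l ∣ 3 := by exact_mod_cast d
          exact (Nat.prime_dvd_prime_iff_eq hl Nat.prime_three).1 this
        subst this
        apply nq
        apply hl'.dvd_of_dvd_pow (n := 2)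
        refine ⟨3 * b ^ 3 - a ^ 2, ?_⟩
        push_cast at h3 ⊢
        linarith
      · exact nq (hl'.dvd_of_dvd_pow d)
  let z : Eis := ⟨p + q, 2 * q⟩
  let w : Eis := ⟨p - q, -(2 * q)⟩
  have hzw : z * w = (⟨s, 0⟩ : Eis) ^ 3 := by
    have : (⟨s, 0⟩ : Eis) ^ 3 = ⟨s ^ 3, 0⟩ := by
      ext <;> simp [pow_succ]
    rw [this, ← h]
    ext <;> simp [z, w] <;> ring
  have hco : IsCoprime z w := by
    obtain ⟨u, v, huv⟩ := hps
    refine ⟨⟨u, 0⟩ + ⟨v, 0⟩ * w, ⟨u, 0⟩, ?_⟩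
    have e : (⟨v, 0⟩ : Eis) * (z * w) = ⟨v * s ^ 3, 0⟩ := by
      rw [hzw]; ext <;> simp [pow_succ]
    have e2 : (⟨u, 0⟩ : Eis) * (z + w) = ⟨u * (2 * p), 0⟩ := by
      ext
      · simp only [z, w, QuadraticAlgebra.re_mul, QuadraticAlgebra.re_add, QuadraticAlgebra.im_add]
        ring
      · simp [z, w]
    have : (⟨u, 0⟩ + ⟨v, 0⟩ * w) * z + ⟨u, 0⟩ * w
        = (⟨u, 0⟩ : Eis) * (z + w) + ⟨v, 0⟩ * (z * w) := by ring
    rw [this, e, e2]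
    ext <;> simp [huv, QuadraticAlgebra.re_one, QuadraticAlgebra.im_one]
  obtain ⟨d, u, hu⟩ := exists_associated_pow_of_mul_eq_pow' hco hzw
  have hodd : (p + q) % 2 = 1 := by
    have h1 : (s ^ 3) % 2 = 1 := Int.odd_iff.1 (hs.pow)
    rw [← h] at h1
    obtain ⟨a, ha | ha⟩ := Int.even_or_odd' p <;> obtain ⟨b, hb | hb⟩ := Int.even_or_odd' q <;>
        subst ha <;> subst hb <;> ring_nf at h1 ⊢ <;> omega
  have hx : ∃ x y : ℤ, p + q = x ^ 3 + y ^ 3 - 3 * x * y ^ 2 ∧ 2 * q = 3 * x * y * (x - y) := by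
    obtain ⟨e, f, hef, hc⟩ := unit_cases u
    obtain ⟨x, y⟩ := d
    rw [hef] at hu
    have hd : (⟨x, y⟩ : Eis) ^ 3 = ⟨x ^ 3 + y ^ 3 - 3 * x * y ^ 2, 3 * x * y * (x - y)⟩ := by
      ext <;> simp [pow_succ] <;> ring
    rw [hd] at hu
    have hB : 2 ∣ 3 * x * y * (x - y) := by
      obtain ⟨a, ha | ha⟩ := Int.even_or_odd' x <;> obtain ⟨b, hb | hb⟩ := Int.even_or_odd' y <;>
        subst ha <;> subst hb
      · exact ⟨3 * a * (2 * b) * (2 * a - 2 * b), by ring⟩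
      · exact ⟨3 * a * (2 * b + 1) * (2 * a - (2 * b + 1)), by ring⟩
      · exact ⟨3 * (2 * a + 1) * b * (2 * a + 1 - 2 * b), by ring⟩
      · exact ⟨3 * (2 * a + 1) * (2 * b + 1) * (a - b), by ring⟩
    have r1 := congrArg QuadraticAlgebra.re hu
    have r2 := congrArg QuadraticAlgebra.im hu
    simp only [z, QuadraticAlgebra.re_mul, QuadraticAlgebra.im_mul] at r1 r2
    generalize hA : x ^ 3 + y ^ 3 - 3 * x * y ^ 2 = A at *
    generalize hB' : 3 * x * y * (x - y) = B at *
    simp only [Prod.mk.injEq] at hc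
    rcases hc with ⟨rfl, rfl⟩ | ⟨rfl, rfl⟩ | ⟨rfl, rfl⟩ | ⟨rfl, rfl⟩ | ⟨rfl, rfl⟩ | ⟨rfl, rfl⟩
    · exact ⟨x, y, by linarith, by linarith⟩
    · exact ⟨-x, -y, by linarith, by linarith⟩
    all_goals omega
  obtain ⟨x, y, h1, h2⟩ := hx
  obtain ⟨a, ha | ha⟩ := Int.even_or_odd' y
  · subst ha
    have hq : q = 3 * x * a * (x - 2 * a) := by linarith
    exact ⟨x - a, a, by rw [hq] at h1; linear_combination h1, by rw [hq]; ring⟩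
  · obtain ⟨b, hb | hb⟩ := Int.even_or_odd' x
    · subst hb
      have hq : q = 3 * b * y * (2 * b - y) := by linarith
      exact ⟨y - b, -b, by rw [hq] at h1; linear_combination h1, by rw [hq]; ring⟩
    · have hxy : x = y + 2 * (b - a) := by omega
      generalize b - a = c at hxy
      subst hxy
      have hq : q = 3 * (y + 2 * c) * y * c := by linarith
      exact ⟨-y - c, c, by rw [hq] at h1; linear_combination h1, by rw [hq]; ring⟩

end CurvesC4C5

namespace CurvesC4C5

lemma cop_congr {a b c d : ℤ} (h : IsCoprime a b) (h1 : a = c) (h2 : b = d) : IsCoprime c d := by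
  subst h1; subst h2; exact h

lemma cube_inj {a b : ℤ} (h : a ^ 3 = b ^ 3) : a = b :=
  (Odd.strictMono_pow (by decide : Odd 3)).injective h

lemma natAbs_lt_of {c α s t : ℤ} (hc : c ≠ 0) (h : c = α * (s * t)) (hs : 3 ≤ s ^ 3) :
    α.natAbs < c.natAbs := by
  have hs2 : 2 ≤ s := by
    by_contra hlt
    have : s ^ 3 ≤ 1 ^ 3 := (Odd.strictMono_pow (by decide : Odd 3)).monotone (by omega)
    omega
  have ht : t ≠ 0 := by rintro rfl; simp at h; exact hc h
  have hα : α ≠ 0 := by rintro rfl; simp at h; exact hc h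
  have h1 : 1 ≤ t.natAbs := Int.natAbs_pos.2 ht
  have h2 : 1 ≤ α.natAbs := Int.natAbs_pos.2 hα
  have h3 : 2 ≤ s.natAbs := by omega
  rw [h, Int.natAbs_mul, Int.natAbs_mul]
  have : 2 ≤ s.natAbs * t.natAbs := by nlinarith
  nlinarith

lemma three_cubes {k u v r : ℤ} (h1 : IsCoprime k u) (h2 : IsCoprime k v) (h3 : IsCoprime u v)
    (h : k * u * v = r ^ 3) : ∃ α β γ : ℤ, k = α ^ 3 ∧ u = β ^ 3 ∧ v = γ ^ 3 ∧ r = α * β * γ := by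
  obtain ⟨⟨e, he⟩, γ, hγ⟩ := Int.eq_pow_of_mul_eq_pow_odd (h2.mul_left h3) (by decide : Odd 3) h
  obtain ⟨⟨α, hα⟩, β, hβ⟩ := Int.eq_pow_of_mul_eq_pow_odd h1 (by decide : Odd 3) he
  refine ⟨α, β, γ, hα, hβ, hγ, cube_inj ?_⟩
  rw [← h, hα, hβ, hγ]; ring

theorem no_four_cubes_aux (N : ℕ) : ∀ a b c : ℤ, c.natAbs = N → a ^ 3 + b ^ 3 = 4 * c ^ 3 →
    c = 0 := by
  induction N using Nat.strong_induction_on with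
  | _ N ih =>
  intro a b c hN h
  by_contra hc
  have hco : IsCoprime a b := by
    apply Int.isCoprime_iff_gcd_eq_one.2
    by_contra hg
    obtain ⟨l, hl, hd⟩ := Nat.exists_prime_and_dvd hg
    have hl' := Nat.prime_iff_prime_int.1 hl
    have d1 : (l : ℤ) ∣ a := (Int.natCast_dvd_natCast.2 hd).trans (Int.gcd_dvd_left _ _)
    have d2 : (l : ℤ) ∣ b := (Int.natCast_dvd_natCast.2 hd).trans (Int.gcd_dvd_right _ _)
    obtain ⟨a', rfl⟩ := d1
    obtain ⟨b', rfl⟩ := d2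
    have h4 : 4 * c ^ 3 = (l : ℤ) ^ 3 * (a' ^ 3 + b' ^ 3) := by rw [← h]; ring
    have hlc : (l : ℤ) ∣ c := by
      by_cases h2 : l = 2
      · subst h2
        apply hl'.dvd_of_dvd_pow (n := 3)
        refine ⟨a' ^ 3 + b' ^ 3, ?_⟩
        push_cast at h4 ⊢
        linarith
      · have : (l : ℤ) ∣ 4 * c ^ 3 := ⟨(l : ℤ) ^ 2 * (a' ^ 3 + b' ^ 3), by rw [h4]; ring⟩
        rcases hl'.dvd_or_dvd this with d | d
        · exfalso
          have d' : l ∣ 2 ^ 2 := by exact_mod_cast d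
          exact h2 ((Nat.prime_dvd_prime_iff_eq hl Nat.prime_two).1 (hl.dvd_of_dvd_pow d'))
        · exact hl'.dvd_of_dvd_pow d
    obtain ⟨c', rfl⟩ := hlc
    have hl0 : (l : ℤ) ≠ 0 := hl'.ne_zero
    have hc' : c' ≠ 0 := by rintro rfl; simp at hc
    have heq : a' ^ 3 + b' ^ 3 = 4 * c' ^ 3 := by
      have : (l : ℤ) ^ 3 * (a' ^ 3 + b' ^ 3) = (l : ℤ) ^ 3 * (4 * c' ^ 3) := by
        rw [← h4]; ring
      exact mul_left_cancel₀ (pow_ne_zero 3 hl0) this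
    refine hc' (ih c'.natAbs ?_ a' b' c' rfl heq)
    rw [← hN, Int.natAbs_mul, Int.natAbs_natCast]
    have := hl.two_le
    have := Int.natAbs_pos.2 hc'
    nlinarith
  -- parity
  have hab : ∃ p q : ℤ, a = p + q ∧ b = p - q := by
    obtain ⟨x, hx | hx⟩ := Int.even_or_odd' a <;> obtain ⟨y, hy | hy⟩ := Int.even_or_odd' b
    · exact ⟨x + y, x - y, by omega, by omega⟩
    · exfalso; subst hx; subst hy; ring_nf at h; omega
    · exfalso; subst hx; subst hy; ring_nf at h; omega
    · exact ⟨x + y + 1, x - y, by omega, by omega⟩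
  obtain ⟨p, q, rfl, rfl⟩ := hab
  have hpq : IsCoprime p q := by
    obtain ⟨u, v, huv⟩ := hco
    exact ⟨u + v, u - v, by linear_combination huv⟩
  have h2 : p * (p ^ 2 + 3 * q ^ 2) = 2 * c ^ 3 := by linarith
  have hpar : (∃ p1, p = 2 * p1) ∧ ∃ q1, q = 2 * q1 + 1 := by
    obtain ⟨x, hx | hx⟩ := Int.even_or_odd' p <;> obtain ⟨y, hy | hy⟩ := Int.even_or_odd' q
    · exfalso
      have := hpq.isUnit_of_dvd' (⟨x, hx⟩ : (2 : ℤ) ∣ p) ⟨y, hy⟩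
      exact absurd this (by decide)
    · exact ⟨⟨x, hx⟩, y, hy⟩
    · exfalso; subst hx; subst hy; ring_nf at h2; omega
    · -- both odd: `p² + 3q²` is divisible by 4
      exfalso; subst hx; subst hy
      have := hco.isUnit_of_dvd' (⟨x + y + 1, by ring⟩ : (2 : ℤ) ∣ _) ⟨x - y, by ring⟩
      exact absurd this (by decide)
  obtain ⟨⟨p1, rfl⟩, q1, hq1⟩ := hpar
  have hq0 : 1 ≤ q ^ 2 := by
    have : q ≠ 0 := by omega
    have := sq_pos_of_ne_zero this
    omega
  have hp1q : IsCoprime p1 q := hpq.of_mul_left_right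
  have h3 : p1 * (4 * p1 ^ 2 + 3 * q ^ 2) = c ^ 3 := by linarith
  by_cases h3p : (3 : ℤ) ∣ p1
  · obtain ⟨p2, rfl⟩ := h3p
    have h3q : IsCoprime 3 q := hp1q.of_mul_left_left
    have hp2q : IsCoprime p2 q := hp1q.of_mul_left_right
    have h4 : (9 * p2) * (12 * p2 ^ 2 + q ^ 2) = c ^ 3 := by rw [← h3]; ring
    have hcop : IsCoprime (9 * p2) (12 * p2 ^ 2 + q ^ 2) := by
      have e1 : IsCoprime 3 (12 * p2 ^ 2 + q ^ 2) := by
        have := (IsCoprime.pow_right (n := 2) h3q).add_mul_left_right (4 * p2 ^ 2)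
        exact cop_congr this (by ring) (by ring)
      have e2 : IsCoprime p2 (12 * p2 ^ 2 + q ^ 2) := by
        have := (IsCoprime.pow_right (n := 2) hp2q).add_mul_left_right (12 * p2)
        exact cop_congr this (by ring) (by ring)
      have := (e1.mul_left e1).mul_left e2
      exact cop_congr this (by ring) (by ring)
    obtain ⟨⟨r, hr⟩, s, hs⟩ := Int.eq_pow_of_mul_eq_pow_odd hcop (by decide : Odd 3) h4
    have h3r : (3 : ℤ) ∣ r := Int.prime_three.dvd_of_dvd_pow (n := 3) ⟨3 * p2, by rw [← hr]; ring⟩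
    obtain ⟨r1, rfl⟩ := h3r
    have hp2 : p2 = 3 * r1 ^ 3 := by
      have : (3 * r1) ^ 3 = 27 * r1 ^ 3 := by ring
      omega
    have hs3 : q ^ 2 + 3 * (2 * p2) ^ 2 = s ^ 3 := by rw [← hs]; ring
    have hso : Odd s := by
      by_contra hne
      obtain ⟨w, rfl⟩ := (Int.not_odd_iff_even.1 hne).two_dvd
      rw [hq1] at hs3; ring_nf at hs3; omega
    have hcs : c = 3 * r1 * s := cube_inj (by rw [← h4, hr, hs]; ring)
    obtain ⟨m, n, hm, hn⟩ := cube_form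
      (IsCoprime.mul_right (Int.isCoprime_two_right.2 ⟨q1, hq1⟩) hp2q.symm) hso hs3
    have hmn : IsCoprime m n := by
      have e : IsCoprime (m * (m ^ 2 - 9 * n ^ 2)) (n * (3 * m ^ 2 - 3 * n ^ 2)) := by
        have := (IsCoprime.mul_right (Int.isCoprime_two_right.2 ⟨q1, hq1⟩) hp2q.symm)
        rw [hm, hn] at this
        convert this using 1 <;> ring
      exact e.of_mul_left_left.of_mul_right_left
    have hpar2 : (∃ k, n = 2 * k) ∧ ∃ m1, m = 2 * m1 + 1 := by
      rw [hq1] at hm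
      obtain ⟨x, hx | hx⟩ := Int.even_or_odd' m <;> obtain ⟨y, hy | hy⟩ := Int.even_or_odd' n
      · exfalso; subst hx; subst hy; ring_nf at hm; omega
      · exfalso; subst hx; subst hy; ring_nf at hm; omega
      · exact ⟨⟨y, hy⟩, x, hx⟩
      · exfalso; subst hx; subst hy; ring_nf at hm; omega
    obtain ⟨⟨k, rfl⟩, m1, hm1⟩ := hpar2
    have hmk : IsCoprime m k := hmn.of_mul_right_right
    have hprod : k * (m - 2 * k) * (m + 2 * k) = r1 ^ 3 := by
      rw [hp2] at hn; linarith
    obtain ⟨α, β, γ, hα, hβ, hγ, hr1⟩ := three_cubes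
      (by have := hmk.symm.add_mul_left_right (-2); exact cop_congr this (by ring) (by ring))
      (by have := hmk.symm.add_mul_left_right 2; exact cop_congr this (by ring) (by ring))
      (by
        have e1 : IsCoprime (m - 2 * k) (2 * k) := by
          have := hmn.add_mul_left_left (-1); exact cop_congr this (by ring) (by ring)
        have e2 : IsCoprime (m - 2 * k) 2 := Int.isCoprime_two_right.2 ⟨m1 - k, by rw [hm1]; ring⟩
        have := (e2.mul_right e1).add_mul_left_right 1
        exact cop_congr this (by ring) (by ring)) hprod
    have hlt : α.natAbs < c.natAbs := natAbs_lt_of (s := s) (t := 3 * β * γ) hc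
      (by rw [hcs, hr1]; ring) (by
        have : 0 < p2 ^ 2 := by
          apply sq_pos_of_ne_zero
          rintro rfl
          apply hc; simpa using h4.symm
        rw [← hs3]; nlinarith)
    have h0 := ih α.natAbs (hN ▸ hlt) (-β) γ α rfl (by
      have : (-β) ^ 3 = - β ^ 3 := by ring
      rw [this, ← hα, ← hβ, ← hγ]; ring)
    apply hc
    rw [hcs, hr1, h0]; ring
  · have h3p' : IsCoprime 3 p1 := (Prime.coprime_iff_not_dvd Int.prime_three).2 h3p
    have hcop : IsCoprime p1 (4 * p1 ^ 2 + 3 * q ^ 2) := by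
      have := (h3p'.symm.mul_right (IsCoprime.pow_right (n := 2) hp1q)).add_mul_left_right (4 * p1)
      exact cop_congr this (by ring) (by ring)
    obtain ⟨⟨r, hr⟩, s, hs⟩ := Int.eq_pow_of_mul_eq_pow_odd hcop (by decide : Odd 3) h3
    have hs3 : (2 * p1) ^ 2 + 3 * q ^ 2 = s ^ 3 := by rw [← hs]; ring
    have hso : Odd s := by
      by_contra hne
      obtain ⟨w, rfl⟩ := (Int.not_odd_iff_even.1 hne).two_dvd
      rw [hq1] at hs3; ring_nf at hs3; omega
    have hcs : c = r * s := cube_inj (by rw [← h3, hs, hr]; ring)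
    obtain ⟨m, n, hm, hn⟩ := cube_form hpq hso hs3
    have hmn : IsCoprime m n := by
      have e : IsCoprime (m * (m ^ 2 - 9 * n ^ 2)) (n * (3 * m ^ 2 - 3 * n ^ 2)) := by
        have := hpq
        rw [hm, hn] at this
        convert this using 1 <;> ring
      exact e.of_mul_left_left.of_mul_right_left
    have hpar2 : (∃ k, m = 2 * k) ∧ ∃ n1, n = 2 * n1 + 1 := by
      rw [hq1] at hn
      obtain ⟨x, hx | hx⟩ := Int.even_or_odd' m <;> obtain ⟨y, hy | hy⟩ := Int.even_or_odd' n
      · exfalso; subst hx; subst hy; ring_nf at hn; omega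
      · exact ⟨⟨x, hx⟩, y, hy⟩
      · exfalso; subst hx; subst hy; ring_nf at hm; omega
      · exfalso; subst hx; subst hy; ring_nf at hn; omega
    obtain ⟨⟨k, rfl⟩, n1, hn1⟩ := hpar2
    have hprod : k * (2 * k - 3 * n) * (2 * k + 3 * n) = r ^ 3 := by
      rw [← hr]; linarith
    have hk3 : IsCoprime k 3 := by
      have : p1 = k * ((2 * k - 3 * n) * (2 * k + 3 * n)) := by linarith
      rw [this] at h3p'
      exact h3p'.symm.of_mul_left_left
    have hkn : IsCoprime k (3 * n) := hk3.mul_right hmn.of_mul_left_right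
    have h23n : IsCoprime 2 (3 * n) := Int.isCoprime_two_left.2 ⟨3 * n1 + 1, by rw [hn1]; ring⟩
    obtain ⟨α, β, γ, hα, hβ, hγ, hr1⟩ := three_cubes
      (by have := hkn.neg_right.add_mul_left_right 2; exact cop_congr this (by ring) (by ring))
      (by have := hkn.add_mul_left_right 2; exact cop_congr this (by ring) (by ring))
      (by
        have e1 : IsCoprime (2 * k - 3 * n) (3 * n) := by
          have := (h23n.mul_left hkn).add_mul_left_left (-1); exact cop_congr this (by ring) (by ring)
        have e2 : IsCoprime (2 * k - 3 * n) 2 :=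
          Int.isCoprime_two_right.2 ⟨k - 3 * n1 - 2, by rw [hn1]; ring⟩
        have := (e2.mul_right e1).add_mul_left_right 1
        exact cop_congr this (by ring) (by ring)) hprod
    have hlt : α.natAbs < c.natAbs := natAbs_lt_of (s := s) (t := β * γ) hc
      (by rw [hcs, hr1]; ring) (by rw [← hs3]; nlinarith [sq_nonneg p1])
    have h0 := ih α.natAbs (hN ▸ hlt) β γ α rfl (by
      rw [← hα, ← hβ, ← hγ]; ring)
    apply hc
    rw [hcs, hr1, h0]; ring

theorem no_four_cubes {a b c : ℤ} (h : a ^ 3 + b ^ 3 = 4 * c ^ 3) : c = 0 :=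
  no_four_cubes_aux _ a b c rfl h

/-- The elliptic curve `y² = u³ - 108` has no affine rational points. -/
theorem no_points_E (u y : ℚ) (h : y ^ 2 = u ^ 3 - 108) : False := by
  have hu : u ≠ 0 := by rintro rfl; nlinarith [sq_nonneg y]
  have hQ : (18 + y) ^ 3 + (18 - y) ^ 3 = 4 * (3 * u) ^ 3 := by
    linear_combination 108 * h
  set d : ℤ := (u.den : ℤ) * y.den with hd
  have hu2 : u * u.den = u.num := Rat.mul_den_eq_num u
  have hy2 : y * y.den = y.num := Rat.mul_den_eq_num y
  have hZ : (18 * (u.den * y.den : ℤ) + y.num * u.den) ^ 3 +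
      (18 * (u.den * y.den : ℤ) - y.num * u.den) ^ 3 = 4 * (3 * u.num * y.den) ^ 3 := by
    have : ((18 * (u.den * y.den : ℚ) + y.num * u.den) ^ 3 +
      (18 * (u.den * y.den : ℚ) - y.num * u.den) ^ 3 = 4 * (3 * u.num * y.den) ^ 3) := by
      rw [← hu2, ← hy2]
      linear_combination ((u.den : ℚ) * y.den) ^ 3 * hQ
    exact_mod_cast this
  have := no_four_cubes hZ
  have h1 : u.num ≠ 0 := Rat.num_ne_zero.2 hu
  have h2 : (y.den : ℤ) ≠ 0 := by exact_mod_cast y.den_nz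
  simp_all

end CurvesC4C5

namespace CurvesC4C5

lemma not_dvd_both {p q l : ℤ} (hpq : IsCoprime p q) (hl : Prime l) (h1 : l ∣ p) (h2 : l ∣ q) :
    False :=
  hl.not_isUnit (hpq.isUnit_of_dvd' h1 h2)

lemma prime17 : Prime (17 : ℤ) := by
  have := Nat.prime_iff_prime_int.1 (by norm_num : Nat.Prime 17); exact_mod_cast this

lemma prime5 : Prime (5 : ℤ) := by
  have := Nat.prime_iff_prime_int.1 (by norm_num : Nat.Prime 5); exact_mod_cast this

lemma case_two {p q b d : ℤ} (hpq : IsCoprime p q) (hd : Odd d)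
    (hF : p ^ 3 - 108 * q ^ 6 = 2 * d * b ^ 2) : False := by
  have hp : (2 : ℤ) ∣ p := Int.prime_two.dvd_of_dvd_pow (n := 3)
    ⟨d * b ^ 2 + 54 * q ^ 6, by linarith⟩
  have hnq := fun h => not_dvd_both hpq Int.prime_two hp h
  obtain ⟨k, rfl⟩ := hp
  have h1 : d * b ^ 2 = 2 * (2 * k ^ 3 - 27 * q ^ 6) := by linarith
  have hb : (2 : ℤ) ∣ b := by
    rcases Int.prime_two.dvd_or_dvd (⟨_, h1⟩ : (2 : ℤ) ∣ d * b ^ 2) with h | h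
    · have := Int.odd_iff.1 hd; omega
    · exact Int.prime_two.dvd_of_dvd_pow h
  obtain ⟨c, rfl⟩ := hb
  have h2 : q ^ 6 = 2 * (k ^ 3 - 13 * q ^ 6 - d * c ^ 2) := by linarith
  exact hnq (Int.prime_two.dvd_of_dvd_pow ⟨_, h2⟩)

lemma case_seventeen {p q a b d : ℤ} (hpq : IsCoprime p q) (hd : ¬ (17 : ℤ) ∣ d)
    (hG : p ^ 2 + 8 * p * q ^ 2 + 20 * q ^ 4 = 17 * d * a ^ 2)
    (hF : p ^ 3 - 108 * q ^ 6 = 17 * d * b ^ 2) : False := by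
  have hq : ¬ (17 : ℤ) ∣ q := by
    rintro ⟨r, rfl⟩
    refine not_dvd_both hpq prime17 (prime17.dvd_of_dvd_pow (n := 3) ?_) ⟨r, rfl⟩
    exact ⟨d * b ^ 2 + 108 * 17 ^ 5 * r ^ 6, by linarith⟩
  have h45 : (17 : ℤ) ∣ (p - 4 * q ^ 2) * (p - 5 * q ^ 2) :=
    ⟨d * a ^ 2 - p * q ^ 2, by linear_combination hG⟩
  rcases prime17.dvd_or_dvd h45 with ⟨k, hk⟩ | ⟨k, hk⟩
  · obtain rfl : p = 4 * q ^ 2 + 17 * k := by linarith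
    have : (17 : ℤ) ∣ 44 * q ^ 6 :=
      ⟨3 * (4 * q ^ 2) ^ 2 * k + 3 * 4 * q ^ 2 * 17 * k ^ 2 + 17 ^ 2 * k ^ 3 - d * b ^ 2,
        by linear_combination (-1) * hF⟩
    rcases prime17.dvd_or_dvd this with h | h
    · omega
    · exact hq (prime17.dvd_of_dvd_pow h)
  obtain rfl : p = 5 * q ^ 2 + 17 * k := by linarith
  have hG1 : 5 * q ^ 4 + 18 * k * q ^ 2 + 17 * k ^ 2 = d * a ^ 2 := by linarith
  have hF1 : q ^ 6 + 75 * k * q ^ 4 + 255 * k ^ 2 * q ^ 2 + 289 * k ^ 3 = d * b ^ 2 := by linarith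
  have hdvd : (17 : ℤ) ∣ d * (b ^ 2 - 7 * (q * a) ^ 2) :=
    ⟨-2 * q ^ 6 - 3 * k * q ^ 4 + 8 * k ^ 2 * q ^ 2 + 17 * k ^ 3,
      by linear_combination 7 * q ^ 2 * hG1 - hF1⟩
  have h7 : (17 : ℤ) ∣ b ^ 2 - 7 * (q * a) ^ 2 := (prime17.dvd_or_dvd hdvd).resolve_left hd
  have hz : ∀ x y : ZMod 17, x ^ 2 - 7 * y ^ 2 = 0 → x = 0 ∧ y = 0 := by decide
  have h8 := (ZMod.intCast_zmod_eq_zero_iff_dvd _ 17).2 h7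
  push_cast at h8
  obtain ⟨hb0, hqa0⟩ := hz _ _ h8
  have hb : (17 : ℤ) ∣ b := (ZMod.intCast_zmod_eq_zero_iff_dvd _ 17).1 hb0
  have hqa : (17 : ℤ) ∣ q * a :=
    (ZMod.intCast_zmod_eq_zero_iff_dvd _ 17).1 (by push_cast; exact hqa0)
  have ha : (17 : ℤ) ∣ a := (prime17.dvd_or_dvd hqa).resolve_left hq
  obtain ⟨a, rfl⟩ := ha
  obtain ⟨b, rfl⟩ := hb
  have hk2 : (17 : ℤ) ∣ q ^ 2 * (5 * q ^ 2 + k) :=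
    ⟨17 * d * a ^ 2 - k * q ^ 2 - k ^ 2, by linear_combination hG1⟩
  obtain ⟨j, hj⟩ := (prime17.dvd_or_dvd hk2).resolve_left
    (fun h => hq (prime17.dvd_of_dvd_pow h))
  obtain rfl : k = -5 * q ^ 2 + 17 * j := by linarith
  generalize hK : -5 * q ^ 2 + 17 * j = K at *
  have E1 : -5 * q ^ 4 + 18 * j * q ^ 2 + K ^ 2 = 17 * d * a ^ 2 := by
    subst hK; linarith
  have E2 : -22 * q ^ 6 + 75 * j * q ^ 4 + 15 * K ^ 2 * q ^ 2 + 17 * K ^ 3 = 17 * d * b ^ 2 := by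
    subst hK; linarith
  have : (17 : ℤ) ∣ 8 * q ^ 6 :=
    ⟨7 * q ^ 2 * d * a ^ 2 - d * b ^ 2 + 13 * q ^ 6 - 83 * j * q ^ 4 + 136 * j ^ 2 * q ^ 2 + K ^ 3,
      by subst hK; linear_combination (7 * q ^ 2) * E1 - E2⟩
  rcases prime17.dvd_or_dvd this with h | h
  · omega
  · exact hq (prime17.dvd_of_dvd_pow h)

open NumberTheorySymbols in
lemma jac_eq_one {W : ℕ} {D x y : ℤ} (hD : IsCoprime D W) (hy : IsCoprime y W)
    (h : (W : ℤ) ∣ x ^ 2 - D * y ^ 2) : J(D | W) = 1 := by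
  have h1 : J(x ^ 2 | W) = J(D * y ^ 2 | W) :=
    jacobiSym.mod_left' (Int.emod_eq_emod_iff_emod_sub_eq_zero.2 (Int.emod_eq_zero_of_dvd h))
  rw [jacobiSym.mul_left, jacobiSym.sq_one' (Int.isCoprime_iff_gcd_eq_one.1 hy), mul_one,
    jacobiSym.pow_left] at h1
  rcases jacobiSym.eq_one_or_neg_one (Int.isCoprime_iff_gcd_eq_one.1 hD) with h2 | h2
  · exact h2
  · nlinarith [sq_nonneg (J(x | W))]

open NumberTheorySymbols in
lemma jac_neg17 {W : ℕ} (hW : W % 4 = 1) {x y : ℤ} (hD : ¬ (17 : ℤ) ∣ W) (hy : IsCoprime y W)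
    (h : (W : ℤ) ∣ x ^ 2 - (-17) * y ^ 2) : J(W | 17) = 1 := by
  have h17 : IsCoprime (17 : ℤ) W := (Prime.coprime_iff_not_dvd prime17).2 hD
  have h1 := jac_eq_one (h17.neg_left) hy h
  have hodd : Odd W := Nat.odd_iff.2 (by omega)
  rw [jacobiSym.neg _ hodd, ZMod.χ₄_nat_one_mod_four hW, one_mul] at h1
  rw [← h1]
  exact_mod_cast (jacobiSym.quadratic_reciprocity_one_mod_four hW (by decide : Odd 17))

open NumberTheorySymbols in
lemma case_five {p q a b : ℤ} (hpq : IsCoprime p q)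
    (hG : p ^ 2 + 8 * p * q ^ 2 + 20 * q ^ 4 = 5 * a ^ 2)
    (hF : p ^ 3 - 108 * q ^ 6 = 5 * b ^ 2) : False := by
  -- `q` is odd
  have hq2 : q % 2 = 1 := by
    by_contra hq
    have hq : (2 : ℤ) ∣ q := by omega
    have hp : ¬ (2 : ℤ) ∣ p := fun h => not_dvd_both hpq Int.prime_two h hq
    obtain ⟨r, rfl⟩ := hq
    obtain ⟨k, hk⟩ : ∃ k, p = 2 * k + 1 := ⟨p / 2, by omega⟩
    have hz : ∀ k r a : ZMod 8,
        (2 * k + 1) ^ 2 + 8 * (2 * k + 1) * (2 * r) ^ 2 + 20 * (2 * r) ^ 4 ≠ 5 * a ^ 2 := by decide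
    apply hz k r a
    rw [hk] at hG
    exact_mod_cast congrArg (Int.cast : ℤ → ZMod 8) hG
  -- `3 ∣ p`
  have hp3 : (3 : ℤ) ∣ p := by
    have hz : ∀ p q a b : ZMod 3, p ^ 2 + 8 * p * q ^ 2 + 20 * q ^ 4 = 5 * a ^ 2 →
      p ^ 3 - 108 * q ^ 6 = 5 * b ^ 2 → p = 0 := by decide
    apply (ZMod.intCast_zmod_eq_zero_iff_dvd _ 3).1
    apply hz p q a b
    · exact_mod_cast congrArg (Int.cast : ℤ → ZMod 3) hG
    · exact_mod_cast congrArg (Int.cast : ℤ → ZMod 3) hF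
  have hq3 : ¬ (3 : ℤ) ∣ q := fun h => not_dvd_both hpq Int.prime_three hp3 h
  -- `5 ∤ q`, `p ≡ 2 q² mod 5`
  have hq5 : ¬ (5 : ℤ) ∣ q := by
    rintro ⟨r, rfl⟩
    refine not_dvd_both hpq prime5 (prime5.dvd_of_dvd_pow (n := 3) ?_) ⟨r, rfl⟩
    exact ⟨b ^ 2 + 108 * 5 ^ 5 * r ^ 6, by linarith⟩
  have hq5' : (q : ZMod 5) ≠ 0 := fun h => hq5 ((ZMod.intCast_zmod_eq_zero_iff_dvd _ 5).1 h)
  have hp5 : (5 : ℤ) ∣ p - 2 * q ^ 2 := by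
    have hz : ∀ p q a b : ZMod 5, q ≠ 0 → p ^ 2 + 8 * p * q ^ 2 + 20 * q ^ 4 = 5 * a ^ 2 →
      p ^ 3 - 108 * q ^ 6 = 5 * b ^ 2 → p - 2 * q ^ 2 = 0 := by
      intro p q a b
      have h5 : (5 : ZMod 5) = 0 := by decide
      rw [h5, zero_mul, zero_mul]
      revert p q; decide
    apply (ZMod.intCast_zmod_eq_zero_iff_dvd _ 5).1
    push_cast
    apply hz p q a b hq5'
    · exact_mod_cast congrArg (Int.cast : ℤ → ZMod 5) hG
    · exact_mod_cast congrArg (Int.cast : ℤ → ZMod 5) hF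
  obtain ⟨P, rfl⟩ := hp3
  have hb : (3 : ℤ) ∣ b := by
    have : (3 : ℤ) ∣ 5 * b ^ 2 := ⟨9 * P ^ 3 - 36 * q ^ 6, by linarith⟩
    rcases Int.prime_three.dvd_or_dvd this with h | h
    · omega
    · exact Int.prime_three.dvd_of_dvd_pow h
  obtain ⟨b1, rfl⟩ := hb
  have hb1 : (3 : ℤ) ∣ b1 := by
    have : (3 : ℤ) ∣ 5 * b1 ^ 2 := ⟨P ^ 3 - 4 * q ^ 6, by linarith⟩
    rcases Int.prime_three.dvd_or_dvd this with h | h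
    · omega
    · exact Int.prime_three.dvd_of_dvd_pow h
  obtain ⟨c, rfl⟩ := hb1
  have hF2 : P ^ 3 - 4 * q ^ 6 = 15 * c ^ 2 := by linarith
  have hw : (3 : ℤ) ∣ 4 * P - q ^ 2 := by
    have hz : ∀ P q c : ZMod 3, q ≠ 0 → P ^ 3 - 4 * q ^ 6 = 15 * c ^ 2 → 4 * P - q ^ 2 = 0 := by
      decide
    apply (ZMod.intCast_zmod_eq_zero_iff_dvd _ 3).1
    push_cast
    apply hz P q c (fun h => hq3 ((ZMod.intCast_zmod_eq_zero_iff_dvd _ 3).1 h))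
    exact_mod_cast congrArg (Int.cast : ℤ → ZMod 3) hF2
  obtain ⟨W, hW⟩ : ∃ W : ℤ, 4 * P = q ^ 2 + 15 * W := by
    generalize q ^ 2 = Q at *
    exact ⟨(4 * P - Q) / 15, by omega⟩
  have E1 : 225 * W ^ 3 + 45 * W ^ 2 * q ^ 2 + 3 * W * q ^ 4 - 17 * q ^ 6 = 64 * c ^ 2 := by
    have h1 : (4 * P) ^ 3 - 256 * q ^ 6 = 960 * c ^ 2 := by linarith
    rw [hW] at h1
    linarith
  have E2 : 85 * q ^ 4 + 342 * W * q ^ 2 + 405 * W ^ 2 = 16 * a ^ 2 := by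
    have h1 : 9 * (4 * P) ^ 2 + 96 * (4 * P) * q ^ 2 + 320 * q ^ 4 = 80 * a ^ 2 := by linarith
    rw [hW] at h1
    linarith
  have hqpos : 0 < q ^ 2 := sq_pos_of_ne_zero (by rintro rfl; omega)
  have hWpos : 0 < W := by
    by_contra hle
    have hle : W ≤ 0 := by omega
    have e1 : 0 ≤ 225 * W ^ 2 + 45 * W * q ^ 2 + 3 * (q ^ 2) ^ 2 := by
      nlinarith [sq_nonneg (15 * W + 3 / 2 * q ^ 2), sq_nonneg (10 * W + q ^ 2), sq_nonneg W]
    have e2 := mul_nonneg (neg_nonneg.2 hle) e1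
    have e3 : 0 < (q ^ 2) ^ 3 := by positivity
    nlinarith [sq_nonneg c]
  have hW4 : W % 4 = 1 := by
    obtain ⟨r, hr⟩ : ∃ r, q = 2 * r + 1 := ⟨q / 2, by omega⟩
    rw [hr] at hW
    ring_nf at hW
    omega
  have hWq : IsCoprime q W := by
    apply Int.isCoprime_iff_gcd_eq_one.2
    by_contra hg
    obtain ⟨l, hl, hd⟩ := Nat.exists_prime_and_dvd hg
    have hl' := Nat.prime_iff_prime_int.1 hl
    have d1 : (l : ℤ) ∣ q := (Int.natCast_dvd_natCast.2 hd).trans (Int.gcd_dvd_left _ _)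
    have d2 : (l : ℤ) ∣ W := (Int.natCast_dvd_natCast.2 hd).trans (Int.gcd_dvd_right _ _)
    have d3 : (l : ℤ) ∣ 4 * P := by
      rw [hW]; exact dvd_add (dvd_pow d1 (by norm_num)) (Dvd.dvd.mul_left d2 _)
    rcases hl'.dvd_or_dvd d3 with d | d
    · have d' : l ∣ 2 ^ 2 := by exact_mod_cast d
      have := (Nat.prime_dvd_prime_iff_eq hl Nat.prime_two).1 (hl.dvd_of_dvd_pow d')
      subst this
      push_cast at d1
      omega
    · exact not_dvd_both hpq hl' (Dvd.dvd.mul_left d _) d1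
  have hq3W : IsCoprime (q ^ 3) W := hWq.pow_left
  have hq2W : IsCoprime (q ^ 2) W := hWq.pow_left
  -- `W` is a nonresidue mod 5
  have hnonsq5 : ¬ IsSquare ((W : ℤ) : ZMod 5) := by
    have hz1 : ∀ W q c : ZMod 5, q ≠ 0 →
      225 * W ^ 3 + 45 * W ^ 2 * q ^ 2 + 3 * W * q ^ 4 - 17 * q ^ 6 = 64 * c ^ 2 → W ≠ 0 := by
      decide
    have hz2 : ∀ W q a : ZMod 5, q ≠ 0 → W ≠ 0 →
      85 * q ^ 4 + 342 * W * q ^ 2 + 405 * W ^ 2 = 16 * a ^ 2 → ¬ IsSquare W := by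
      decide
    apply hz2 W q a hq5' (hz1 W q c hq5' _)
    · exact_mod_cast congrArg (Int.cast : ℤ → ZMod 5) E2
    · exact_mod_cast congrArg (Int.cast : ℤ → ZMod 5) E1
  obtain ⟨V, rfl⟩ : ∃ V : ℕ, W = V := ⟨W.toNat, by omega⟩
  have hV4 : V % 4 = 1 := by omega
  by_cases h17 : (17 : ℤ) ∣ V
  · obtain ⟨k, hk⟩ : ∃ k : ℕ, V = 17 * k := by
      have : 17 ∣ V := by exact_mod_cast h17
      exact this
    subst hk
    push_cast at *
    have hq17 : ¬ (17 : ℤ) ∣ q := fun h =>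
      not_dvd_both hWq prime17 h ⟨k, rfl⟩
    have hc : (17 : ℤ) ∣ c := by
      have : (17 : ℤ) ∣ 64 * c ^ 2 := by
        rw [← E1]
        exact ⟨k * (225 * (17 * k) ^ 2 + 45 * (17 * k) * q ^ 2 + 3 * q ^ 4) - q ^ 6, by ring⟩
      rcases prime17.dvd_or_dvd this with h | h
      · omega
      · exact prime17.dvd_of_dvd_pow h
    obtain ⟨c, rfl⟩ := hc
    have E3 : k * (225 * (17 * k) ^ 2 + 45 * (17 * k) * q ^ 2 + 3 * q ^ 4) - q ^ 6
        = 64 * 17 * c ^ 2 := by linarith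
    have hns : ¬ IsSquare ((k : ℤ) : ZMod 17) := by
      have hz : ∀ k q : ZMod 17, q ≠ 0 → 3 * k * q ^ 4 - q ^ 6 = 0 → ¬ IsSquare k := by
        decide
      apply hz _ q (fun h => hq17 ((ZMod.intCast_zmod_eq_zero_iff_dvd _ 17).1 h))
      have h1 : (17 : ℤ) ∣ 3 * k * q ^ 4 - q ^ 6 :=
        ⟨64 * c ^ 2 - k * (225 * 17 * k ^ 2 + 45 * k * q ^ 2), by linear_combination E3⟩
      have := (ZMod.intCast_zmod_eq_zero_iff_dvd _ 17).2 h1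
      push_cast at this ⊢
      exact this
    have hk17 : ¬ (17 : ℤ) ∣ k := by
      intro h
      apply hns
      rw [(ZMod.intCast_zmod_eq_zero_iff_dvd _ 17).2 h]
      exact ⟨0, by simp⟩
    have hj := jac_neg17 (W := k) (by omega) (x := 8 * 17 * c) (y := q ^ 3) hk17
      (hq3W.of_mul_right_right)
      ⟨17 * (225 * (17 * k) ^ 2 + 45 * (17 * k) * q ^ 2 + 3 * q ^ 4), by linear_combination -17 * E3⟩
    have : Fact (Nat.Prime 17) := ⟨by norm_num⟩
    have hj2 := ZMod.nonsquare_iff_jacobiSym_eq_neg_one.2 hns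
    omega
  · have hj := jac_neg17 (W := V) hV4 (x := 8 * c) (y := q ^ 3) h17 hq3W
      ⟨225 * V ^ 2 + 45 * V * q ^ 2 + 3 * q ^ 4, by linear_combination -E1⟩
    have : Fact (Nat.Prime 5) := ⟨by norm_num⟩
    have hj5 := ZMod.nonsquare_iff_jacobiSym_eq_neg_one.2 hnonsq5
    have hodd : Odd V := Nat.odd_iff.2 (by omega)
    have c5 : IsCoprime (5 : ℤ) V := by
      refine (Prime.coprime_iff_not_dvd prime5).2 (fun h => hnonsq5 ?_)
      rw [(ZMod.intCast_zmod_eq_zero_iff_dvd _ 5).2 h]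
      exact ⟨0, by simp⟩
    have c17 : IsCoprime (17 : ℤ) V := (Prime.coprime_iff_not_dvd prime17).2 h17
    have h85 := jac_eq_one (W := V) (D := 5 * 17) (x := 4 * a) (y := q ^ 2)
      (c5.mul_left c17) hq2W ⟨342 * q ^ 2 + 405 * V, by linear_combination -E2⟩
    rw [jacobiSym.mul_left] at h85
    have r5 : J((5 : ℤ) | V) = J((V : ℤ) | 5) := by
      exact_mod_cast (jacobiSym.quadratic_reciprocity_one_mod_four hV4 (by decide : Odd 5)).symm
    have r17 : J((17 : ℤ) | V) = J((V : ℤ) | 17) := by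
      exact_mod_cast (jacobiSym.quadratic_reciprocity_one_mod_four hV4 (by decide : Odd 17)).symm
    rw [r5, r17, hj, hj5] at h85
    omega

end CurvesC4C5

namespace CurvesC4C5

/-- A positive factor of a square, coprime to its cofactor, is a square. -/
lemma sq_of_pos {a b c : ℤ} (h : IsCoprime a b) (ha : 0 < a) (e : a * b = c ^ 2) :
    ∃ r : ℤ, a = r ^ 2 := by
  obtain ⟨r, hr | hr⟩ := Int.sq_of_gcd_eq_one (Int.isCoprime_iff_gcd_eq_one.mp h) e
  · exact ⟨r, hr⟩
  · exact absurd ha (by have := sq_nonneg r; linarith)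

/-- Two positive integers whose product is a square share their squarefree part. -/
lemma common_squarefree {G F e : ℤ} (hG : 0 < G) (hF : 0 < F) (h : G * F = e ^ 2) :
    ∃ (d : ℕ) (a b : ℤ), Squarefree d ∧ G = d * a ^ 2 ∧ F = d * b ^ 2 := by
  have hg : 0 < Int.gcd G F := Int.gcd_pos_of_ne_zero_left _ hG.ne'
  obtain ⟨g, G1, F1, gpos, hcop, hG1, hF1⟩ := Int.exists_gcd_one' hg
  have gpos' : (0 : ℤ) < g := by exact_mod_cast gpos
  have hdvd : (g : ℤ) ∣ e := by
    rw [← Int.pow_dvd_pow_iff two_ne_zero, ← h]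
    exact ⟨G1 * F1, by rw [hG1, hF1]; ring⟩
  obtain ⟨f, rfl⟩ := hdvd
  have h2 : G1 * F1 = f ^ 2 := by
    have : (g : ℤ) ^ 2 * (G1 * F1) = (g : ℤ) ^ 2 * f ^ 2 := by
      rw [← mul_pow, ← h, hG1, hF1]; ring
    exact mul_left_cancel₀ (pow_pos gpos' 2).ne' this
  have G1pos : 0 < G1 := pos_of_mul_pos_left (hG1 ▸ hG) gpos'.le
  have F1pos : 0 < F1 := pos_of_mul_pos_left (hF1 ▸ hF) gpos'.le
  have hc : IsCoprime G1 F1 := Int.isCoprime_iff_gcd_eq_one.mpr hcop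
  obtain ⟨a, ha⟩ := sq_of_pos hc G1pos h2
  obtain ⟨b, hb⟩ := sq_of_pos hc.symm F1pos ((mul_comm _ _).trans h2)
  obtain ⟨d, s, hs, hd⟩ := Nat.sq_mul_squarefree g
  have hs' : (g : ℤ) = s ^ 2 * d := by exact_mod_cast hs.symm
  exact ⟨d, s * a, s * b, hd, by rw [hG1, ha, hs']; ring, by rw [hF1, hb, hs']; ring⟩

theorem no_points_H (u y : ℚ) (h : y ^ 2 = (u ^ 2 + 8 * u + 20) * (u ^ 3 - 108)) : False := by
  obtain ⟨n, hn⟩ : ∃ n : ℤ, n = u.num := ⟨_, rfl⟩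
  obtain ⟨m, hm⟩ : ∃ m : ℤ, m = (u.den : ℤ) := ⟨_, rfl⟩
  have hmpos : 0 < m := by rw [hm]; exact_mod_cast u.den_pos
  have hnm : IsCoprime n m := by
    rw [hn, hm, Int.isCoprime_iff_gcd_eq_one]; exact u.reduced
  have hu : u = (n : ℚ) / m := by
    rw [hn, hm]; exact_mod_cast (Rat.num_div_den u).symm
  have hmq : (m : ℚ) ≠ 0 := by exact_mod_cast hmpos.ne'
  obtain ⟨G, hGdef⟩ : ∃ G : ℤ, G = n ^ 2 + 8 * n * m + 20 * m ^ 2 := ⟨_, rfl⟩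
  obtain ⟨F, hFdef⟩ : ∃ F : ℤ, F = n ^ 3 - 108 * m ^ 3 := ⟨_, rfl⟩
  have hGq : (G : ℚ) = m ^ 2 * (u ^ 2 + 8 * u + 20) := by
    rw [hGdef, hu]; push_cast; field_simp
  have hFq : (F : ℚ) = m ^ 3 * (u ^ 3 - 108) := by
    rw [hFdef, hu]; push_cast; field_simp
  have hsq : IsSquare (m * (G * F)) := by
    rw [← Rat.isSquare_intCast_iff]
    refine ⟨y * m ^ 3, ?_⟩
    push_cast
    rw [hGq, hFq]
    linear_combination (-(m : ℚ) ^ 6) * h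
  obtain ⟨w, hw⟩ := hsq
  have hmG : IsCoprime m G := by
    have := ((IsCoprime.pow_left (m := 2) hnm).symm).add_mul_left_right (8 * n + 20 * m)
    exact cop_congr this rfl (by rw [hGdef]; ring)
  have hmF : IsCoprime m F := by
    have := ((IsCoprime.pow_left (m := 3) hnm).symm).add_mul_left_right (-108 * m ^ 2)
    exact cop_congr this rfl (by rw [hFdef]; ring)
  have hGpos : 0 < G := by
    rw [hGdef]; nlinarith [sq_nonneg (n + 4 * m), pow_pos hmpos 2]
  obtain ⟨q, hq⟩ := sq_of_pos (hmG.mul_right hmF) hmpos (hw.trans (sq w).symm)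
  have hqq : (m : ℚ) = (q : ℚ) ^ 2 := by exact_mod_cast hq
  have hq0 : (q : ℚ) ≠ 0 := by
    rintro h0; rw [h0] at hqq; exact hmq (by simpa using hqq)
  rcases lt_trichotomy F 0 with hF | hF | hF
  · have h1 : m * (G * F) < 0 :=
      mul_neg_of_pos_of_neg hmpos (mul_neg_of_pos_of_neg hGpos hF)
    nlinarith [mul_self_nonneg w]
  · apply no_points_E u 0
    rw [hF] at hFq
    have : (m : ℚ) ^ 3 * (u ^ 3 - 108) = 0 := by rw [← hFq]; simp
    have := (mul_eq_zero.mp this).resolve_left (pow_ne_zero 3 hmq)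
    rw [this]; norm_num
  obtain ⟨e, he⟩ := sq_of_pos (hmG.mul_right hmF).symm (mul_pos hGpos hF)
    ((mul_comm _ _).trans (hw.trans (sq w).symm))
  obtain ⟨d, a, b, hd, hGa, hFb⟩ := common_squarefree hGpos hF he
  have hdG : (d : ℤ) ∣ G := ⟨_, hGa⟩
  have hdF : (d : ℤ) ∣ F := ⟨_, hFb⟩
  have hdm : IsCoprime (d : ℤ) m := (hmG.of_isCoprime_of_dvd_right hdG).symm
  have hid : (11 * n ^ 2 - 13 * n * m - 116 * m ^ 2) * G - (11 * n + 75 * m) * F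
      = 5780 * m ^ 4 := by rw [hGdef, hFdef]; ring
  have hd1 : (d : ℤ) ∣ 5780 := by
    have : (d : ℤ) ∣ 5780 * m ^ 4 := by
      rw [← hid]; exact dvd_sub (hdG.mul_left _) (hdF.mul_left _)
    exact (IsCoprime.pow_right (n := 4) hdm).dvd_of_dvd_mul_right this
  have hd2 : d ∣ 170 := by
    have h1 : d ∣ 5780 := by exact_mod_cast hd1
    rw [← hd.dvd_pow_iff_dvd two_ne_zero]
    exact h1.trans (by norm_num)
  have hnq : IsCoprime n q := by
    rw [hq] at hnm; exact (IsCoprime.pow_right_iff (by norm_num)).mp hnm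
  have hG' : n ^ 2 + 8 * n * q ^ 2 + 20 * q ^ 4 = d * a ^ 2 := by
    rw [← hGa, hGdef, hq]; ring
  have hF' : n ^ 3 - 108 * q ^ 6 = d * b ^ 2 := by
    rw [← hFb, hFdef, hq]; ring
  have hmem : d ∈ Nat.divisors 170 := Nat.mem_divisors.mpr ⟨hd2, by norm_num⟩
  have hdiv : Nat.divisors 170 = {1, 2, 5, 10, 17, 34, 85, 170} := by decide +kernel
  rw [hdiv] at hmem
  simp only [Finset.mem_insert, Finset.mem_singleton] at hmem
  rcases hmem with rfl | rfl | rfl | rfl | rfl | rfl | rfl | rfl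
  · apply no_points_E u (b / q ^ 3)
    have h1 : (F : ℚ) = b ^ 2 := by rw [hFb]; push_cast; ring
    rw [hFq, hqq] at h1
    field_simp
    linear_combination -h1
  · exact case_two (d := 1) hnq (by decide) (by rw [hF']; push_cast; ring)
  · exact case_five hnq (by rw [hG']; push_cast; ring) (by rw [hF']; push_cast; ring)
  · exact case_two (d := 5) hnq (by decide) (by rw [hF']; push_cast; ring)
  · exact case_seventeen (d := 1) hnq (by decide) (by rw [hG']; push_cast; ring)
      (by rw [hF']; push_cast; ring)
  · exact case_two (d := 17) hnq (by decide) (by rw [hF']; push_cast; ring)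
  · exact case_seventeen (d := 5) hnq (by decide) (by rw [hG']; push_cast; ring)
      (by rw [hF']; push_cast; ring)
  · exact case_two (d := 85) hnq (by decide) (by rw [hF']; push_cast; ring)

end CurvesC4C5

/-- The curves `𝒞₄ : x² + 256t³ + 576t² + 432t + 540 = 0` and
`𝒞₅ : x² + 16(16t² − 8t + 5)(64t³ + 144t² + 108t + 135) = 0` have no rational points. -/
theorem curves_C4_C5_no_points :
    (¬ ∃ t x : ℚ, x ^ 2 + 256 * t ^ 3 + 576 * t ^ 2 + 432 * t + 540 = 0) ∧
    (¬ ∃ t x : ℚ, x ^ 2 + 16 * (16 * t ^ 2 - 8 * t + 5) *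
      (64 * t ^ 3 + 144 * t ^ 2 + 108 * t + 135) = 0) := by
  constructor
  · rintro ⟨t, x, h⟩
    exact CurvesC4C5.no_points_E (-(4 * t + 3)) (x / 2) (by linear_combination h / 4)
  · rintro ⟨t, x, h⟩
    exact CurvesC4C5.no_points_H (-(4 * t + 3)) (x / 4) (by linear_combination h / 16)
end

section
/- The set of pairs (t,x) ∈ ℚ × ℚ satisfying x⁴ − p(t)x² + q(t) = 0 is exactly {(−5/4, 0), (1/4, 0)}. -/
/-- The elliptic curve `y² = x³ − 160x`. -/
def Ecv : WeierstrassCurve.Affine ℚ := ⟨0, 0, 0, -160, 0⟩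

def IsPt (P : Ecv.Point) (x y : ℚ) : Prop := ∃ h, P = .some x y h

lemma Ecv_equation (x y : ℚ) : Ecv.Equation x y ↔ y ^ 2 = x ^ 3 - 160 * x := by
  rw [WeierstrassCurve.Affine.equation_iff']
  simp only [Ecv]
  constructor <;> intro h <;> linarith

lemma Ecv_nonsing (x y : ℚ) (h : y ^ 2 = x ^ 3 - 160 * x) : Ecv.Nonsingular x y := by
  rw [WeierstrassCurve.Affine.nonsingular_iff]
  refine ⟨(Ecv_equation x y).2 h, ?_⟩
  simp only [Ecv]
  by_cases hy : y = 0
  · left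
    subst hy
    intro h2
    have h3 : x * (x ^ 2 - 160) = 0 := by linarith
    rcases mul_eq_zero.1 h3 with h4 | h4
    · subst h4; norm_num at h2
    · nlinarith
  · right
    intro h2
    apply hy
    linarith

lemma exists_pt {x y : ℚ} (h : y ^ 2 = x ^ 3 - 160 * x) : ∃ P, IsPt P x y :=
  ⟨_, Ecv_nonsing x y h, rfl⟩

lemma IsPt.eqn {P : Ecv.Point} {x y : ℚ} (h : IsPt P x y) : y ^ 2 = x ^ 3 - 160 * x := by
  obtain ⟨h, -⟩ := h
  exact (Ecv_equation x y).1 h.1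

lemma IsPt.unique {P : Ecv.Point} {x y x' y' : ℚ} (h : IsPt P x y) (h' : IsPt P x' y') :
    x = x' ∧ y = y' := by
  obtain ⟨h, rfl⟩ := h
  obtain ⟨h', h2⟩ := h'
  simpa using h2

lemma IsPt.inj {P P' : Ecv.Point} {x y : ℚ} (h : IsPt P x y) (h' : IsPt P' x y) : P = P' := by
  obtain ⟨h, rfl⟩ := h
  obtain ⟨h', rfl⟩ := h'
  rfl

lemma IsPt.ne_zero {P : Ecv.Point} {x y : ℚ} (h : IsPt P x y) : P ≠ 0 := by
  obtain ⟨h, rfl⟩ := h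
  exact WeierstrassCurve.Affine.Point.some_ne_zero h

lemma pt_cases (P : Ecv.Point) : P = 0 ∨ ∃ x y, IsPt P x y := by
  rcases P with _ | ⟨x, y, h⟩
  · left; rfl
  · right; exact ⟨x, y, h, rfl⟩

lemma IsPt.neg {P : Ecv.Point} {x y : ℚ} (h : IsPt P x y) : IsPt (-P) x (-y) := by
  have he := h.eqn
  obtain ⟨h, rfl⟩ := h
  refine ⟨Ecv_nonsing _ _ (by rw [← he]; ring), ?_⟩
  rw [WeierstrassCurve.Affine.Point.neg_some]
  simp [WeierstrassCurve.Affine.negY, Ecv]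

lemma IsPt.add_inv {P P' : Ecv.Point} {x y : ℚ} (h : IsPt P x y) (h' : IsPt P' x (-y)) :
    P + P' = 0 := by
  have := h.neg.inj h'
  rw [← this]; simp

lemma IsPt.congr {P : Ecv.Point} {x y x' y' : ℚ} (h : IsPt P x y) (hx : x = x') (hy : y = y') :
    IsPt P x' y' := hx ▸ hy ▸ h

lemma IsPt.add_ne {P P' : Ecv.Point} {x y x' y' : ℚ} (h : IsPt P x y) (h' : IsPt P' x' y')
    (hx : x ≠ x') (l x3 : ℚ) (hl : l * (x - x') = y - y') (hx3 : x3 = l ^ 2 - x - x') :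
    IsPt (P + P') x3 (l * (x - x3) - y) := by
  obtain ⟨h, rfl⟩ := h
  obtain ⟨h', rfl⟩ := h'
  have hs : Ecv.slope x x' y y' = l := by
    rw [WeierstrassCurve.Affine.slope_of_X_ne hx, div_eq_iff (sub_ne_zero.2 hx), hl]
  refine IsPt.congr ⟨_, WeierstrassCurve.Affine.Point.add_of_X_ne hx⟩ ?_ ?_
  · rw [hs, hx3]; simp [WeierstrassCurve.Affine.addX, Ecv]
  · rw [hs, hx3]
    simp only [WeierstrassCurve.Affine.addX, WeierstrassCurve.Affine.addY,
      WeierstrassCurve.Affine.negY, WeierstrassCurve.Affine.negAddY, Ecv]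
    ring

lemma IsPt.dbl {P : Ecv.Point} {x y : ℚ} (h : IsPt P x y) 
    (hy : y ≠ 0) (l x3 : ℚ) (hl : l * (2 * y) = 3 * x ^ 2 - 160) (hx3 : x3 = l ^ 2 - x - x) :
    IsPt (P + P) x3 (l * (x - x3) - y) := by
  obtain ⟨h, rfl⟩ := h
  have hn : y ≠ Ecv.negY x y := by
    simp only [WeierstrassCurve.Affine.negY, Ecv]
    intro h; apply hy; linarith
  have hs : Ecv.slope x x y y = l := by
    rw [WeierstrassCurve.Affine.slope_of_Y_ne rfl hn, div_eq_iff (sub_ne_zero.2 hn)]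
    simp only [WeierstrassCurve.Affine.negY, Ecv]
    linear_combination -hl
  refine IsPt.congr ⟨_, WeierstrassCurve.Affine.Point.add_self_of_Y_ne hn⟩ ?_ ?_
  · rw [hs, hx3]; simp [WeierstrassCurve.Affine.addX, Ecv]
  · rw [hs, hx3]
    simp only [WeierstrassCurve.Affine.addX, WeierstrassCurve.Affine.addY,
      WeierstrassCurve.Affine.negY, WeierstrassCurve.Affine.negAddY, Ecv]
    ring

lemma IsPt.dbl_zero {P : Ecv.Point} {x : ℚ} (h : IsPt P x 0) : P + P = 0 :=
  h.add_inv (by simpa using h)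

noncomputable def Qp : Ecv.Point := .some (-4) 24 (Ecv_nonsing _ _ (by norm_num))
noncomputable def Tp : Ecv.Point := .some 0 0 (Ecv_nonsing _ _ (by norm_num))
lemma Qp_pt : IsPt Qp (-4) 24 := ⟨_, rfl⟩
lemma Tp_pt : IsPt Tp 0 0 := ⟨_, rfl⟩
lemma Tp_dbl : Tp + Tp = 0 := Tp_pt.dbl_zero

/-- adding the 2-torsion point -/
lemma IsPt.add_T {P : Ecv.Point} {x y : ℚ} (h : IsPt P x y) (hx : x ≠ 0) :
    IsPt (P + Tp) (-160 / x) (160 * y / x ^ 2) := by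
  have he := h.eqn
  have := h.add_ne Tp_pt hx (y / x) (-160 / x) (by field_simp; ring) (by field_simp; linarith)
  refine this.congr rfl ?_
  field_simp
  ring

/-- homogeneous representatives -/
def HRep (P : Ecv.Point) (X Y Z : ℚ) : Prop :=
  (P = 0 ∧ X = 0 ∧ Z = 0 ∧ Y ≠ 0) ∨ (Z ≠ 0 ∧ IsPt P (X / Z) (Y / Z))

lemma HRep.affine {P : Ecv.Point} {X Y Z : ℚ} (h : HRep P X Y Z) :
    (P = 0 ∧ X = 0 ∧ Z = 0 ∧ Y ≠ 0) ∨ (∃ x y, IsPt P x y ∧ Z ≠ 0 ∧ X = x * Z ∧ Y = y * Z) := by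
  rcases h with h | ⟨hz, h⟩
  · exact Or.inl h
  · exact Or.inr ⟨_, _, h, hz, by field_simp, by field_simp⟩

lemma HRep.of_affine {P : Ecv.Point} {x y X Y Z : ℚ} (h : IsPt P x y) (hz : Z ≠ 0)
    (hX : X = x * Z) (hY : Y = y * Z) : HRep P X Y Z := by
  refine Or.inr ⟨hz, h.congr ?_ ?_⟩ <;> field_simp <;> simp [*]

/-- The addition law which is exceptional only when the difference has order two. -/
def lX {R : Type*} [CommRing R] (X₁ Y₁ Z₁ X₂ Y₂ Z₂ : R) : R :=
  (X₁ * Y₂ + X₂ * Y₁) * (Y₁ * Y₂ + 160 * (X₁ * Z₂ + X₂ * Z₁))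
  + (Y₁ * Z₂ + Y₂ * Z₁) * (160 * X₁ * X₂ + 25600 * Z₁ * Z₂)
def lY {R : Type*} [CommRing R] (X₁ Y₁ Z₁ X₂ Y₂ Z₂ : R) : R :=
  -(3 * X₁ * X₂ - 160 * Z₁ * Z₂) * (160 * X₁ * X₂ + 25600 * Z₁ * Z₂)
  + (Y₁ * Y₂ - 160 * (X₁ * Z₂ + X₂ * Z₁)) * (Y₁ * Y₂ + 160 * (X₁ * Z₂ + X₂ * Z₁))
def lZ {R : Type*} [CommRing R] (X₁ Y₁ Z₁ X₂ Y₂ Z₂ : R) : R :=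
  (Y₁ * Z₂ + Y₂ * Z₁) * (Y₁ * Y₂ - 160 * (X₁ * Z₂ + X₂ * Z₁))
  + (X₁ * Y₂ + X₂ * Y₁) * (3 * X₁ * X₂ - 160 * Z₁ * Z₂)

/-- The addition law which is exceptional only on the diagonal. -/
def sX {R : Type*} [CommRing R] (X₁ Y₁ Z₁ X₂ Y₂ Z₂ : R) : R :=
  (X₁ * Y₂ - X₂ * Y₁) * (Y₁ * Z₂ + Y₂ * Z₁) + (X₁ * Z₂ - X₂ * Z₁) * Y₁ * Y₂
  + 160 * (X₁ * Z₂ + X₂ * Z₁) * (X₁ * Z₂ - X₂ * Z₁)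
def sY {R : Type*} [CommRing R] (X₁ Y₁ Z₁ X₂ Y₂ Z₂ : R) : R :=
  -3 * X₁ * X₂ * (X₁ * Y₂ - X₂ * Y₁) - Y₁ * Y₂ * (Y₁ * Z₂ - Y₂ * Z₁)
  + 160 * (X₁ * Y₂ - X₂ * Y₁) * Z₁ * Z₂ - 160 * (X₁ * Z₂ + X₂ * Z₁) * (Y₁ * Z₂ - Y₂ * Z₁)
def sZ {R : Type*} [CommRing R] (X₁ Y₁ Z₁ X₂ Y₂ Z₂ : R) : R :=
  3 * X₁ * X₂ * (X₁ * Z₂ - X₂ * Z₁) - (Y₁ * Z₂ + Y₂ * Z₁) * (Y₁ * Z₂ - Y₂ * Z₁)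
  - 160 * (X₁ * Z₂ - X₂ * Z₁) * Z₁ * Z₂

/-- Any triple that satisfies the defining relations of the sum in the generic case. -/
lemma law_generic {P P' : Ecv.Point} {x y x' y' A B C : ℚ} (h : IsPt P x y) (h' : IsPt P' x' y')
    (hx : x ≠ x')
    (h1 : A * (x - x') ^ 2 = ((y - y') ^ 2 - (x + x') * (x - x') ^ 2) * C)
    (h2 : B * (x - x') = (y - y') * (x * C - A) - y * (x - x') * C)
    (hn : ¬ (A = 0 ∧ B = 0 ∧ C = 0)) : HRep (P + P') A B C := by
  have hxx : x - x' ≠ 0 := sub_ne_zero.2 hx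
  have hs := h.add_ne h' hx ((y - y') / (x - x')) _ (by field_simp) rfl
  set x3 := ((y - y') / (x - x')) ^ 2 - x - x' with hx3
  have hA : A = x3 * C := by
    rw [hx3]; field_simp; linear_combination h1
  have hB : B = ((y - y') / (x - x') * (x - x3) - y) * C := by
    field_simp
    rw [h2, hA]; ring
  refine HRep.of_affine hs ?_ hA hB
  rintro rfl
  exact hn ⟨by simpa using hA, by simpa using hB, rfl⟩

lemma law_dbl {P : Ecv.Point} {x y A B C : ℚ} (h : IsPt P x y) (hy : y ≠ 0)
    (h1 : A * (2 * y) ^ 2 = ((3 * x ^ 2 - 160) ^ 2 - 2 * x * (2 * y) ^ 2) * C)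
    (h2 : B * (2 * y) = (3 * x ^ 2 - 160) * (x * C - A) - y * (2 * y) * C)
    (hn : ¬ (A = 0 ∧ B = 0 ∧ C = 0)) : HRep (P + P) A B C := by
  have hs := h.dbl hy ((3 * x ^ 2 - 160) / (2 * y)) _ (by field_simp) rfl
  set x3 := ((3 * x ^ 2 - 160) / (2 * y)) ^ 2 - x - x with hx3
  have hA : A = x3 * C := by
    rw [hx3]; field_simp; linear_combination h1
  have hB : B = ((3 * x ^ 2 - 160) / (2 * y) * (x - x3) - y) * C := by
    rw [hA] at h2
    field_simp; linear_combination h2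
  refine HRep.of_affine hs ?_ hA hB
  rintro rfl
  exact hn ⟨by simpa using hA, by simpa using hB, rfl⟩

lemma HRep.scale {P : Ecv.Point} {X Y Z c X' Y' Z' : ℚ} (h : HRep P X Y Z) (hc : c ≠ 0)
    (hX : X' = c * X) (hY : Y' = c * Y) (hZ : Z' = c * Z) : HRep P X' Y' Z' := by
  rcases h.affine with ⟨h1, h2, h3, h4⟩ | ⟨x, y, h1, h2, h3, h4⟩
  · exact Or.inl ⟨h1, by rw [hX, h2, mul_zero], by rw [hZ, h3, mul_zero], by
      rw [hY]; exact mul_ne_zero hc h4⟩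
  · refine HRep.of_affine h1 (by rw [hZ]; exact mul_ne_zero hc h2) ?_ ?_
    · rw [hX, hZ, h3]; ring
    · rw [hY, hZ, h4]; ring

lemma sq_eq_cases {x y y' : ℚ} (h : y ^ 2 = x ^ 3 - 160 * x) (h' : y' ^ 2 = x ^ 3 - 160 * x) :
    y' = y ∨ y' = -y := by
  have : (y' - y) * (y' + y) = 0 := by linear_combination h' - h
  rcases mul_eq_zero.1 this with h | h
  · left; linarith
  · right; linarith

lemma law_l_affine {P P' : Ecv.Point} {x y x' y' : ℚ} (h : IsPt P x y) (h' : IsPt P' x' y')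
    (hn : ¬ (lX x y 1 x' y' 1 = 0 ∧ lY x y 1 x' y' 1 = 0 ∧ lZ x y 1 x' y' 1 = 0)) :
    HRep (P + P') (lX x y 1 x' y' 1) (lY x y 1 x' y' 1) (lZ x y 1 x' y' 1) := by
  have e := h.eqn
  have e' := h'.eqn
  by_cases hx : x = x'
  · subst hx
    rcases sq_eq_cases e e' with rfl | rfl
    · obtain rfl := h.inj h'
      by_cases hy : y' = 0
      · subst hy
        refine Or.inl ⟨h.dbl_zero, ?_, ?_, ?_⟩
        · simp [lX]
        · simp [lZ]
        · intro h0; apply hn; refine ⟨?_, h0, ?_⟩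
          · simp [lX]
          · simp [lZ]
      · refine law_dbl h hy ?_ ?_ hn <;> simp only [lX, lY, lZ] <;> grind
    · refine Or.inl ⟨h.add_inv h', ?_, ?_, ?_⟩
      · simp only [lX]; ring
      · simp only [lZ]; ring
      · intro h0; apply hn; refine ⟨?_, h0, ?_⟩
        · simp only [lX]; ring
        · simp only [lZ]; ring
  · refine law_generic h h' hx ?_ ?_ hn <;> simp only [lX, lY, lZ] <;> grind

lemma law_s_affine {P P' : Ecv.Point} {x y x' y' : ℚ} (h : IsPt P x y) (h' : IsPt P' x' y')
    (hn : ¬ (sX x y 1 x' y' 1 = 0 ∧ sY x y 1 x' y' 1 = 0 ∧ sZ x y 1 x' y' 1 = 0)) :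
    HRep (P + P') (sX x y 1 x' y' 1) (sY x y 1 x' y' 1) (sZ x y 1 x' y' 1) := by
  have e := h.eqn
  have e' := h'.eqn
  by_cases hx : x = x'
  · subst hx
    rcases sq_eq_cases e e' with rfl | rfl
    · exfalso
      apply hn
      simp only [sX, sY, sZ]; refine ⟨?_, ?_, ?_⟩ <;> ring
    · refine Or.inl ⟨h.add_inv h', ?_, ?_, ?_⟩
      · simp only [sX]; ring
      · simp only [sZ]; ring
      · intro h0; apply hn; refine ⟨?_, h0, ?_⟩
        · simp only [sX]; ring
        · simp only [sZ]; ring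
  · refine law_generic h h' hx ?_ ?_ hn <;> simp only [sX, sY, sZ] <;> grind

lemma law_l {P P' : Ecv.Point} {X₁ Y₁ Z₁ X₂ Y₂ Z₂ : ℚ} (h : HRep P X₁ Y₁ Z₁) (h' : HRep P' X₂ Y₂ Z₂)
    (hn : ¬ (lX X₁ Y₁ Z₁ X₂ Y₂ Z₂ = 0 ∧ lY X₁ Y₁ Z₁ X₂ Y₂ Z₂ = 0 ∧ lZ X₁ Y₁ Z₁ X₂ Y₂ Z₂ = 0)) :
    HRep (P + P') (lX X₁ Y₁ Z₁ X₂ Y₂ Z₂) (lY X₁ Y₁ Z₁ X₂ Y₂ Z₂) (lZ X₁ Y₁ Z₁ X₂ Y₂ Z₂) := by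
  have h0 := h
  have h0' := h'
  rcases h.affine with ⟨rfl, rfl, rfl, hY⟩ | ⟨x, y, hP, hz, rfl, rfl⟩
  · rw [zero_add]
    refine h'.scale (c := Y₁ ^ 2 * Y₂) ?_ ?_ ?_ ?_
    · intro h0; apply hn
      simp only [lX, lY, lZ]; 
      rcases mul_eq_zero.1 h0 with h0 | h0
      · exact absurd h0 (by positivity)
      · subst h0; refine ⟨?_, ?_, ?_⟩ <;> ring
    all_goals simp only [lX, lY, lZ]; ring
  rcases h'.affine with ⟨rfl, rfl, rfl, hY⟩ | ⟨x', y', hP', hz', rfl, rfl⟩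
  · rw [add_zero]
    refine h.scale (c := Y₂ ^ 2 * (y * Z₁)) ?_ ?_ ?_ ?_
    · intro h0; apply hn
      simp only [lX, lY, lZ]; 
      rcases mul_eq_zero.1 h0 with h0 | h0
      · exact absurd h0 (by positivity)
      · rw [h0]; refine ⟨?_, ?_, ?_⟩ <;> ring
    all_goals simp only [lX, lY, lZ]; ring
  have e1 : lX (x * Z₁) (y * Z₁) Z₁ (x' * Z₂) (y' * Z₂) Z₂ = (Z₁ * Z₂) ^ 2 * lX x y 1 x' y' 1 := by
    simp only [lX]; ring
  have e2 : lY (x * Z₁) (y * Z₁) Z₁ (x' * Z₂) (y' * Z₂) Z₂ = (Z₁ * Z₂) ^ 2 * lY x y 1 x' y' 1 := by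
    simp only [lY]; ring
  have e3 : lZ (x * Z₁) (y * Z₁) Z₁ (x' * Z₂) (y' * Z₂) Z₂ = (Z₁ * Z₂) ^ 2 * lZ x y 1 x' y' 1 := by
    simp only [lZ]; ring
  refine (law_l_affine hP hP' ?_).scale (c := (Z₁ * Z₂) ^ 2) (by positivity) e1 e2 e3
  rintro ⟨h1, h2, h3⟩
  exact hn ⟨by rw [e1, h1, mul_zero], by rw [e2, h2, mul_zero], by rw [e3, h3, mul_zero]⟩

lemma law_s {P P' : Ecv.Point} {X₁ Y₁ Z₁ X₂ Y₂ Z₂ : ℚ} (h : HRep P X₁ Y₁ Z₁) (h' : HRep P' X₂ Y₂ Z₂)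
    (hn : ¬ (sX X₁ Y₁ Z₁ X₂ Y₂ Z₂ = 0 ∧ sY X₁ Y₁ Z₁ X₂ Y₂ Z₂ = 0 ∧ sZ X₁ Y₁ Z₁ X₂ Y₂ Z₂ = 0)) :
    HRep (P + P') (sX X₁ Y₁ Z₁ X₂ Y₂ Z₂) (sY X₁ Y₁ Z₁ X₂ Y₂ Z₂) (sZ X₁ Y₁ Z₁ X₂ Y₂ Z₂) := by
  have h0 := h
  have h0' := h'
  rcases h.affine with ⟨rfl, rfl, rfl, hY⟩ | ⟨x, y, hP, hz, rfl, rfl⟩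
  · rw [zero_add]
    refine h'.scale (c := - Y₁ ^ 2 * Z₂) ?_ ?_ ?_ ?_
    · intro h0; apply hn
      rcases mul_eq_zero.1 h0 with h0 | h0
      · exact absurd h0 (by simpa using hY)
      · subst h0
        rcases h'.affine with ⟨rfl, rfl, -, hY⟩ | ⟨x, y, hP, hz, rfl, rfl⟩
        · simp only [sX, sY, sZ]
          refine ⟨?_, ?_, ?_⟩ <;> ring
        · exact absurd rfl hz
    · rcases h'.affine with ⟨rfl, rfl, rfl, hY⟩ | ⟨x, y, hP, hz, rfl, rfl⟩ <;>
      simp only [sX, sY, sZ] <;> ring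
    · rcases h'.affine with ⟨rfl, rfl, rfl, hY⟩ | ⟨x, y, hP, hz, rfl, rfl⟩ <;>
      simp only [sX, sY, sZ] <;> ring
    · rcases h'.affine with ⟨rfl, rfl, rfl, hY⟩ | ⟨x, y, hP, hz, rfl, rfl⟩ <;>
      simp only [sX, sY, sZ] <;> ring
  rcases h'.affine with ⟨rfl, rfl, rfl, hY⟩ | ⟨x', y', hP', hz', rfl, rfl⟩
  · rw [add_zero]
    refine h.scale (c := Y₂ ^ 2 * Z₁) (by positivity) ?_ ?_ ?_
    all_goals simp only [sX, sY, sZ]; ring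
  have e1 : sX (x * Z₁) (y * Z₁) Z₁ (x' * Z₂) (y' * Z₂) Z₂ = (Z₁ * Z₂) ^ 2 * sX x y 1 x' y' 1 := by
    simp only [sX]; ring
  have e2 : sY (x * Z₁) (y * Z₁) Z₁ (x' * Z₂) (y' * Z₂) Z₂ = (Z₁ * Z₂) ^ 2 * sY x y 1 x' y' 1 := by
    simp only [sY]; ring
  have e3 : sZ (x * Z₁) (y * Z₁) Z₁ (x' * Z₂) (y' * Z₂) Z₂ = (Z₁ * Z₂) ^ 2 * sZ x y 1 x' y' 1 := by
    simp only [sZ]; ring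
  refine (law_s_affine hP hP' ?_).scale (c := (Z₁ * Z₂) ^ 2) (by positivity) e1 e2 e3
  rintro ⟨h1, h2, h3⟩
  exact hn ⟨by rw [e1, h1, mul_zero], by rw [e2, h2, mul_zero], by rw [e3, h3, mul_zero]⟩

/-- `P` has an integral homogeneous representative reducing to `(x : y : z)` modulo `p`. -/
def Red (p : ℕ) (P : Ecv.Point) (x y z : ZMod p) : Prop :=
  ∃ X Y Z : ℤ, HRep P X Y Z ∧ (X : ZMod p) = x ∧ (Y : ZMod p) = y ∧ (Z : ZMod p) = z

lemma Red.add_l {p : ℕ} {P P' : Ecv.Point} {x y z x' y' z' : ZMod p} (h : Red p P x y z)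
    (h' : Red p P' x' y' z')
    (hn : ¬ (lX x y z x' y' z' = 0 ∧ lY x y z x' y' z' = 0 ∧ lZ x y z x' y' z' = 0)) :
    Red p (P + P') (lX x y z x' y' z') (lY x y z x' y' z') (lZ x y z x' y' z') := by
  obtain ⟨X, Y, Z, h, rfl, rfl, rfl⟩ := h
  obtain ⟨X', Y', Z', h', rfl, rfl, rfl⟩ := h'
  have a1 : ((lX X Y Z X' Y' Z' : ℤ) : ℚ) = lX (X : ℚ) Y Z X' Y' Z' := by simp [lX]
  have a2 : ((lY X Y Z X' Y' Z' : ℤ) : ℚ) = lY (X : ℚ) Y Z X' Y' Z' := by simp [lY]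
  have a3 : ((lZ X Y Z X' Y' Z' : ℤ) : ℚ) = lZ (X : ℚ) Y Z X' Y' Z' := by simp [lZ]
  have b1 : ((lX X Y Z X' Y' Z' : ℤ) : ZMod p) = lX (X : ZMod p) Y Z X' Y' Z' := by simp [lX]
  have b2 : ((lY X Y Z X' Y' Z' : ℤ) : ZMod p) = lY (X : ZMod p) Y Z X' Y' Z' := by simp [lY]
  have b3 : ((lZ X Y Z X' Y' Z' : ℤ) : ZMod p) = lZ (X : ZMod p) Y Z X' Y' Z' := by simp [lZ]
  refine ⟨_, _, _, ?_, b1, b2, b3⟩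
  rw [a1, a2, a3]
  refine law_l h h' ?_
  rw [← a1, ← a2, ← a3]
  rintro ⟨h1, h2, h3⟩
  apply hn
  rw [← b1, ← b2, ← b3, Int.cast_eq_zero.1 h1, Int.cast_eq_zero.1 h2, Int.cast_eq_zero.1 h3]
  simp

lemma Red.add_s {p : ℕ} {P P' : Ecv.Point} {x y z x' y' z' : ZMod p} (h : Red p P x y z)
    (h' : Red p P' x' y' z')
    (hn : ¬ (sX x y z x' y' z' = 0 ∧ sY x y z x' y' z' = 0 ∧ sZ x y z x' y' z' = 0)) :
    Red p (P + P') (sX x y z x' y' z') (sY x y z x' y' z') (sZ x y z x' y' z') := by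
  obtain ⟨X, Y, Z, h, rfl, rfl, rfl⟩ := h
  obtain ⟨X', Y', Z', h', rfl, rfl, rfl⟩ := h'
  have a1 : ((sX X Y Z X' Y' Z' : ℤ) : ℚ) = sX (X : ℚ) Y Z X' Y' Z' := by simp [sX]
  have a2 : ((sY X Y Z X' Y' Z' : ℤ) : ℚ) = sY (X : ℚ) Y Z X' Y' Z' := by simp [sY]
  have a3 : ((sZ X Y Z X' Y' Z' : ℤ) : ℚ) = sZ (X : ℚ) Y Z X' Y' Z' := by simp [sZ]
  have b1 : ((sX X Y Z X' Y' Z' : ℤ) : ZMod p) = sX (X : ZMod p) Y Z X' Y' Z' := by simp [sX]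
  have b2 : ((sY X Y Z X' Y' Z' : ℤ) : ZMod p) = sY (X : ZMod p) Y Z X' Y' Z' := by simp [sY]
  have b3 : ((sZ X Y Z X' Y' Z' : ℤ) : ZMod p) = sZ (X : ZMod p) Y Z X' Y' Z' := by simp [sZ]
  refine ⟨_, _, _, ?_, b1, b2, b3⟩
  rw [a1, a2, a3]
  refine law_s h h' ?_
  rw [← a1, ← a2, ← a3]
  rintro ⟨h1, h2, h3⟩
  apply hn
  rw [← b1, ← b2, ← b3, Int.cast_eq_zero.1 h1, Int.cast_eq_zero.1 h2, Int.cast_eq_zero.1 h3]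
  simp

lemma Red.neg {p : ℕ} {P : Ecv.Point} {x y z : ZMod p} (h : Red p P x y z) :
    Red p (-P) x (-y) z := by
  obtain ⟨X, Y, Z, h, rfl, rfl, rfl⟩ := h
  refine ⟨X, -Y, Z, ?_, rfl, by simp, rfl⟩
  rcases h with ⟨h1, h2, h3, h4⟩ | ⟨h1, h2⟩
  · exact Or.inl ⟨by simp [h1], h2, h3, by simpa using h4⟩
  · exact Or.inr ⟨h1, h2.neg.congr rfl (by push_cast; ring)⟩

/-- The kernel of reduction modulo `p`. -/
def kerRed (p : ℕ) [Fact p.Prime] : AddSubgroup Ecv.Point where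
  carrier := {P | ∃ y : ZMod p, y ≠ 0 ∧ Red p P 0 y 0}
  zero_mem' := ⟨1, one_ne_zero, 0, 1, 0, Or.inl ⟨rfl, by simp, by simp, by simp⟩, by simp, by simp,
    by simp⟩
  add_mem' := by
    rintro P P' ⟨y, hy, h⟩ ⟨y', hy', h'⟩
    have e1 : lX 0 y 0 0 y' 0 = 0 := by simp [lX]
    have e2 : lY 0 y 0 0 y' 0 = (y * y') ^ 2 := by simp only [lY]; ring
    have e3 : lZ 0 y 0 0 y' 0 = 0 := by simp [lZ]
    have hne : (y * y') ^ 2 ≠ 0 := pow_ne_zero _ (mul_ne_zero hy hy')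
    refine ⟨_, hne, ?_⟩
    have := h.add_l h' (by rw [e2]; tauto)
    rwa [e1, e2, e3] at this
  neg_mem' := by
    rintro P ⟨y, hy, h⟩
    exact ⟨-y, neg_ne_zero.2 hy, h.neg⟩

lemma Red.add_ker {p : ℕ} [Fact p.Prime] {P K : Ecv.Point} {x y z : ZMod p} (h : Red p P x y z)
    (hz : z ≠ 0) (hK : K ∈ kerRed p) :
    ∃ c : ZMod p, c ≠ 0 ∧ Red p (P + K) (c * x) (c * y) (c * z) := by
  obtain ⟨w, hw, h'⟩ := hK
  have e1 : sX x y z 0 w 0 = (w ^ 2 * z) * x := by simp only [sX]; ring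
  have e2 : sY x y z 0 w 0 = (w ^ 2 * z) * y := by simp only [sY]; ring
  have e3 : sZ x y z 0 w 0 = (w ^ 2 * z) * z := by simp only [sZ]; ring
  have hc : w ^ 2 * z ≠ 0 := mul_ne_zero (pow_ne_zero _ hw) hz
  refine ⟨_, hc, ?_⟩
  have := h.add_s h' (by rw [e3]; intro hh; exact mul_ne_zero hc hz hh.2.2)
  rwa [e1, e2, e3] at this

lemma Red.of_pt {p : ℕ} {P : Ecv.Point} {x y : ℚ} (h : IsPt P x y) (X Y Z : ℤ) (hZ : Z ≠ 0)
    (hX : (X : ℚ) = x * Z) (hY : (Y : ℚ) = y * Z) : Red p P X Y Z :=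
  ⟨X, Y, Z, HRep.of_affine h (by exact_mod_cast hZ) hX hY, rfl, rfl, rfl⟩

/-- If `P` reduces to a point `(x : 0 : z)` of order two then `2P` is in the kernel. -/
lemma Red.two_mem_ker {p : ℕ} [Fact p.Prime] {P : Ecv.Point} {x z : ZMod p} (h : Red p P x 0 z)
    (hp : (10 : ZMod p) ≠ 0) (hx : x ^ 2 = 160 * z ^ 2) (hz : z ≠ 0) : P + P ∈ kerRed p := by
  have h2 : (2 : ZMod p) ≠ 0 := by
    intro h; apply hp; have : (10 : ZMod p) = 5 * 2 := by norm_num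
    rw [this, h, mul_zero]
  have e1 : lX x 0 z x 0 z = 0 := by simp only [lX]; ring
  have e2 : lY x 0 z x 0 z = -2 ^ 15 * 10 ^ 3 * z ^ 4 := by
    simp only [lY]; grind
  have e3 : lZ x 0 z x 0 z = 0 := by simp only [lZ]; ring
  have hne : -2 ^ 15 * 10 ^ 3 * z ^ 4 ≠ 0 := by
    simp [h2, hp, hz]
  exact ⟨_, hne, by have := h.add_l h (by rw [e2]; tauto); rwa [e1, e2, e3] at this⟩

lemma sq_rat_int {z : ℚ} {n : ℤ} (h : z ^ 2 = n) : ∃ k : ℤ, z = k ∧ k ^ 2 = n := by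
  have : IsSquare (n : ℚ) := ⟨z, by rw [← h, sq]⟩
  rw [Rat.isSquare_intCast_iff] at this
  obtain ⟨k, rfl⟩ := this
  have h2 : (z - k) * (z + k) = 0 := by push_cast at h; linear_combination h
  rcases mul_eq_zero.1 h2 with h3 | h3
  · exact ⟨k, by linarith, by ring⟩
  · exact ⟨-k, by push_cast; linarith, by ring⟩

/-- Squarefree part of a factor of a square. -/
lemma sqfree_part {n m k : ℤ} (hn : n ≠ 0) (h : n * m = k ^ 2) :
    ∃ d e : ℤ, n = d * e ^ 2 ∧ Squarefree d ∧ ∀ l : ℤ, Prime l → l ∣ d → l ∣ m := by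
  obtain ⟨a, b, hab, ha⟩ := Nat.sq_mul_squarefree n.natAbs
  have hs : n = n.sign * n.natAbs := (Int.sign_mul_natAbs n).symm
  have hsign : n.sign = 1 ∨ n.sign = -1 := by
    rcases lt_or_gt_of_ne hn with h | h
    · right; exact Int.sign_eq_neg_one_of_neg h
    · left; exact Int.sign_eq_one_of_pos h
  have hb : (b : ℤ) ≠ 0 := by
    rintro hb0
    have : b = 0 := by exact_mod_cast hb0
    subst this
    simp at hab
    omega
  have hd : n = (n.sign * a) * (b : ℤ) ^ 2 := by
    have hab' : (b : ℤ) ^ 2 * a = n.natAbs := by exact_mod_cast hab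
    linear_combination hs - n.sign * hab'
  have hsf : Squarefree (n.sign * (a : ℤ)) := by
    rw [← Int.squarefree_natAbs]
    rcases hsign with h | h <;> simpa [h] using ha
  refine ⟨n.sign * a, b, hd, hsf, ?_⟩
  intro l hl hld
  have hbk : (b : ℤ) ∣ k := by
    rw [← Int.pow_dvd_pow_iff (n := 2) two_ne_zero, ← h, hd]
    exact ⟨n.sign * a * m, by ring⟩
  obtain ⟨k', rfl⟩ := hbk
  have h2 : n.sign * a * m = k' ^ 2 := by
    apply mul_left_cancel₀ (pow_ne_zero 2 hb)
    calc (b : ℤ) ^ 2 * (n.sign * a * m) = (n.sign * a * (b : ℤ) ^ 2) * m := by ring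
      _ = _ := by rw [← hd, h]; ring
  have hk : l ∣ k' := hl.dvd_of_dvd_pow (n := 2) (h2 ▸ hld.mul_right m)
  obtain ⟨c, hc⟩ := hld
  obtain ⟨k2, rfl⟩ := hk
  rw [hc] at h2 hsf
  have h3 : c * m = l * k2 ^ 2 := by
    apply mul_left_cancel₀ hl.ne_zero
    linear_combination h2
  rcases hl.dvd_or_dvd (Dvd.intro _ h3.symm) with h4 | h4
  · exact absurd (hsf l (mul_dvd_mul_left l h4)) hl.not_isUnit
  · exact h4

lemma sqfree_dvd {d N : ℤ} (hd : Squarefree d) (hN : N ≠ 0)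
    (h : ∀ l : ℤ, Prime l → l ∣ d → l ∣ N) : d ∣ N := by
  rw [← Int.natAbs_dvd_natAbs]
  rw [← Int.squarefree_natAbs] at hd
  rw [← Nat.prod_primeFactors_of_squarefree hd]
  refine dvd_trans (Finset.prod_dvd_prod_of_subset _ _ _ ?_) (Nat.prod_primeFactors_dvd N.natAbs)
  intro l hl
  rw [Nat.mem_primeFactors] at hl ⊢
  refine ⟨hl.1, ?_, by simpa using hN⟩
  have := h l (Nat.prime_iff_prime_int.1 hl.1) (Int.natCast_dvd.2 hl.2.1)
  exact Int.natCast_dvd.1 this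

lemma pow4_of_coprime {A B s : ℕ} (h : A.Coprime B) (hs : A * B = s ^ 4) :
    ∃ p q : ℕ, A = p ^ 4 ∧ B = q ^ 4 ∧ p * q = s := by
  obtain ⟨p, hp⟩ := exists_eq_pow_of_mul_eq_pow (Nat.isUnit_iff.2 h) hs
  obtain ⟨q, hq⟩ := exists_eq_pow_of_mul_eq_pow (a := B) (b := A)
    (Nat.isUnit_iff.2 h.symm) (by rw [mul_comm]; exact hs)
  refine ⟨p, q, hp, hq, ?_⟩
  have : (p * q) ^ 4 = s ^ 4 := by rw [mul_pow, ← hp, ← hq, hs]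
  exact Nat.pow_left_injective (n := 4) (by norm_num) this

/-- Distribution of `P * R` with `P`, `R` prime powers among two coprime factors. -/
lemma pow4_split {A B s P R : ℕ} (hP : IsPrimePow P) (hR : IsPrimePow R) (hPR : P.Coprime R)
    (h : A.Coprime B) (hs : A * B = P * R * s ^ 4) :
    ∃ p q : ℕ, p * q = s ∧ p.Coprime q ∧ ((A = P * R * p ^ 4 ∧ B = q ^ 4) ∨ (A = p ^ 4 ∧ B = P * R * q ^ 4)
      ∨ (A = P * p ^ 4 ∧ B = R * q ^ 4) ∨ (A = R * p ^ 4 ∧ B = P * q ^ 4)) := by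
  have hP0 : 0 < P := hP.pos
  have hR0 : 0 < R := hR.pos
  have key : ∀ p q k l : ℕ, (k * p ^ 4).Coprime (l * q ^ 4) → p.Coprime q := by
    intro p q k l h
    have := Nat.Coprime.coprime_mul_left h
    have := Nat.Coprime.coprime_mul_left_right this
    exact Nat.Coprime.coprime_dvd_left (dvd_pow_self p four_ne_zero)
      (Nat.Coprime.coprime_dvd_right (dvd_pow_self q four_ne_zero) this)
  have h1 : P ∣ A ∨ P ∣ B := (h.isPrimePow_dvd_mul hP).1 (by rw [hs]; exact ⟨R * s ^ 4, by ring⟩)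
  have h2 : R ∣ A ∨ R ∣ B := (h.isPrimePow_dvd_mul hR).1 (by rw [hs]; exact ⟨P * s ^ 4, by ring⟩)
  have hc : 0 < P * R := by positivity
  rcases h1 with h1 | h1 <;> rcases h2 with h2 | h2
  · obtain ⟨A', rfl⟩ := hPR.mul_dvd_of_dvd_of_dvd h1 h2
    obtain ⟨p, q, rfl, rfl, rfl⟩ := pow4_of_coprime (A := A') (B := B) (s := s)
      (Nat.Coprime.coprime_mul_left h) (Nat.eq_of_mul_eq_mul_left hc (by rw [← hs]; ring))
    exact ⟨p, q, rfl, key p q (P * R) 1 (by simpa using h), Or.inl ⟨rfl, rfl⟩⟩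
  · obtain ⟨A', rfl⟩ := h1
    obtain ⟨B', rfl⟩ := h2
    obtain ⟨p, q, rfl, rfl, rfl⟩ := pow4_of_coprime (A := A') (B := B') (s := s)
      (Nat.Coprime.coprime_mul_left_right (Nat.Coprime.coprime_mul_left h)) (Nat.eq_of_mul_eq_mul_left hc (by rw [← hs]; ring))
    exact ⟨p, q, rfl, key p q _ _ h, Or.inr (Or.inr (Or.inl ⟨rfl, rfl⟩))⟩
  · obtain ⟨A', rfl⟩ := h2
    obtain ⟨B', rfl⟩ := h1
    obtain ⟨p, q, rfl, rfl, rfl⟩ := pow4_of_coprime (A := A') (B := B') (s := s)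
      (Nat.Coprime.coprime_mul_left_right (Nat.Coprime.coprime_mul_left h)) (Nat.eq_of_mul_eq_mul_left hc (by rw [← hs]; ring))
    exact ⟨p, q, rfl, key p q _ _ h, Or.inr (Or.inr (Or.inr ⟨rfl, rfl⟩))⟩
  · obtain ⟨B', rfl⟩ := hPR.mul_dvd_of_dvd_of_dvd h1 h2
    obtain ⟨p, q, rfl, rfl, rfl⟩ := pow4_of_coprime (A := A) (B := B') (s := s)
      (Nat.Coprime.coprime_mul_left_right h) (Nat.eq_of_mul_eq_mul_left hc (by rw [← hs]; ring))
    exact ⟨p, q, rfl, key p q 1 _ (by simpa using h), Or.inr (Or.inl ⟨rfl, rfl⟩)⟩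

lemma z16a : ∀ u v s : ZMod 16, 8 * s ≠ 0 → u ^ 4 ≠ v ^ 2 + 10 * s ^ 4 := by decide +kernel
lemma z16b : ∀ u p q : ZMod 16, 8 * u ≠ 0 → u ^ 2 ≠ 8 * p ^ 4 + 5 * q ^ 4 := by decide +kernel
lemma z16c : ∀ p x y : ZMod 16, 8 * p ≠ 0 → p ^ 2 + 2 * x ^ 4 ≠ 5 * y ^ 4 := by decide +kernel
lemma z16d : ∀ p x y : ZMod 16, 8 * p ≠ 0 → p ^ 2 + 5 * y ^ 4 ≠ 2 * x ^ 4 := by decide +kernel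
lemma z16e : ∀ p x y : ZMod 16, 8 * p ≠ 0 → p ^ 2 + 10 * y ^ 4 = x ^ 4 → 8 * y = 0 := by decide +kernel

lemma odd16 {n : ℕ} (h : ¬ 2 ∣ n) : 8 * (n : ZMod 16) ≠ 0 := by
  intro h0
  have : ((8 * n : ℕ) : ZMod 16) = 0 := by push_cast; exact h0
  rw [ZMod.natCast_eq_zero_iff] at this
  omega

lemma even16 {n : ℕ} (h : 8 * (n : ZMod 16) = 0) : 2 ∣ n := by
  by_contra h2
  exact odd16 h2 h

lemma castN (m : ℕ) {a b : ℕ} (h : a = b) : (a : ZMod m) = b := congrArg _ h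

lemma descI {u v s : ℕ} (hs : 0 < s) (hc : u.Coprime s) (h : u ^ 4 = v ^ 2 + 160 * s ^ 4) :
    ∃ p a b : ℕ, s = p * (a * b) ∧ a.Coprime b ∧ u = a ^ 4 + 10 * b ^ 4 ∧
      ((p ^ 2 + 10 * b ^ 4 = a ^ 4 ∧ 2 ∣ b) ∨ p ^ 2 + a ^ 4 = 10 * b ^ 4) := by
  have hs4 : 0 < s ^ 4 := by positivity
  have hu2 : ¬ 2 ∣ u := by
    rintro ⟨u1, rfl⟩
    have hs2 : ¬ 2 ∣ s := fun hd => by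
      have := Nat.dvd_gcd (Dvd.intro u1 rfl : 2 ∣ 2 * u1) hd
      rw [hc] at this; omega
    have hv : 4 ∣ v := by
      rw [← Nat.pow_dvd_pow_iff (n := 2) two_ne_zero]
      have : 16 * u1 ^ 4 = v ^ 2 + 16 * (10 * s ^ 4) := by rw [← mul_assoc]; norm_num; linarith
      omega
    obtain ⟨v1, rfl⟩ := hv
    have h1 : u1 ^ 4 = v1 ^ 2 + 10 * s ^ 4 := by nlinarith
    refine z16a u1 v1 s (odd16 hs2) ?_
    have := castN 16 h1
    push_cast at this; exact this
  have hu5 : ¬ 5 ∣ u := by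
    intro h5
    have hv : 5 ∣ v := by
      have : 5 ∣ v ^ 2 := by
        have : 5 ∣ u ^ 4 := dvd_pow h5 four_ne_zero
        omega
      exact Nat.Prime.dvd_of_dvd_pow (by norm_num) this
    have hs5 : 5 ∣ s := by
      obtain ⟨u1, rfl⟩ := h5
      obtain ⟨v1, rfl⟩ := hv
      have : 5 ∣ s ^ 4 := by
        have : 25 * (25 * u1 ^ 4) = 25 * v1 ^ 2 + 160 * s ^ 4 := by linarith
        omega
      exact Nat.Prime.dvd_of_dvd_pow (by norm_num) this
    have := Nat.dvd_gcd h5 hs5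
    rw [hc] at this; omega
  have hlt : v < u ^ 2 := by nlinarith
  have hpar : (u ^ 2 - v) % 2 = 0 := by
    have h1 : u % 2 = 1 := by omega
    have h2 : u ^ 4 % 2 = 1 := by simp [Nat.pow_mod, h1]
    have h3 : u ^ 2 % 2 = 1 := by simp [Nat.pow_mod, h1]
    have h4 : v ^ 2 % 2 = 1 := by omega
    have h5 : v % 2 = 1 := by
      by_contra h6
      have : v % 2 = 0 := by omega
      simp [Nat.pow_mod, this] at h4
    omega
  obtain ⟨A, hA⟩ : ∃ A, u ^ 2 = 2 * A + v := ⟨(u ^ 2 - v) / 2, by omega⟩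
  have hAB : A * (A + v) = 8 * 5 * s ^ 4 := by
    have : u ^ 4 = (2 * A + v) ^ 2 := by rw [← hA]; ring
    nlinarith
  have hcop : A.Coprime (A + v) := by
    rw [Nat.coprime_iff_gcd_eq_one]
    by_contra hne
    obtain ⟨l, hl, hd⟩ := Nat.exists_prime_and_dvd hne
    have h1 : l ∣ A := hd.trans (Nat.gcd_dvd_left _ _)
    have h2 : l ∣ A + v := hd.trans (Nat.gcd_dvd_right _ _)
    have hu : l ∣ u := by
      apply hl.dvd_of_dvd_pow (n := 2)
      rw [hA, show 2 * A + v = A + (A + v) by ring]; exact dvd_add h1 h2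
    have h3 : l ∣ 8 * 5 * s ^ 4 := hAB ▸ h1.mul_right _
    rcases (hl.dvd_mul).1 h3 with h4 | h4
    · rcases (hl.dvd_mul).1 h4 with h5 | h5
      · have := (Nat.prime_dvd_prime_iff_eq hl Nat.prime_two).1 (hl.dvd_of_dvd_pow (n := 3) h5)
        subst this; exact hu2 hu
      · have := (Nat.prime_dvd_prime_iff_eq hl Nat.prime_five).1 h5
        subst this; exact hu5 hu
    · have := Nat.dvd_gcd hu (hl.dvd_of_dvd_pow h4)
      rw [hc] at this
      exact hl.one_lt.ne' (Nat.dvd_one.1 this)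
  have step : ∃ p q : ℕ, p * q = s ∧ p.Coprime q ∧ u ^ 2 = p ^ 4 + 40 * q ^ 4 := by
    obtain ⟨p, q, h1, h2, h3⟩ := pow4_split (P := 8) (R := 5)
      (by have := Nat.prime_two.isPrimePow.pow (k := 3) (by norm_num); norm_num at this; exact this)
      Nat.prime_five.isPrimePow (by norm_num) hcop hAB
    have e : u ^ 2 = A + (A + v) := by rw [hA]; ring
    rcases h3 with ⟨h3, h4⟩ | ⟨h3, h4⟩ | ⟨h3, h4⟩ | ⟨h3, h4⟩
    · exact ⟨q, p, by rw [← h1, mul_comm], h2.symm, by rw [e, h4, h3]; ring⟩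
    · exact ⟨p, q, h1, h2, by rw [e, h4, h3]⟩
    · rw [h4, h3] at e
      have := castN 16 e
      push_cast at this
      exact absurd this (z16b u p q (odd16 hu2))
    · rw [h4, h3, add_comm] at e
      have := castN 16 e
      push_cast at this
      exact absurd this (z16b u q p (odd16 hu2))
  obtain ⟨p, q, hpq, hcpq, hu⟩ := step
  have hp0 : 0 < p := Nat.pos_of_ne_zero (by rintro rfl; simp at hpq; omega)
  have hq0 : 0 < q := Nat.pos_of_ne_zero (by rintro rfl; simp at hpq; omega)
  have hp2 : ¬ 2 ∣ p := by
    intro hp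
    apply hu2
    have h1 : 2 ∣ p ^ 4 := dvd_pow hp four_ne_zero
    exact Nat.prime_two.dvd_of_dvd_pow (n := 2) (by omega)
  have hlt2 : p ^ 2 < u := by
    have : 0 < q ^ 4 := by positivity
    nlinarith
  obtain ⟨C, hC⟩ : ∃ C, u = 2 * C + p ^ 2 := by
    have h1 : p ^ 2 % 2 = 1 := by simp [Nat.pow_mod, show p % 2 = 1 by omega]
    exact ⟨(u - p ^ 2) / 2, by omega⟩
  have hCD : C * (C + p ^ 2) = 2 * 5 * q ^ 4 := by
    rw [hC] at hu; nlinarith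
  have hup : u.Coprime p := Nat.Coprime.coprime_dvd_right ⟨q, hpq.symm⟩ hc
  have hcop2 : C.Coprime (C + p ^ 2) := by
    rw [Nat.coprime_iff_gcd_eq_one]
    by_contra hne
    obtain ⟨l, hl, hd⟩ := Nat.exists_prime_and_dvd hne
    have h1 : l ∣ C := hd.trans (Nat.gcd_dvd_left _ _)
    have h2 : l ∣ C + p ^ 2 := hd.trans (Nat.gcd_dvd_right _ _)
    have hu : l ∣ u := by
      rw [hC, show 2 * C + p ^ 2 = C + (C + p ^ 2) by ring]; exact dvd_add h1 h2
    have h3 : l ∣ p := hl.dvd_of_dvd_pow ((Nat.dvd_add_right h1).1 h2)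
    have := Nat.dvd_gcd hu h3
    rw [hup] at this
    exact hl.one_lt.ne' (Nat.dvd_one.1 this)
  obtain ⟨a, b, h1, h2, h3⟩ := pow4_split (P := 2) (R := 5) Nat.prime_two.isPrimePow
      Nat.prime_five.isPrimePow (by norm_num) hcop2 hCD
  have e : u = C + (C + p ^ 2) := by rw [hC]; ring
  rcases h3 with ⟨h3, h4⟩ | ⟨h3, h4⟩ | ⟨h3, h4⟩ | ⟨h3, h4⟩
  · have e2 : p ^ 2 + 10 * a ^ 4 = b ^ 4 := by omega
    refine ⟨p, b, a, by rw [← hpq, ← h1, mul_comm a b], h2.symm, by omega, Or.inl ⟨e2, ?_⟩⟩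
    have := castN 16 e2
    push_cast at this
    exact even16 (z16e p b a (odd16 hp2) this)
  · exact ⟨p, a, b, by rw [← hpq, ← h1], h2, by omega, Or.inr (by omega)⟩
  · have e2 : p ^ 2 + 2 * a ^ 4 = 5 * b ^ 4 := by omega
    have := castN 16 e2
    push_cast at this
    exact absurd this (z16c p a b (odd16 hp2))
  · have e2 : p ^ 2 + 5 * a ^ 4 = 2 * b ^ 4 := by omega
    have := castN 16 e2
    push_cast at this
    exact absurd this (z16d p b a (odd16 hp2))

/-- The subgroup generated by `Q = (-4, 24)` and `T = (0, 0)`. -/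
def HQ : AddSubgroup Ecv.Point := AddSubgroup.closure {Qp, Tp}

lemma Qp_mem : Qp ∈ HQ := AddSubgroup.subset_closure (by simp)
lemma Tp_mem : Tp ∈ HQ := AddSubgroup.subset_closure (by simp)

lemma mem_of_same_x {P P' : Ecv.Point} {x y y' : ℚ} (h : IsPt P x y) (h' : IsPt P' x y')
    (hm : P' ∈ HQ) : P ∈ HQ := by
  rcases sq_eq_cases h'.eqn h.eqn with rfl | rfl
  · rwa [h.inj h']
  · rw [h.inj h'.neg]; exact neg_mem hm

lemma IsPt.dbl_x {P : Ecv.Point} {x y : ℚ} (h : IsPt P x y) (hy : y ≠ 0) :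
    ∃ y', IsPt (P + P) (((x ^ 2 + 160) / (2 * y)) ^ 2) y' := by
  have e := h.eqn
  have := h.dbl hy ((3 * x ^ 2 - 160) / (2 * y)) (((x ^ 2 + 160) / (2 * y)) ^ 2) (by field_simp)
    (by field_simp; rw [e]; ring)
  exact ⟨_, this⟩

/-- type I statement -/
def TypeI (n : ℕ) : Prop := ∀ (P : Ecv.Point) (r y : ℚ), IsPt P (r ^ 2) y → r.den = n → P ∈ HQ
def TypeII (n : ℕ) : Prop :=
  ∀ (P : Ecv.Point) (w y : ℚ), IsPt P (-4 * w ^ 2) y → w.den = n → P ∈ HQ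

lemma T_of_x {P : Ecv.Point} {x y : ℚ} (h : IsPt P x y) (hx : x = 0) : P ∈ HQ := by
  subst hx
  exact mem_of_same_x h Tp_pt Tp_mem

lemma typeI_step (n : ℕ) (ih : ∀ m < n, TypeI m ∧ TypeII m) : TypeI n := by
  intro P r y h hr
  by_cases hr0 : r = 0
  · exact T_of_x h (by rw [hr0]; norm_num)
  have e := h.eqn
  have hs : 0 < n := by rw [← hr]; exact r.den_pos
  have hsq : (n : ℚ) ≠ 0 := by positivity
  have hrn : r = r.num / n := by rw [← hr]; exact (Rat.num_div_den r).symm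
  have hrm : r * n = r.num := by rw [← hr]; exact Rat.mul_den_eq_num r
  have hv : ((y / r) * n ^ 2) ^ 2 = ((r.num ^ 4 - 160 * n ^ 4 : ℤ) : ℚ) := by
    push_cast
    rw [← hrm]
    field_simp
    rw [e]; ring
  obtain ⟨v, -, hv⟩ := sq_rat_int hv
  have hnat : r.num.natAbs ^ 4 = v.natAbs ^ 2 + 160 * n ^ 4 := by
    zify
    rw [sq_abs, pow_abs, abs_of_nonneg (by positivity)]
    linarith
  obtain ⟨p, a, b, h1, h2, h3, h4⟩ := descI hs (by rw [← hr]; exact r.reduced) hnat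
  have hp : 0 < p := Nat.pos_of_ne_zero (by rintro rfl; simp at h1; omega)
  have ha : 0 < a := Nat.pos_of_ne_zero (by rintro rfl; simp at h1; omega)
  have hb : 0 < b := Nat.pos_of_ne_zero (by rintro rfl; simp at h1; omega)
  have hx : r ^ 2 = ((a ^ 4 + 10 * b ^ 4 : ℚ) / (p * (a * b))) ^ 2 := by
    have h5 : (r.num : ℚ) ^ 2 = (a ^ 4 + 10 * b ^ 4) ^ 2 := by
      have : ((r.num.natAbs ^ 2 : ℕ) : ℤ) = r.num ^ 2 := by push_cast; exact sq_abs _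
      have h6 : (r.num : ℤ) ^ 2 = (a ^ 4 + 10 * b ^ 4) ^ 2 := by
        rw [← this, h3]; push_cast; ring
      exact_mod_cast h6
    rw [hrn, div_pow, h5, div_pow, h1]; push_cast; ring
  have hpq : (p : ℚ) ≠ 0 := by positivity
  have haq : (a : ℚ) ≠ 0 := by positivity
  have hbq : (b : ℚ) ≠ 0 := by positivity
  rcases h4 with ⟨h4, c, rfl⟩ | h4
  · have hc : 0 < c := by omega
    have hcq : (c : ℚ) ≠ 0 := by positivity
    have h4q : (p : ℚ) ^ 2 + 160 * c ^ 4 = a ^ 4 := by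
      have : ((p ^ 2 + 10 * (2 * c) ^ 4 : ℕ) : ℚ) = (a ^ 4 : ℕ) := by rw [h4]
      push_cast at this; linarith
    obtain ⟨P', hP'⟩ := exists_pt (x := ((a : ℚ) / c) ^ 2) (y := a * p / c ^ 3) (by
      field_simp; linear_combination h4q)
    have hy' : (a * p / c ^ 3 : ℚ) ≠ 0 := by positivity
    obtain ⟨y2, h2'⟩ := hP'.dbl_x hy'
    have hden : ((a : ℚ) / c).den = c := by
      have := Rat.den_div_eq_of_coprime (a := a) (b := c) (by exact_mod_cast hc)
        (by simpa using Nat.Coprime.coprime_dvd_right (Dvd.intro_left 2 rfl) h2)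
      exact_mod_cast this
    have hm : P' ∈ HQ := (ih c (by rw [h1]; nlinarith [Nat.mul_pos hp ha])).1 P' _ _ hP' hden
    refine mem_of_same_x h (h2'.congr ?_ rfl) (add_mem hm hm)
    rw [hx]
    push_cast
    field_simp
    ring
  · have h4q : (p : ℚ) ^ 2 + a ^ 4 = 10 * b ^ 4 := by exact_mod_cast h4
    obtain ⟨P', hP'⟩ := exists_pt (x := -4 * ((a : ℚ) / b) ^ 2) (y := 8 * a * p / b ^ 3) (by
      field_simp; linear_combination 64 * h4q)
    have hy' : (8 * a * p / b ^ 3 : ℚ) ≠ 0 := by positivity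
    obtain ⟨y2, h2'⟩ := hP'.dbl_x hy'
    have hden : ((a : ℚ) / b).den = b := by
      have := Rat.den_div_eq_of_coprime (a := a) (b := b) (by exact_mod_cast hb) (by simpa using h2)
      exact_mod_cast this
    have hlt : b < n := by
      rw [h1]
      by_contra hcon
      have : p * a = 1 := by
        have : 0 < p * a := Nat.mul_pos hp ha
        nlinarith
      have hp1 : p = 1 := Nat.eq_one_of_mul_eq_one_right this
      have ha1 : a = 1 := Nat.eq_one_of_mul_eq_one_left this
      subst hp1; subst ha1
      omega
    have hm : P' ∈ HQ := (ih b hlt).2 P' _ _ hP' hden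
    refine mem_of_same_x h (h2'.congr ?_ rfl) (add_mem hm hm)
    rw [hx]
    field_simp
    ring

lemma z16f : ∀ u v n : ZMod 16, ¬ (8 * u = 0 ∧ 8 * n = 0) → v ^ 2 + u ^ 4 = 10 * n ^ 4 →
    8 * u ≠ 0 ∧ 8 * v ≠ 0 ∧ 8 * n ≠ 0 := by decide +kernel

lemma den_le {g h K : ℤ} (hK : K ≠ 0) (hd : K ∣ g * h) :
    ((g : ℚ) / K).den * ((h : ℚ) / K).den ≤ K.natAbs := by
  have key : ∀ g : ℤ, ((g : ℚ) / K).den * (K.natAbs.gcd g.natAbs) = K.natAbs := by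
    intro g
    rw [← Rat.divInt_eq_div, Rat.den_divInt, if_neg hK]
    exact Nat.div_mul_cancel (Nat.gcd_dvd_left _ _)
  have h1 := key g
  have h2 := key h
  have h3 : K.natAbs ∣ K.natAbs.gcd g.natAbs * K.natAbs.gcd h.natAbs := by
    rw [Nat.dvd_gcd_mul_gcd_iff_dvd_mul, ← Int.natAbs_mul]
    exact Int.natAbs_dvd_natAbs.2 hd
  have hK' : 0 < K.natAbs := Int.natAbs_pos.2 hK
  have h4 : 0 < K.natAbs.gcd g.natAbs * K.natAbs.gcd h.natAbs :=
    Nat.mul_pos (Nat.gcd_pos_of_pos_left _ hK') (Nat.gcd_pos_of_pos_left _ hK')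
  have h5 := Nat.le_of_dvd h4 h3
  set A := ((g : ℚ) / K).den
  set B := ((h : ℚ) / K).den
  have h6 : (A * B) * (K.natAbs.gcd g.natAbs * K.natAbs.gcd h.natAbs) = K.natAbs * K.natAbs := by
    calc _ = (A * K.natAbs.gcd g.natAbs) * (B * K.natAbs.gcd h.natAbs) := by ring
      _ = _ := by rw [h1, h2]
  by_contra hcon
  push Not at hcon
  have : K.natAbs * K.natAbs < (A * B) * (K.natAbs.gcd g.natAbs * K.natAbs.gcd h.natAbs) :=
    Nat.mul_lt_mul_of_lt_of_le hcon h5 h4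
  omega

lemma odd16z {n : ℤ} (h : 8 * (n : ZMod 16) ≠ 0) : n % 2 = 1 := by
  by_contra h2
  apply h
  have : ((8 * n : ℤ) : ZMod 16) = 0 := by
    rw [ZMod.intCast_zmod_eq_zero_iff_dvd]; omega
  push_cast at this; exact this

lemma even16z {n : ℤ} (h : 8 * (n : ZMod 16) = 0) : 2 ∣ n := by
  have : ((8 * n : ℤ) : ZMod 16) = 0 := by push_cast; exact h
  rw [ZMod.intCast_zmod_eq_zero_iff_dvd] at this
  omega

lemma typeII_step (n : ℕ) (ih : ∀ m < n, TypeI m) : TypeII n := by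
  intro P w y h hw
  by_cases hw0 : w = 0
  · exact T_of_x h (by rw [hw0]; norm_num)
  by_cases hw1 : w ^ 2 = 1
  · exact mem_of_same_x h (Qp_pt.congr (by rw [hw1]; norm_num) rfl) Qp_mem
  have hw1' : 1 - w ^ 2 ≠ 0 := fun h => hw1 (by linarith)
  have e := h.eqn
  obtain ⟨t, rfl⟩ : ∃ t, y = 8 * w * t := ⟨y / (8 * w), by field_simp⟩
  have ht : t ^ 2 = 10 - w ^ 4 := by
    have h64 : 64 * w ^ 2 ≠ 0 := by positivity
    apply mul_left_cancel₀ h64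
    linear_combination e
  have hp1 := h.add_ne Qp_pt (by intro h; apply hw1'; linarith) ((2 * w * t - 6) / (1 - w ^ 2))
    ((2 * (t - 3 * w) / (1 - w ^ 2)) ^ 2) (by field_simp; ring) (by field_simp; grind)
  have hp2 := h.add_ne Qp_pt.neg (by intro h; apply hw1'; linarith) ((2 * w * t + 6) / (1 - w ^ 2))
    ((2 * (t + 3 * w) / (1 - w ^ 2)) ^ 2) (by field_simp; ring) (by field_simp; grind)
  have hs : 0 < n := by rw [← hw]; exact w.den_pos
  have hsq : (n : ℚ) ≠ 0 := by positivity
  have hwm : w * n = w.num := by rw [← hw]; exact Rat.mul_den_eq_num w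
  have hv : (t * n ^ 2) ^ 2 = ((10 * n ^ 4 - w.num ^ 4 : ℤ) : ℚ) := by
    push_cast
    rw [← hwm]
    linear_combination n ^ 4 * ht
  obtain ⟨v, htv, hv⟩ := sq_rat_int hv
  have hcop : ¬ (2 ∣ w.num ∧ 2 ∣ (n : ℤ)) := by
    rintro ⟨h1, h2⟩
    have := Int.dvd_gcd h1 h2
    have hr := w.reduced
    rw [hw] at hr
    rw [Int.gcd_eq_natAbs, Int.natAbs_natCast, hr] at this
    norm_num at this
  set u := w.num with hu
  have hz := congrArg (Int.cast : ℤ → ZMod 16) hv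
  push_cast at hz
  obtain ⟨o1, o2, o3⟩ := z16f u v (n : ℤ) (fun hh => hcop ⟨even16z hh.1, even16z hh.2⟩)
    (by push_cast; linear_combination hz)
  have o1 := odd16z o1
  have o2 := odd16z o2
  have o3 := odd16z o3
  obtain ⟨u', hu'⟩ : ∃ u', u = 2 * u' + 1 := ⟨u / 2, by omega⟩
  obtain ⟨v', hv'⟩ : ∃ v', v = 2 * v' + 1 := ⟨v / 2, by omega⟩
  obtain ⟨n', hn'⟩ : ∃ n' : ℤ, (n : ℤ) = 2 * n' + 1 := ⟨(n : ℤ) / 2, by omega⟩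
  obtain ⟨K, hK⟩ : ∃ K, 4 * K = (n : ℤ) ^ 2 - u ^ 2 :=
    ⟨n' ^ 2 + n' - u' ^ 2 - u', by rw [hn', hu']; ring⟩
  obtain ⟨g, hg⟩ : ∃ g, 2 * g = v - 3 * u * n :=
    ⟨v' - 6 * u' * n' - 3 * u' - 3 * n' - 1, by rw [hn', hu', hv']; ring⟩
  obtain ⟨k, hk⟩ : ∃ k, 2 * k = v + 3 * u * n :=
    ⟨v' + 6 * u' * n' + 3 * u' + 3 * n' + 2, by rw [hn', hu', hv']; ring⟩
  have hgk : g * k = K * (10 * n ^ 2 + u ^ 2) := by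
    have : (2 * g) * (2 * k) = 4 * K * (10 * n ^ 2 + u ^ 2) := by
      rw [hg, hk, hK]; linear_combination hv
    linarith
  have hKq : (4 * K : ℚ) = n ^ 2 * (1 - w ^ 2) := by
    have : (4 * K : ℚ) = n ^ 2 - u ^ 2 := by exact_mod_cast hK
    rw [this, ← hwm]; ring
  have hKq0 : (K : ℚ) ≠ 0 := by
    intro h0
    rw [h0] at hKq
    have : (n : ℚ) ^ 2 * (1 - w ^ 2) ≠ 0 := mul_ne_zero (by positivity) hw1'
    apply this; rw [← hKq]; ring
  have hK0 : K ≠ 0 := by exact_mod_cast hKq0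
  have hle := den_le hK0 (Dvd.intro _ hgk.symm)
  have r1 : 2 * (t - 3 * w) / (1 - w ^ 2) = (g : ℚ) / K := by
    rw [div_eq_div_iff hw1' hKq0]
    have : (2 * g : ℚ) = v - 3 * u * n := by exact_mod_cast hg
    have h2 : (2 * g : ℚ) = n ^ 2 * (t - 3 * w) := by rw [this, ← htv, ← hwm]; ring
    have h3 : (n : ℚ) ^ 2 ≠ 0 := by positivity
    apply mul_left_cancel₀ h3
    linear_combination (-2 * K : ℚ) * h2 + g * hKq
  have r2 : 2 * (t + 3 * w) / (1 - w ^ 2) = (k : ℚ) / K := by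
    rw [div_eq_div_iff hw1' hKq0]
    have : (2 * k : ℚ) = v + 3 * u * n := by exact_mod_cast hk
    have h2 : (2 * k : ℚ) = n ^ 2 * (t + 3 * w) := by rw [this, ← htv, ← hwm]; ring
    have h3 : (n : ℚ) ^ 2 ≠ 0 := by positivity
    apply mul_left_cancel₀ h3
    linear_combination (-2 * K : ℚ) * h2 + k * hKq
  rw [r1] at hp1
  rw [r2] at hp2
  have hKlt : K.natAbs < n * n := by
    zify
    have hn0 : (0 : ℤ) < n := by exact_mod_cast hs
    have hu5 : u ^ 2 < 5 * (n : ℤ) ^ 2 := by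
      have : 0 < (n : ℤ) ^ 4 := by positivity
      nlinarith [sq_nonneg v, sq_nonneg u, sq_nonneg (n : ℤ)]
    rw [abs_lt]
    constructor <;> nlinarith [sq_nonneg u]
  have hor : ((g : ℚ) / K).den < n ∨ ((k : ℚ) / K).den < n := by
    by_contra hcon
    push Not at hcon
    have := Nat.mul_le_mul hcon.1 hcon.2
    omega
  rcases hor with ho | ho
  · have := ih _ ho _ _ _ hp1 rfl
    have h2 := sub_mem this Qp_mem
    rwa [add_sub_cancel_right] at h2
  · have := ih _ ho _ _ _ hp2 rfl
    have h2 := add_mem this Qp_mem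
    rwa [neg_add_cancel_right] at h2

lemma types (n : ℕ) : TypeI n ∧ TypeII n := by
  induction n using Nat.strong_induction_on with
  | _ n ih => exact ⟨typeI_step n ih, typeII_step n (fun m hm => (ih m hm).1)⟩

lemma no_d5 {r z : ℚ} (h : z ^ 2 = 5 * r ^ 4 - 32) : False := by
  have hrm : r * r.den = r.num := Rat.mul_den_eq_num r
  have hd : (r.den : ℚ) ≠ 0 := by have := r.den_pos; positivity
  have hv : (z * r.den ^ 2) ^ 2 = ((5 * r.num ^ 4 - 32 * r.den ^ 4 : ℤ) : ℚ) := by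
    push_cast
    rw [← hrm]
    linear_combination (r.den : ℚ) ^ 4 * h
  obtain ⟨N, -, hN⟩ := sq_rat_int hv
  have hcop : ¬ (2 ∣ r.num ∧ 2 ∣ (r.den : ℤ)) := by
    rintro ⟨h1, h2⟩
    have := Int.dvd_gcd h1 h2
    rw [Int.gcd_eq_natAbs, Int.natAbs_natCast, r.reduced] at this
    norm_num at this
  generalize r.num = M at *
  generalize (r.den : ℤ) = e at *
  have z1 : ∀ M e N : ZMod 16, 8 * M ≠ 0 → N ^ 2 ≠ 5 * M ^ 4 - 32 * e ^ 4 := by decide +kernel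
  have z2 : ∀ M e N : ZMod 16, 8 * e ≠ 0 → N ^ 2 ≠ 5 * M ^ 4 - 2 * e ^ 4 := by decide +kernel
  by_cases hM : 2 ∣ M
  · have he : ¬ 2 ∣ e := fun h => hcop ⟨hM, h⟩
    obtain ⟨M, rfl⟩ := hM
    have hN4 : (4 : ℤ) ∣ N := by
      rw [← Int.pow_dvd_pow_iff (n := 2) two_ne_zero]
      exact ⟨5 * M ^ 4 - 2 * e ^ 4, by rw [hN]; ring⟩
    obtain ⟨N, rfl⟩ := hN4
    have h2 : N ^ 2 = 5 * M ^ 4 - 2 * e ^ 4 := by linarith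
    have hz := congrArg (Int.cast : ℤ → ZMod 16) h2
    push_cast at hz
    exact z2 _ _ _ (fun h => he (even16z h)) hz
  · have hz := congrArg (Int.cast : ℤ → ZMod 16) hN
    push_cast at hz
    exact z1 _ _ _ (fun h => hM (even16z h)) hz

lemma no_d2 {r z : ℚ} (h : z ^ 2 = 8 * r ^ 4 - 320) : False := by
  have hrm : r * r.den = r.num := Rat.mul_den_eq_num r
  have hd : (r.den : ℚ) ≠ 0 := by have := r.den_pos; positivity
  have hv : (z * r.den ^ 2) ^ 2 = ((8 * r.num ^ 4 - 320 * r.den ^ 4 : ℤ) : ℚ) := by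
    push_cast
    rw [← hrm]
    linear_combination (r.den : ℚ) ^ 4 * h
  obtain ⟨N, -, hN⟩ := sq_rat_int hv
  have hcop : ¬ (2 ∣ r.num ∧ 2 ∣ (r.den : ℤ)) := by
    rintro ⟨h1, h2⟩
    have := Int.dvd_gcd h1 h2
    rw [Int.gcd_eq_natAbs, Int.natAbs_natCast, r.reduced] at this
    norm_num at this
  generalize r.num = M at *
  generalize (r.den : ℤ) = e at *
  have z1 : ∀ M e N : ZMod 16, 8 * M ≠ 0 → N ^ 2 ≠ 8 * M ^ 4 - 320 * e ^ 4 := by decide +kernel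
  have z2 : ∀ M e N : ZMod 16, 8 * e ≠ 0 → N ^ 2 ≠ 2 * M ^ 4 - 5 * e ^ 4 := by decide +kernel
  by_cases hM : 2 ∣ M
  · have he : ¬ 2 ∣ e := fun h => hcop ⟨hM, h⟩
    obtain ⟨M, rfl⟩ := hM
    have hN4 : (8 : ℤ) ∣ N := by
      rw [← Int.pow_dvd_pow_iff (n := 2) two_ne_zero]
      exact ⟨2 * M ^ 4 - 5 * e ^ 4, by rw [hN]; ring⟩
    obtain ⟨N, rfl⟩ := hN4
    have h2 : N ^ 2 = 2 * M ^ 4 - 5 * e ^ 4 := by linarith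
    have hz := congrArg (Int.cast : ℤ → ZMod 16) h2
    push_cast at hz
    exact z2 _ _ _ (fun h => he (even16z h)) hz
  · have hz := congrArg (Int.cast : ℤ → ZMod 16) hN
    push_cast at hz
    exact z1 _ _ _ (fun h => hM (even16z h)) hz

lemma dvd_ten {d : ℤ} (h : d ∣ 10) : d = 1 ∨ d = -1 ∨ d = 2 ∨ d = -2 ∨ d = 5 ∨ d = -5 ∨ d = 10 ∨ d = -10 := by
  have h1 : d ≤ 10 := Int.le_of_dvd (by norm_num) h
  have h2 : -d ≤ 10 := Int.le_of_dvd (by norm_num) (by simpa using h)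
  have h3 : -10 ≤ d := by linarith
  interval_cases d <;> revert h <;> decide

lemma isUnit_of_no_prime_dvd {a b : ℤ} (h : ∀ l : ℤ, Prime l → l ∣ a → l ∣ b → False) :
    IsCoprime a b := by
  rw [Int.isCoprime_iff_gcd_eq_one]
  by_contra hne
  obtain ⟨l, hl, hd⟩ := Nat.exists_prime_and_dvd hne
  have h1 : (l : ℤ) ∣ (Int.gcd a b : ℤ) := Int.natCast_dvd_natCast.2 hd
  exact h l (Nat.prime_iff_prime_int.1 hl) (h1.trans (Int.gcd_dvd_left ..)) (h1.trans (Int.gcd_dvd_right ..))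

lemma prime_coprime_false {a b l : ℤ} (hl : Prime l) (hab : IsCoprime a b) (h1 : l ∣ a) (h2 : l ∣ b) :
    False := hl.not_isUnit (hab.isUnit_of_dvd' h1 h2)

lemma x_class {x y : ℚ} (h : y ^ 2 = x ^ 3 - 160 * x) (hx : x ≠ 0) :
    ∃ (d : ℤ) (r : ℚ), d ∣ 10 ∧ x = d * r ^ 2 := by
  have hb0 : (x.den : ℤ) ≠ 0 := by exact_mod_cast x.den_nz
  have hbq : (x.den : ℚ) ≠ 0 := by exact_mod_cast x.den_nz
  have hxm : x * x.den = x.num := Rat.mul_den_eq_num x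
  have hcop : IsCoprime x.num (x.den : ℤ) := by
    rw [Int.isCoprime_iff_gcd_eq_one, Int.gcd_eq_natAbs, Int.natAbs_natCast]; exact x.reduced
  have hv : (y * x.den ^ 2) ^ 2 =
      ((x.den * (x.num * (x.num ^ 2 - 160 * x.den ^ 2)) : ℤ) : ℚ) := by
    push_cast
    rw [← hxm]
    linear_combination (x.den : ℚ) ^ 4 * h
  obtain ⟨k, -, hk⟩ := sq_rat_int hv
  have ha0 : x.num ≠ 0 := Rat.num_ne_zero.2 hx
  have hcb : IsCoprime (x.den : ℤ) (x.num * (x.num ^ 2 - 160 * x.den ^ 2)) := by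
    refine IsCoprime.mul_right hcop.symm ?_
    have : IsCoprime (x.den : ℤ) (x.num ^ 2 + x.den * (-160 * x.den)) :=
      IsCoprime.add_mul_left_right hcop.symm.pow_right _
    convert this using 1; ring
  have hbpos : (0 : ℤ) < x.den := by exact_mod_cast x.den_pos
  obtain ⟨s, hs⟩ := Int.sq_of_isCoprime hcb hk.symm
  have hs' : (x.den : ℤ) = s ^ 2 := by
    rcases hs with h | h
    · exact h
    · nlinarith [sq_nonneg s]
  obtain ⟨k2, hk2⟩ : ∃ k2, x.num * (x.num ^ 2 - 160 * x.den ^ 2) = k2 ^ 2 := by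
    have hs0 : s ∣ k := by
      rw [← Int.pow_dvd_pow_iff (n := 2) two_ne_zero, ← hs', hk]; exact Dvd.intro _ rfl
    obtain ⟨k2, rfl⟩ := hs0
    refine ⟨k2, ?_⟩
    apply mul_left_cancel₀ hb0
    rw [← hk]
    linear_combination -k2 ^ 2 * hs'
  obtain ⟨d, e, hde, hsf, hpr⟩ := sqfree_part ha0 hk2
  refine ⟨d, e / s, ?_, ?_⟩
  · refine sqfree_dvd hsf (by norm_num) ?_
    intro l hl hld
    have h1 := hpr l hl hld
    have hla : l ∣ x.num := hde ▸ hld.mul_right _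
    have h2 : l ∣ 160 * (x.den : ℤ) ^ 2 := by
      have := dvd_sub ((dvd_pow hla two_ne_zero)) h1
      simpa using this
    rcases hl.dvd_or_dvd h2 with h3 | h3
    · have : l ∣ (10 : ℤ) ^ 5 := h3.trans (by norm_num)
      exact hl.dvd_of_dvd_pow this
    · exact (prime_coprime_false hl hcop hla (hl.dvd_of_dvd_pow h3)).elim
  · have hsq : (x.den : ℚ) = (s : ℚ) ^ 2 := by exact_mod_cast hs'
    have hdq : (x.num : ℚ) = d * (e : ℚ) ^ 2 := by exact_mod_cast hde
    rw [div_pow, ← hsq, ← mul_div_assoc, ← hdq]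
    exact (Rat.num_div_den x).symm

theorem mordell_weil (P : Ecv.Point) : P ∈ HQ := by
  rcases pt_cases P with rfl | ⟨x, y, h⟩
  · exact zero_mem _
  by_cases hx : x = 0
  · exact T_of_x h hx
  have e := h.eqn
  have hT := h.add_T hx
  have back : P + Tp ∈ HQ → P ∈ HQ := by
    intro h
    have := sub_mem h Tp_mem
    rwa [add_sub_cancel_right] at this
  obtain ⟨d, r, hd, hxr⟩ := x_class e hx
  have hr : r ≠ 0 := by rintro rfl; apply hx; rw [hxr]; ring
  subst hxr
  rcases dvd_ten hd with rfl | rfl | rfl | rfl | rfl | rfl | rfl | rfl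
  · exact (types _).1 P r y (h.congr (by push_cast; ring) rfl) rfl
  · exact (types _).2 P (r / 2) y (h.congr (by push_cast; ring) rfl) rfl
  · exfalso
    refine no_d2 (r := r) (z := y / r) ?_
    push_cast at e
    field_simp
    linear_combination e
  · exfalso
    refine no_d5 (r := 4 / r) (z := 2 * y / r ^ 3) ?_
    push_cast at e
    field_simp
    linear_combination 4 * e
  · exfalso
    refine no_d5 (r := r) (z := y / (5 * r)) ?_
    push_cast at e
    field_simp
    linear_combination e
  · exfalso
    refine no_d2 (r := 4 / r) (z := (8 / 5) * y / r ^ 3) ?_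
    push_cast at e
    field_simp
    linear_combination 64 * e
  · exact back ((types _).2 _ (2 / r) _ (hT.congr (by push_cast; field_simp; ring) rfl) rfl)
  · exact back ((types _).1 _ (4 / r) _ (hT.congr (by push_cast; field_simp; ring) rfl) rfl)

theorem mw_form (P : Ecv.Point) : ∃ n : ℤ, P = n • Qp ∨ P = n • Qp + Tp := by
  have h := mordell_weil P
  rw [HQ, AddSubgroup.mem_closure_pair] at h
  obtain ⟨n, k, rfl⟩ := h
  refine ⟨n, ?_⟩
  have h2 : (2 : ℤ) • Tp = 0 := by rw [two_zsmul]; exact Tp_dbl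
  rcases Int.even_or_odd' k with ⟨j, rfl | rfl⟩
  · left; rw [mul_comm, mul_zsmul, h2, zsmul_zero]; simp
  · right; rw [add_zsmul, mul_comm, mul_zsmul, h2, zsmul_zero]; simp

/-- Integral data attached to a point `P` with `y / (2x) = L / N`. -/
structure LData (P : Ecv.Point) (L N M : ℤ) : Prop where
  N0 : N ≠ 0
  hM : M ^ 2 = L ^ 4 + 40 * N ^ 4
  cop : IsCoprime L N
  odd : ¬ (2 : ℤ) ∣ L
  five : ¬ (5 : ℤ) ∣ L
  pt : IsPt P (2 * (L ^ 2 - M) / N ^ 2) (4 * L * (L ^ 2 - M) / N ^ 3)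

lemma prime_dvd_mul_pow {l a b : ℤ} (n : ℕ) (hl : Prime l) (h : l ∣ a * b ^ n) : l ∣ a ∨ l ∣ b :=
  (hl.dvd_or_dvd h).imp id hl.dvd_of_dvd_pow

lemma prime_dvd_two_five {l : ℤ} {n : ℕ} (hl : Prime l) (h : l ∣ 10 ^ n) : (2 : ℤ) ∣ l ∨ (5 : ℤ) ∣ l := by
  have h1 : l ∣ 2 * 5 := hl.dvd_of_dvd_pow h
  rcases hl.dvd_or_dvd h1 with h | h
  · left; exact (Int.prime_two.dvd_prime_iff_associated hl).2
      ((hl.dvd_prime_iff_associated Int.prime_two).1 h).symm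
  · right
    have h5 : Prime (5 : ℤ) := by norm_num
    exact (h5.dvd_prime_iff_associated hl).2 ((hl.dvd_prime_iff_associated h5).1 h).symm

lemma LData.double {P : Ecv.Point} {L N M : ℤ} (h : LData P L N M) :
    LData (P + P) (L ^ 4 - 40 * N ^ 4) (-2 * L * N * M) (-(L ^ 8 + 240 * L ^ 4 * N ^ 4 + 1600 * N ^ 8)) := by
  obtain ⟨N0, hM, cop, odd, five, pt⟩ := h
  have L0 : L ≠ 0 := by rintro rfl; exact odd (dvd_zero _)
  have hL4 : 0 < L ^ 4 := by positivity
  have hN4 : 0 < N ^ 4 := by positivity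
  have M0 : M ≠ 0 := by rintro rfl; nlinarith
  have LM : L ^ 2 - M ≠ 0 := by
    intro h0
    have : M = L ^ 2 := by linarith
    rw [this] at hM; nlinarith
  have N0q : (N : ℚ) ≠ 0 := by exact_mod_cast N0
  have L0q : (L : ℚ) ≠ 0 := by exact_mod_cast L0
  have M0q : (M : ℚ) ≠ 0 := by exact_mod_cast M0
  have LMq : (L : ℚ) ^ 2 - M ≠ 0 := by exact_mod_cast LM
  have hMq : (M : ℚ) ^ 2 = L ^ 4 + 40 * N ^ 4 := by exact_mod_cast hM
  have odd' : ¬ (2 : ℤ) ∣ L ^ 4 - 40 * N ^ 4 := by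
    intro h
    have : (2 : ℤ) ∣ L ^ 4 := by
      have := dvd_add h (Dvd.intro (20 * N ^ 4) (by ring) : (2 : ℤ) ∣ 40 * N ^ 4)
      simpa using this
    exact odd (Int.prime_two.dvd_of_dvd_pow this)
  have five' : ¬ (5 : ℤ) ∣ L ^ 4 - 40 * N ^ 4 := by
    intro h
    have h5 : Prime (5 : ℤ) := by norm_num
    have : (5 : ℤ) ∣ L ^ 4 := by
      have := dvd_add h (Dvd.intro (8 * N ^ 4) (by ring) : (5 : ℤ) ∣ 40 * N ^ 4)
      simpa using this
    exact five (h5.dvd_of_dvd_pow this)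
  refine ⟨?_, ?_, ?_, odd', five', ?_⟩
  · simp [L0, N0, M0]
  · linear_combination (-40 * 16 * L ^ 4 * N ^ 4 * (M ^ 2 + (L ^ 4 + 40 * N ^ 4))) * hM
  · apply isUnit_of_no_prime_dvd
    intro l hl h1 h2
    have ten : ∀ n : ℕ, l ∣ 10 ^ n → False := fun n hn => by
      rcases prime_dvd_two_five hl hn with h | h
      · exact odd' (h.trans h1)
      · exact five' (h.trans h1)
    have hN : l ∣ N → False := fun hN => by
      have h3 : l ∣ L ^ 4 := by
        have := dvd_add h1 ((dvd_pow hN four_ne_zero).mul_left 40)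
        simpa using this
      exact prime_coprime_false hl cop (hl.dvd_of_dvd_pow h3) hN
    rcases hl.dvd_or_dvd h2 with h2 | h2
    · rcases hl.dvd_or_dvd h2 with h2 | h2
      · rcases hl.dvd_or_dvd h2 with h2 | h2
        · exact ten 1 (h2.trans (by norm_num))
        · have h3 : l ∣ 40 * N ^ 4 := by
            have := dvd_sub (dvd_pow h2 four_ne_zero) h1
            simpa using this
          rcases prime_dvd_mul_pow 4 hl h3 with h3 | h3
          · exact ten 3 (h3.trans (by norm_num))
          · exact hN h3
      · exact hN h2
    · have h3 : l ∣ 80 * N ^ 4 := by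
        have := dvd_sub (dvd_pow h2 two_ne_zero) h1
        rw [hM] at this
        have e : L ^ 4 + 40 * N ^ 4 - (L ^ 4 - 40 * N ^ 4) = 80 * N ^ 4 := by ring
        rwa [e] at this
      rcases prime_dvd_mul_pow 4 hl h3 with h3 | h3
      · exact ten 4 (h3.trans (by norm_num))
      · exact hN h3
  · have hy : (4 * L * (L ^ 2 - M) / N ^ 3 : ℚ) ≠ 0 := by
      apply div_ne_zero
      · apply mul_ne_zero _ LMq; simpa using L0q
      · positivity
    have := pt.dbl hy ((2 * L ^ 2 - M) / (L * N) : ℚ) (M ^ 2 / (L * N) ^ 2 : ℚ)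
      (by field_simp; grind) (by field_simp; ring)
    refine this.congr ?_ ?_
    · push_cast; field_simp; grind
    · push_cast; field_simp; grind

lemma LData_one : LData Qp (-3) 1 11 := by
  refine ⟨by norm_num, by norm_num, by norm_num, by norm_num, by norm_num, Qp_pt.congr ?_ ?_⟩ <;>
  norm_num

lemma two_Qp : IsPt (Qp + Qp) (121 / 9) (451 / 27) :=
  (Qp_pt.dbl (by norm_num) (-112 / 48) (121 / 9) (by norm_num) (by norm_num)).congr rfl (by norm_num)

lemma three_Qp : IsPt (Qp + Qp + Qp) (-228484 / 24649) (-101406744 / 3869893) :=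
  (two_Qp.add_ne Qp_pt (by norm_num) ((451 / 27 - 24) / (121 / 9 + 4)) (-228484 / 24649) (by norm_num) (by norm_num)).congr rfl
    (by norm_num)

lemma LData_three : LData (Qp + Qp + Qp) 53037 37523 9338540651 := by
  refine ⟨by norm_num, by norm_num, ?_, by norm_num, by norm_num, three_Qp.congr ?_ ?_⟩
  · rw [Int.isCoprime_iff_gcd_eq_one]; decide +kernel
  all_goals norm_num

instance fact149 : Fact (Nat.Prime 149) := ⟨by norm_num⟩

lemma cohn_prime {L N : ℤ} (odd : ¬ (2 : ℤ) ∣ L)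
    (hns : ¬ IsSquare ((L ^ 4 - 40 * N ^ 4 : ℤ) : ZMod 149)) :
    ∃ p : ℕ, p.Prime ∧ (p : ℤ) ∣ L ^ 4 - 40 * N ^ 4 ∧ ¬ IsSquare (298 : ZMod p) := by
  obtain ⟨V, hV⟩ : ∃ V, V = L ^ 4 - 40 * N ^ 4 := ⟨_, rfl⟩
  rw [← hV] at hns ⊢
  have hV8 : V % 8 = 1 := by
    obtain ⟨k, hk⟩ : ∃ k, L = 2 * k + 1 := ⟨L / 2, by omega⟩
    have hL2 : ∃ j, L ^ 2 = 4 * j + 1 := ⟨k ^ 2 + k, by rw [hk]; ring⟩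
    obtain ⟨j, hj⟩ := hL2
    have : V = 8 * (2 * j ^ 2 + j - 5 * N ^ 4) + 1 := by
      rw [hV, show L ^ 4 = (L ^ 2) ^ 2 by ring, hj]; ring
    omega
  have hVabs : V.natAbs % 8 = 1 ∨ V.natAbs % 8 = 7 := by omega
  have hodd : Odd V.natAbs := by rw [Nat.odd_iff]; omega
  have hns' : ¬ IsSquare ((V.natAbs : ℤ) : ZMod 149) := by
    rcases Int.natAbs_eq V with h | h
    · rwa [← h]
    · intro hs
      apply hns
      rw [h]; push_cast
      have h1 : IsSquare (-1 : ZMod 149) := ⟨44, by decide +kernel⟩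
      have := h1.mul hs
      rw [neg_one_mul] at this
      simpa using this
  have h1 : jacobiSym (V.natAbs : ℤ) 149 = -1 := by
    exact ZMod.nonsquare_iff_jacobiSym_eq_neg_one.2 hns'
  have h2 : jacobiSym 149 V.natAbs = -1 := by
    rw [← h1]
    exact jacobiSym.quadratic_reciprocity_one_mod_four (a := 149) (by norm_num) hodd
  have h3 : jacobiSym 2 V.natAbs = 1 := by
    rw [jacobiSym.at_two hodd, ZMod.χ₈_nat_eq_if_mod_eight]
    rw [if_neg (by omega), if_pos hVabs]
  have h4 : jacobiSym 298 V.natAbs = -1 := by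
    have := jacobiSym.mul_left 2 149 V.natAbs
    rw [h2, h3] at this
    norm_num at this
    exact this
  obtain ⟨p, hp, hpd, hj⟩ := jacobiSym.eq_neg_one_at_prime_divisor_of_eq_neg_one h4
  have : Fact p.Prime := ⟨hp⟩
  refine ⟨p, hp, Int.natCast_dvd.2 hpd, ?_⟩
  have := ZMod.nonsquare_iff_jacobiSym_eq_neg_one.1 hj
  simpa using this

/-- `θ` is the reduction mod 149 of `(y / 2x)²`. -/
def St (P : Ecv.Point) (θ : ZMod 149) : Prop :=
  ∃ L N M : ℤ, LData P L N M ∧ (L : ZMod 149) ^ 2 = θ * (N : ZMod 149) ^ 2 ∧ (N : ZMod 149) ≠ 0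

lemma St.step {P : Ecv.Point} {θ : ZMod 149} (h : St P θ) (θ' : ZMod 149)
    (h1 : θ' * (4 * θ * (θ ^ 2 + 40)) = (θ ^ 2 - 40) ^ 2) (h2 : 4 * θ * (θ ^ 2 + 40) ≠ 0) :
    St (P + P) θ' := by
  obtain ⟨L, N, M, hd, hL, hN⟩ := h
  have hM := congrArg (Int.cast : ℤ → ZMod 149) hd.hM
  push_cast at hM
  have hN' : ((-2 * L * N * M : ℤ) : ZMod 149) ^ 2 = 4 * θ * (θ ^ 2 + 40) * (N : ZMod 149) ^ 8 := by
    push_cast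
    grind
  refine ⟨_, _, _, hd.double, ?_, ?_⟩
  · rw [hN', ← mul_assoc, h1]
    push_cast
    grind
  · intro h0
    rw [h0] at hN'
    exact mul_ne_zero h2 (pow_ne_zero 8 hN) (by rw [← hN']; ring)

lemma St.cohn {P : Ecv.Point} {θ : ZMod 149} (h : St P θ) (hθ : ¬ IsSquare (θ ^ 2 - 40)) :
    ∃ L N M : ℤ, LData P L N M ∧ ¬ IsSquare ((L ^ 4 - 40 * N ^ 4 : ℤ) : ZMod 149) := by
  obtain ⟨L, N, M, hd, hL, hN⟩ := h
  refine ⟨L, N, M, hd, ?_⟩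
  rintro ⟨r, hr⟩
  apply hθ
  push_cast at hr
  refine ⟨r / (N : ZMod 149) ^ 2, ?_⟩
  field_simp
  grind

lemma chain1 {P : Ecv.Point} (h : St P 9) : St (2 ^ 1 • P) 31 ∧ St (2 ^ 2 • P) 19 ∧
    St (2 ^ 3 • P) 42 ∧ St (2 ^ 4 • P) 37 ∧ St (2 ^ 5 • P) 68 ∧ St (2 ^ 6 • P) 76 ∧
    St (2 ^ 7 • P) 113 ∧ St (2 ^ 8 • P) 9 := by
  have e : ∀ k : ℕ, 2 ^ (k + 1) • P = 2 ^ k • P + 2 ^ k • P := fun k => by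
    rw [pow_succ, mul_two, add_nsmul]
  have h0 : St (2 ^ 0 • P) 9 := by simpa using h
  have h1 : St (2 ^ 1 • P) 31 := by rw [e 0]; exact h0.step 31 (by decide +kernel) (by decide +kernel)
  have h2 : St (2 ^ 2 • P) 19 := by rw [e 1]; exact h1.step 19 (by decide +kernel) (by decide +kernel)
  have h3 : St (2 ^ 3 • P) 42 := by rw [e 2]; exact h2.step 42 (by decide +kernel) (by decide +kernel)
  have h4 : St (2 ^ 4 • P) 37 := by rw [e 3]; exact h3.step 37 (by decide +kernel) (by decide +kernel)
  have h5 : St (2 ^ 5 • P) 68 := by rw [e 4]; exact h4.step 68 (by decide +kernel) (by decide +kernel)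
  have h6 : St (2 ^ 6 • P) 76 := by rw [e 5]; exact h5.step 76 (by decide +kernel) (by decide +kernel)
  have h7 : St (2 ^ 7 • P) 113 := by rw [e 6]; exact h6.step 113 (by decide +kernel) (by decide +kernel)
  have h8 : St (2 ^ 8 • P) 9 := by rw [e 7]; exact h7.step 9 (by decide +kernel) (by decide +kernel)
  exact ⟨h1, h2, h3, h4, h5, h6, h7, h8⟩

lemma chain3 {P : Ecv.Point} (h : St P 125) : St (2 ^ 1 • P) 54 ∧ St (2 ^ 2 • P) 123 ∧
    St (2 ^ 3 • P) 61 ∧ St (2 ^ 4 • P) 64 ∧ St (2 ^ 5 • P) 124 ∧ St (2 ^ 6 • P) 33 ∧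
    St (2 ^ 7 • P) 129 ∧ St (2 ^ 8 • P) 125 := by
  have e : ∀ k : ℕ, 2 ^ (k + 1) • P = 2 ^ k • P + 2 ^ k • P := fun k => by
    rw [pow_succ, mul_two, add_nsmul]
  have h0 : St (2 ^ 0 • P) 125 := by simpa using h
  have h1 : St (2 ^ 1 • P) 54 := by rw [e 0]; exact h0.step 54 (by decide +kernel) (by decide +kernel)
  have h2 : St (2 ^ 2 • P) 123 := by rw [e 1]; exact h1.step 123 (by decide +kernel) (by decide +kernel)
  have h3 : St (2 ^ 3 • P) 61 := by rw [e 2]; exact h2.step 61 (by decide +kernel) (by decide +kernel)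
  have h4 : St (2 ^ 4 • P) 64 := by rw [e 3]; exact h3.step 64 (by decide +kernel) (by decide +kernel)
  have h5 : St (2 ^ 5 • P) 124 := by rw [e 4]; exact h4.step 124 (by decide +kernel) (by decide +kernel)
  have h6 : St (2 ^ 6 • P) 33 := by rw [e 5]; exact h5.step 33 (by decide +kernel) (by decide +kernel)
  have h7 : St (2 ^ 7 • P) 129 := by rw [e 6]; exact h6.step 129 (by decide +kernel) (by decide +kernel)
  have h8 : St (2 ^ 8 • P) 125 := by rw [e 7]; exact h7.step 125 (by decide +kernel) (by decide +kernel)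
  exact ⟨h1, h2, h3, h4, h5, h6, h7, h8⟩

lemma St_one : St Qp 9 := ⟨_, _, _, LData_one, by decide +kernel, by decide +kernel⟩
lemma St_three : St (Qp + Qp + Qp) 125 := ⟨_, _, _, LData_three, by decide +kernel, by decide +kernel⟩

lemma St_one_mul (j : ℕ) : St (2 ^ (8 * j) • Qp) 9 := by
  induction j with
  | zero => simpa using St_one
  | succ j ih =>
    have := (chain1 ih).2.2.2.2.2.2.2
    rwa [← mul_nsmul, ← pow_add] at this

lemma St_three_mul (j : ℕ) : St (2 ^ (8 * j) • (Qp + Qp + Qp)) 125 := by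
  induction j with
  | zero => simpa using St_three
  | succ j ih =>
    have := (chain3 ih).2.2.2.2.2.2.2
    rwa [← mul_nsmul, ← pow_add] at this

/-- For every `k` the point `2^k Q` or `2^k (3Q)` is suitable. -/
lemma cohn_choice (k : ℕ) : ∃ h : ℕ, (h = 1 ∨ h = 3) ∧ ∃ L N M : ℤ, LData ((2 ^ k * h) • Qp) L N M ∧
    ¬ IsSquare ((L ^ 4 - 40 * N ^ 4 : ℤ) : ZMod 149) := by
  obtain ⟨j, r, hr, rfl⟩ : ∃ j r, r < 8 ∧ k = 8 * j + r := ⟨k / 8, k % 8, by omega, by omega⟩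
  have e3 : Qp + Qp + Qp = 3 • Qp := by
    rw [show 3 = 1 + 1 + 1 by norm_num, add_nsmul, add_nsmul, one_nsmul]
  have a := St_one_mul j
  have b := St_three_mul j
  have a' := chain1 a
  have b' := chain3 b
  have t1 : ∀ r, 2 ^ r • 2 ^ (8 * j) • Qp = (2 ^ (8 * j + r) * 1) • Qp := fun r => by
    rw [← mul_nsmul, ← pow_add, mul_one]
  have t3 : ∀ r, 2 ^ r • 2 ^ (8 * j) • (Qp + Qp + Qp) = (2 ^ (8 * j + r) * 3) • Qp := fun r => by
    rw [← mul_nsmul, ← pow_add, e3, ← mul_nsmul, mul_comm 3]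
  simp only [t1, t3] at a' b'
  obtain ⟨a1, a2, a3, a4, a5, a6, a7, -⟩ := a'
  obtain ⟨b1, b2, b3, b4, b5, b6, b7, -⟩ := b'
  interval_cases r
  · refine ⟨1, Or.inl rfl, ?_⟩
    simp only [mul_one, add_zero]
    exact a.cohn (by decide +kernel)
  · exact ⟨1, Or.inl rfl, a1.cohn (by decide +kernel)⟩
  · exact ⟨1, Or.inl rfl, a2.cohn (by decide +kernel)⟩
  · exact ⟨3, Or.inr rfl, b3.cohn (by decide +kernel)⟩
  · exact ⟨1, Or.inl rfl, a4.cohn (by decide +kernel)⟩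
  · exact ⟨3, Or.inr rfl, b5.cohn (by decide +kernel)⟩
  · exact ⟨1, Or.inl rfl, a6.cohn (by decide +kernel)⟩
  · exact ⟨3, Or.inr rfl, b7.cohn (by decide +kernel)⟩

/-- An integral solution of the two quadratic conditions. -/
structure Sol (a b c e : ℤ) : Prop where
  b0 : b ≠ 0
  cop : IsCoprime a b
  hc : a ^ 2 + b ^ 2 = c ^ 2
  he : a ^ 2 + 6 * a * b - b ^ 2 = e ^ 2

def solx (a b c e : ℤ) : ℚ := 4 * (a + c) * (a + 3 * b - e) / b ^ 2
def soly (a b c e : ℤ) : ℚ := 2 * solx a b c e * (e - c) / b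

lemma Sol.neg_c {a b c e : ℤ} (h : Sol a b c e) : Sol a b (-c) e :=
  ⟨h.b0, h.cop, by rw [h.hc]; ring, h.he⟩

lemma Sol.neg_e {a b c e : ℤ} (h : Sol a b c e) : Sol a b c (-e) :=
  ⟨h.b0, h.cop, h.hc, by rw [h.he]; ring⟩

lemma Sol.hq {a b c e : ℤ} (h : Sol a b c e) : (b : ℚ) ≠ 0 ∧ (a : ℚ) ^ 2 + b ^ 2 = c ^ 2 ∧
    (a : ℚ) ^ 2 + 6 * a * b - b ^ 2 = e ^ 2 :=
  ⟨by exact_mod_cast h.b0, by exact_mod_cast h.hc, by exact_mod_cast h.he⟩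

lemma Sol.c0 {a b c e : ℤ} (h : Sol a b c e) : (c : ℚ) ≠ 0 := by
  obtain ⟨hb, hc, -⟩ := h.hq
  intro h0
  rw [h0] at hc
  apply hb
  nlinarith [sq_nonneg (a : ℚ), sq_nonneg (b : ℚ), pow_eq_zero_iff (M₀ := ℚ) (a := b) two_ne_zero]

lemma Sol.u0 {a b c e : ℤ} (h : Sol a b c e) : (a : ℚ) + 3 * b - e ≠ 0 := by
  obtain ⟨hb, hc, he⟩ := h.hq
  intro h0
  apply hb
  have : (b : ℚ) ^ 2 = 0 := by grind
  simpa using this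

lemma Sol.ac0 {a b c e : ℤ} (h : Sol a b c e) : (a : ℚ) + c ≠ 0 := by
  obtain ⟨hb, hc, he⟩ := h.hq
  intro h0
  apply hb
  have : (b : ℚ) ^ 2 = 0 := by grind
  simpa using this

lemma Sol.x0 {a b c e : ℤ} (h : Sol a b c e) : solx a b c e ≠ 0 := by
  have h1 := h.u0
  have h2 := h.ac0
  have h3 := h.hq.1
  unfold solx
  positivity

lemma Sol.pt {a b c e : ℤ} (h : Sol a b c e) : ∃ P, IsPt P (solx a b c e) (soly a b c e) := by
  apply exists_pt
  obtain ⟨hb, hc, he⟩ := h.hq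
  unfold soly solx
  field_simp
  grind

lemma Sol.rel {a b c e : ℤ} (h : Sol a b c e) :
    solx a b c e * (c - a) = 4 * (a + 3 * b - e) ∧
    solx a b c e * (a + 3 * b + e) = 40 * (a + c) ∧
    2 * solx a b c e * (e - c) = soly a b c e * b := by
  obtain ⟨hb, hc, he⟩ := h.hq
  refine ⟨?_, ?_, ?_⟩
  · unfold solx; field_simp; grind
  · unfold solx; field_simp; grind
  · unfold soly; field_simp

lemma Sol.add_Q {a b c e : ℤ} (h : Sol a b c e) {P P' : Ecv.Point}
    (hP : IsPt P (solx a b c e) (soly a b c e)) (hP' : IsPt P' (solx a b (-c) e) (soly a b (-c) e)) :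
    P + P' = Qp := by
  obtain ⟨hb, hc, he⟩ := h.hq
  have hc0 := h.c0
  have hu0 := h.u0
  have hne : solx a b c e ≠ solx a b (-c) e := by
    unfold solx
    intro h0
    field_simp at h0
    push_cast at h0
    apply hc0
    linarith
  have := hP.add_ne hP' hne (2 * (e - a) / b) (-4) (by
    unfold soly solx; push_cast; field_simp; ring) (by unfold solx; push_cast; field_simp; grind)
  refine (this.congr rfl ?_).inj Qp_pt
  unfold soly solx
  field_simp
  grind

lemma Sol.add_T {a b c e : ℤ} (h : Sol a b c e) {P : Ecv.Point}
    (hP : IsPt P (solx a b c e) (soly a b c e)) :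
    IsPt (P + Tp) (solx a b (-c) (-e)) (soly a b (-c) (-e)) := by
  obtain ⟨hb, hc, he⟩ := h.hq
  have h1 := h.ac0
  have h2 := h.u0
  refine (hP.add_T h.x0).congr ?_ ?_
  · unfold solx; push_cast; field_simp; grind
  · unfold soly solx; push_cast; field_simp; grind

lemma Sol.red {a b c e : ℤ} (h : Sol a b c e) {P : Ecv.Point}
    (hP : IsPt P (solx a b c e) (soly a b c e)) {p : ℕ} {x y z : ZMod p} (hr : Red p P x y z) :
    x * (c - a) = 4 * (a + 3 * b - e) * z ∧ x * (a + 3 * b + e) = 40 * (a + c) * z ∧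
    2 * x * (e - c) = y * b := by
  obtain ⟨X, Y, Z, hR, rfl, rfl, rfl⟩ := hr
  rcases hR with ⟨h0, -⟩ | ⟨hZ, hR⟩
  · exact absurd h0 hP.ne_zero
  obtain ⟨e1, e2⟩ := hP.unique hR
  obtain ⟨r1, r2, r3⟩ := h.rel
  rw [e1] at r1 r2 r3
  rw [e2] at r3
  field_simp at r1 r2 r3
  have r1' : X * (c - a) = 4 * (a + 3 * b - e) * Z := by
    have : (X : ℚ) * (c - a) = 4 * (a + 3 * b - e) * Z := by linarith
    exact_mod_cast this
  have r2' : X * (a + 3 * b + e) = 40 * (a + c) * Z := by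
    have : (X : ℚ) * (a + 3 * b + e) = 40 * (a + c) * Z := by linarith
    exact_mod_cast this
  have r3' : 2 * X * (e - c) = Y * b := by
    have : 2 * (X : ℚ) * (e - c) = Y * b := by linarith
    exact_mod_cast this
  exact ⟨by exact_mod_cast congrArg (Int.cast : ℤ → ZMod p) r1',
    by exact_mod_cast congrArg (Int.cast : ℤ → ZMod p) r2',
    by exact_mod_cast congrArg (Int.cast : ℤ → ZMod p) r3'⟩

lemma cop_mod {a b : ℤ} (h : IsCoprime a b) {p : ℕ} [Fact p.Prime] (ha : (a : ZMod p) = 0)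
    (hb : (b : ZMod p) = 0) : False := by
  obtain ⟨u, v, h⟩ := h
  have := congrArg (Int.cast : ℤ → ZMod p) h
  push_cast at this
  rw [ha, hb] at this
  simp at this

instance fact71 : Fact (Nat.Prime 71) := ⟨by norm_num⟩

lemma lin1 {a b c e k: ZMod 71} (hk : k ≠ 0) (h1 : (k*363) * (c - a) = 4 * (a + 3 * b - e) * (k*27)) (h2 : (k*363) * (a + 3 * b + e) = 40 * (a + c) * (k*27))
  (h3 : 2 * (k*363) * (e - c) = (k*451) * b) : b = 50 * a := by
  have h1' : 363 * (c - a) = 4 * (a + 3 * b - e) * 27 := mul_left_cancel₀ hk (by linear_combination h1)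
  have h2' : 363 * (a + 3 * b + e) = 40 * (a + c) * 27 := mul_left_cancel₀ hk (by linear_combination h2)
  have h3' : 2 * 363 * (e - c) = 451 * b := mul_left_cancel₀ hk (by linear_combination h3)
  clear h1 h2 h3 hk
  grind
lemma lin2 {a b c e k: ZMod 71} (hk : k ≠ 0) (h1 : (k*363) * (c - a) = 4 * (a + 3 * b - e) * (k*27)) (h2 : (k*363) * (a + 3 * b + e) = 40 * (a + c) * (k*27))
  (h3 : 2 * (k*363) * (e - c) = (k*(-451)) * b) : b = 3 * a := by
  have h1' : 363 * (c - a) = 4 * (a + 3 * b - e) * 27 := mul_left_cancel₀ hk (by linear_combination h1)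
  have h2' : 363 * (a + 3 * b + e) = 40 * (a + c) * 27 := mul_left_cancel₀ hk (by linear_combination h2)
  have h3' : 2 * 363 * (e - c) = -451 * b := mul_left_cancel₀ hk (by linear_combination h3)
  clear h1 h2 h3 hk
  grind

lemma red71_S : Red 71 (Qp + Qp) 363 451 27 := by
  have := Red.of_pt (p := 71) two_Qp 363 451 27 (by norm_num) (by norm_num) (by norm_num)
  simpa using this

lemma ker71 : (Qp + Qp) + (Qp + Qp) + (Qp + Qp) ∈ kerRed 71 := by
  have h1 := red71_S.add_l red71_S (by decide +kernel)
  have h2 := h1.add_s red71_S (by decide +kernel)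
  have e1 : sX (lX 363 451 27 363 451 27) (lY 363 451 27 363 451 27) (lZ 363 451 27 363 451 27)
    363 451 27 = (0 : ZMod 71) := by decide +kernel
  have e3 : sZ (lX 363 451 27 363 451 27) (lY 363 451 27 363 451 27) (lZ 363 451 27 363 451 27)
    363 451 27 = (0 : ZMod 71) := by decide +kernel
  have e2 : sY (lX 363 451 27 363 451 27) (lY 363 451 27 363 451 27) (lZ 363 451 27 363 451 27)
    363 451 27 ≠ (0 : ZMod 71) := by decide +kernel
  rw [e1, e3] at h2
  exact ⟨_, e2, h2⟩

/-- The sextic form. -/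
def Gf {R : Type*} [CommRing R] (a b : R) : R := (a ^ 2 + 4 * a * b - b ^ 2) ^ 3 + 108 * a ^ 3 * b ^ 3

lemma Gf_cast {a b w : ℤ} (h : Gf a b = w ^ 2) (p : ℕ) : Gf (a : ZMod p) b = (w : ZMod p) ^ 2 := by
  rw [← Int.cast_pow, ← h]; simp [Gf]

lemma G_nonsq {p : ℕ} [Fact p.Prime] {a b w : ℤ} (h : IsCoprime a b) (r g : ZMod p)
    (hb : (b : ZMod p) = r * a) (hG : Gf a b = w ^ 2) (hr : Gf 1 r = g) : IsSquare g := by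
  have ha : (a : ZMod p) ≠ 0 := fun h0 => cop_mod h h0 (by rw [hb, h0, mul_zero])
  have h1 := Gf_cast hG p
  refine ⟨w / (a : ZMod p) ^ 3, ?_⟩
  field_simp
  rw [← h1, hb, ← hr]
  unfold Gf
  ring

/-- The sieve modulo 71. -/
lemma Sol.sieve {a b c e w n : ℤ} (h : Sol a b c e) (hG : Gf a b = w ^ 2)
    (hP : IsPt (n • (Qp + Qp)) (solx a b c e) (soly a b c e)) : (3 : ℤ) ∣ n := by
  have ker (i : ℤ) : i • ((Qp + Qp) + (Qp + Qp) + (Qp + Qp)) ∈ kerRed 71 :=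
    (kerRed 71).zsmul_mem ker71 i
  have key : n % 3 = 0 ∨ n % 3 = 1 ∨ n % 3 = 2 := by omega
  rcases key with h3 | h3 | h3
  · omega
  · exfalso
    obtain ⟨i, rfl⟩ : ∃ i, n = 3 * i + 1 := ⟨n / 3, by omega⟩
    obtain ⟨k, hk, hr⟩ := red71_S.add_ker (by decide +kernel) (ker i)
    have e1 : Qp + Qp + i • ((Qp + Qp) + (Qp + Qp) + (Qp + Qp)) = (3 * i + 1) • (Qp + Qp) := by
      module
    rw [e1] at hr
    obtain ⟨r1, r2, r3⟩ := h.red hP hr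
    exact absurd (G_nonsq h.cop 50 44 (lin1 hk r1 r2 r3) hG (by decide +kernel)) (by decide +kernel)
  · exfalso
    obtain ⟨i, rfl⟩ : ∃ i, n = 3 * i - 1 := ⟨n / 3 + 1, by omega⟩
    obtain ⟨k, hk, hr⟩ := red71_S.neg.add_ker (by decide +kernel) (ker i)
    have e1 : -(Qp + Qp) + i • ((Qp + Qp) + (Qp + Qp) + (Qp + Qp)) = (3 * i - 1) • (Qp + Qp) := by
      module
    rw [e1] at hr
    obtain ⟨r1, r2, r3⟩ := h.red hP hr
    exact absurd (G_nonsq h.cop 3 69 (lin2 hk r1 r2 r3) hG (by decide +kernel)) (by decide +kernel)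

/-- The local contradiction at a Cohn prime. -/
lemma Sol.local_contra {a b c e w : ℤ} (h : Sol a b c e) (hG : Gf a b = w ^ 2) {P : Ecv.Point}
    (hP : IsPt P (solx a b c e) (soly a b c e)) {p : ℕ} [Fact p.Prime] (h30 : (30 : ZMod p) ≠ 0)
    {x z : ZMod p} (hr : Red p P x 0 z) (hz : z ≠ 0) (hx : x ^ 2 = 160 * z ^ 2)
    (hns : ¬ IsSquare (298 : ZMod p)) : False := by
  have h2 : (2 : ZMod p) ≠ 0 := fun h0 => h30 (by linear_combination 15 * h0)
  have h3 : (3 : ZMod p) ≠ 0 := fun h0 => h30 (by linear_combination 10 * h0)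
  have h5 : (5 : ZMod p) ≠ 0 := fun h0 => h30 (by linear_combination 6 * h0)
  have hx0 : x ≠ 0 := by
    rintro rfl
    have : (2 : ZMod p) ^ 5 * 5 * z ^ 2 ≠ 0 := by positivity
    apply this
    linear_combination -hx
  obtain ⟨r1, r2, r3⟩ := h.red hP hr
  have hc := congrArg (Int.cast : ℤ → ZMod p) h.hc
  have he := congrArg (Int.cast : ℤ → ZMod p) h.he
  push_cast at hc he
  have ec : (e : ZMod p) = c := by
    have : 2 * x * ((e : ZMod p) - c) = 0 := by rw [r3]; ring
    rcases mul_eq_zero.1 this with h0 | h0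
    · exact absurd h0 (mul_ne_zero h2 hx0)
    · exact sub_eq_zero.1 h0
  have hb : (2 : ZMod p) * ((b : ZMod p) * (3 * a - b)) = 0 := by
    rw [ec] at he; linear_combination he - hc
  have hb := (mul_eq_zero.1 hb).resolve_left h2
  rcases mul_eq_zero.1 hb with hb | hb
  · have ha : (a : ZMod p) ≠ 0 := fun h0 => cop_mod h.cop h0 hb
    rw [ec, hb] at r1 r2
    have k1 : (x + 4 * z) * ((c : ZMod p) - a) = 0 := by linear_combination r1
    rcases mul_eq_zero.1 k1 with k1 | k1
    · have : (2 : ZMod p) ^ 4 * 3 ^ 2 * z ^ 2 ≠ 0 := by positivity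
      apply this
      linear_combination (x - 4 * z) * k1 - hx
    · have k2 : (2 : ZMod p) * a * (x - 40 * z) = 0 := by
        linear_combination r2 - (x - 40 * z) * k1
      have k2 := (mul_eq_zero.1 k2).resolve_left (mul_ne_zero h2 ha)
      have : (2 : ZMod p) ^ 5 * 3 ^ 2 * 5 * z ^ 2 ≠ 0 := by positivity
      apply this
      linear_combination hx - (x + 40 * z) * k2
  · have hb' : (b : ZMod p) = 3 * a := by linear_combination -hb
    obtain ⟨s, hs⟩ := G_nonsq h.cop 3 2980 hb' hG (by unfold Gf; norm_num)
    apply hns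
    refine ⟨s * 4 * z / x, ?_⟩
    field_simp
    linear_combination 298 * hx + 16 * z ^ 2 * hs

lemma Sol.cohn {a b c e w n : ℤ} (h : Sol a b c e) (hG : Gf a b = w ^ 2) (hn : Even n)
    (hP : IsPt (n • Qp) (solx a b c e) (soly a b c e)) : False := by
  have hn0 : n ≠ 0 := by rintro rfl; exact hP.ne_zero (zero_zsmul _)
  obtain ⟨m, rfl⟩ := hn
  have h3 : (3 : ℤ) ∣ m := by
    apply h.sieve hG
    convert hP using 1
    module
  have hm0 : m.natAbs ≠ 0 := by omega
  obtain ⟨k, j, hj, hm⟩ := Nat.exists_eq_two_pow_mul_odd hm0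
  have hm3 : 3 ∣ 2 ^ k * j := by omega
  have hj3 : 3 ∣ j := by
    apply Nat.Coprime.dvd_of_dvd_mul_left _ hm3
    exact Nat.Coprime.pow_right _ (by norm_num)
  obtain ⟨h', hh, L, N, M, hd, hns⟩ := cohn_choice k
  have hhj : h' ∣ j := by rcases hh with rfl | rfl; exacts [one_dvd _, hj3]
  obtain ⟨i, rfl⟩ := hhj
  have hi : Odd i := (Nat.odd_mul.1 hj).2
  obtain ⟨s, hs, hms⟩ : ∃ s : ℤ, Odd s ∧ m = 2 ^ k * h' * s := by
    rcases Int.natAbs_eq m with hq | hq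
    · refine ⟨i, by exact_mod_cast hi, ?_⟩
      rw [hq, hm]; push_cast; ring
    · refine ⟨-i, by simpa using hi, ?_⟩
      rw [hq, hm]; push_cast; ring
  obtain ⟨t, rfl⟩ := hs
  obtain ⟨p, hp, hpd, hsq⟩ := cohn_prime hd.odd hns
  have : Fact p.Prime := ⟨hp⟩
  have hD := hd.double
  generalize hL' : L ^ 4 - 40 * N ^ 4 = L' at hD hpd
  generalize -2 * L * N * M = N' at hD
  generalize -(L ^ 8 + 240 * L ^ 4 * N ^ 4 + 1600 * N ^ 8) = M' at hD
  have hp2 : p ≠ 2 := by rintro rfl; exact hD.odd hpd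
  have hp5 : p ≠ 5 := by rintro rfl; exact hD.five hpd
  have hp3 : p ≠ 3 := by rintro rfl; exact hsq (by decide +kernel)
  have h30 : (30 : ZMod p) ≠ 0 := by
    intro h0
    have : ((30 : ℕ) : ZMod p) = 0 := by exact_mod_cast h0
    rw [ZMod.natCast_eq_zero_iff] at this
    have h1 : p ∣ 2 * 3 * 5 := this
    rcases hp.dvd_mul.1 h1 with h1 | h1
    · rcases hp.dvd_mul.1 h1 with h1 | h1
      · exact hp2 ((Nat.prime_dvd_prime_iff_eq hp Nat.prime_two).1 h1)
      · exact hp3 ((Nat.prime_dvd_prime_iff_eq hp Nat.prime_three).1 h1)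
    · exact hp5 ((Nat.prime_dvd_prime_iff_eq hp Nat.prime_five).1 h1)
  have h10 : (10 : ZMod p) ≠ 0 := fun h0 => h30 (by linear_combination 3 * h0)
  have hLp : (L' : ZMod p) = 0 := (ZMod.intCast_zmod_eq_zero_iff_dvd _ _).2 hpd
  have hNp : (N' : ZMod p) ≠ 0 := fun h0 => cop_mod hD.cop hLp h0
  have hMp := congrArg (Int.cast : ℤ → ZMod p) hD.hM
  push_cast at hMp
  rw [hLp] at hMp
  have hN0 : (N' : ℚ) ≠ 0 := by exact_mod_cast hD.N0
  have hR := Red.of_pt (p := p) hD.pt (2 * (L' ^ 2 - M') * N') (4 * L' * (L' ^ 2 - M')) (N' ^ 3)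
    (pow_ne_zero 3 hD.N0) (by push_cast; field_simp) (by push_cast; field_simp)
  push_cast at hR
  rw [hLp] at hR
  obtain ⟨X, hX⟩ : ∃ X : ZMod p, X = 2 * (0 ^ 2 - (M' : ZMod p)) * N' := ⟨_, rfl⟩
  obtain ⟨Z, hZ⟩ : ∃ Z : ZMod p, Z = (N' : ZMod p) ^ 3 := ⟨_, rfl⟩
  rw [← hX, ← hZ, mul_zero, zero_mul] at hR
  have hZ0 : Z ≠ 0 := by rw [hZ]; exact pow_ne_zero _ hNp
  have hXZ : X ^ 2 = 160 * Z ^ 2 := by rw [hX, hZ]; linear_combination 4 * (N' : ZMod p) ^ 2 * hMp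
  have hK := (kerRed p).zsmul_mem (hR.two_mem_ker h10 hXZ hZ0) t
  obtain ⟨u, hu, hR2⟩ := hR.add_ker hZ0 hK
  have e1 : (2 ^ k * h') • Qp + (2 ^ k * h') • Qp +
      t • ((2 ^ k * h') • Qp + (2 ^ k * h') • Qp + ((2 ^ k * h') • Qp + (2 ^ k * h') • Qp)) =
      (m + m) • Qp := by
    rw [hms, ← natCast_zsmul]
    push_cast
    module
  rw [e1, mul_zero] at hR2
  exact h.local_contra hG hP h30 hR2 (mul_ne_zero hu hZ0) (by linear_combination u ^ 2 * hXZ) hsq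

/-- There are no solutions at all. -/
lemma Sol.false {a b c e w : ℤ} (h : Sol a b c e) (hG : Gf a b = w ^ 2) : False := by
  have key : ∀ c e n : ℤ, Sol a b c e → IsPt (n • Qp) (solx a b c e) (soly a b c e) → False := by
    intro c e n h hP
    rcases Int.even_or_odd n with hn | hn
    · exact h.cohn hG hn hP
    · obtain ⟨P', hP'⟩ := h.neg_c.pt
      have h1 := h.add_Q hP hP'
      have h2 : P' = (1 - n) • Qp := by
        rw [sub_smul, one_smul, eq_sub_iff_add_eq, add_comm]; exact h1
      rw [h2] at hP'
      exact h.neg_c.cohn hG (by rw [Int.even_sub]; simpa using hn) hP'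
  obtain ⟨P, hP⟩ := h.pt
  obtain ⟨n, rfl | rfl⟩ := mw_form P
  · exact key _ _ _ h hP
  · have := h.add_T hP
    rw [add_assoc, Tp_dbl, add_zero] at this
    exact key _ _ _ h.neg_c.neg_e this

lemma loc_kill (q m : ℕ) (d1 d2 dd : ℤ) {a b s t g : ℤ} (cop : IsCoprime a b)
    (hA : a ^ 2 + b ^ 2 = d1 * s ^ 2) (hE : a ^ 2 + 6 * a * b - b ^ 2 = d2 * t ^ 2)
    (hG : dd * Gf a b = g ^ 2) (hm : (m : ZMod q) ≠ 0)
    (hdec : ∀ x y : ZMod q, (m * x ≠ 0 ∨ m * y ≠ 0) → (∃ s : ZMod q, x ^ 2 + y ^ 2 = d1 * s ^ 2) →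
      (∃ t : ZMod q, x ^ 2 + 6 * x * y - y ^ 2 = d2 * t ^ 2) →
      ¬ ∃ g : ZMod q, dd * Gf x y = g ^ 2) : False := by
  refine hdec a b ?_ ⟨s, ?_⟩ ⟨t, ?_⟩ ⟨g, ?_⟩
  · by_contra! h
    obtain ⟨u, v, h1⟩ := cop
    have h2 := congrArg (Int.cast : ℤ → ZMod q) h1
    push_cast at h2
    apply hm
    linear_combination (u : ZMod q) * h.1 + v * h.2 - m * h2
  · exact_mod_cast congrArg (Int.cast : ℤ → ZMod q) hA
  · exact_mod_cast congrArg (Int.cast : ℤ → ZMod q) hE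
  · have := congrArg (Int.cast : ℤ → ZMod q) hG
    unfold Gf at *
    exact_mod_cast this

instance decGf (q : ℕ) (d1 d2 dd m : ZMod q) [NeZero q] : Decidable
    (∀ x y : ZMod q, (m * x ≠ 0 ∨ m * y ≠ 0) → (∃ s : ZMod q, x ^ 2 + y ^ 2 = d1 * s ^ 2) →
      (∃ t : ZMod q, x ^ 2 + 6 * x * y - y ^ 2 = d2 * t ^ 2) →
      ¬ ∃ g : ZMod q, dd * Gf x y = g ^ 2) :=
  haveI : Fintype (ZMod q) := ZMod.fintype q
  inferInstance

lemma mem_d1 {d : ℤ} (h : d ∣ 170) (h0 : 0 < d) :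
    d = 1 ∨ d = 2 ∨ d = 5 ∨ d = 10 ∨ d = 17 ∨ d = 34 ∨ d = 85 ∨ d = 170 := by
  have := Int.le_of_dvd (by norm_num) h
  interval_cases d <;> revert h <;> decide

lemma mem_d2 {d : ℤ} (h : d ∣ 10) :
    d = 1 ∨ d = -1 ∨ d = 2 ∨ d = -2 ∨ d = 5 ∨ d = -5 ∨ d = 10 ∨ d = -10 := by
  have h1 := Int.le_of_dvd (by norm_num) h
  have h2 := Int.le_of_dvd (by norm_num) ((neg_dvd).2 h)
  have h3 : -10 ≤ d := by linarith
  interval_cases d <;> revert h <;> decide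

lemma no_abk {a b k : ℤ} (cop : IsCoprime a b) (ha : a ≠ 0) (hb : b ≠ 0) (hk : k ≠ 0)
    (h : (a ^ 2 + b ^ 2) * (a ^ 2 + 6 * a * b - b ^ 2) * Gf a b = k ^ 2) : False := by
  have hA0 : 0 < a ^ 2 + b ^ 2 := by positivity
  have hk2 : k ^ 2 ≠ 0 := pow_ne_zero 2 hk
  have hE0 : a ^ 2 + 6 * a * b - b ^ 2 ≠ 0 := by
    intro h0; apply hk2; rw [← h, h0]; ring
  obtain ⟨d1, s, hd1, hs1, hp1⟩ := sqfree_part (n := a ^ 2 + b ^ 2)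
    (m := (a ^ 2 + 6 * a * b - b ^ 2) * Gf a b) (k := k) hA0.ne' (by rw [← h]; ring)
  obtain ⟨d2, t, hd2, hs2, hp2⟩ := sqfree_part (n := a ^ 2 + 6 * a * b - b ^ 2)
    (m := (a ^ 2 + b ^ 2) * Gf a b) (k := k) hE0 (by rw [← h]; ring)
  have cA : ∀ l : ℤ, Prime l → l ∣ a → l ∣ a ^ 2 + b ^ 2 → False := fun l hl h1 h2 => by
    have h3 : l ∣ b ^ 2 := by
      have := dvd_sub h2 (dvd_pow h1 two_ne_zero)
      simpa using this
    exact prime_coprime_false hl cop h1 (hl.dvd_of_dvd_pow h3)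
  have cB : ∀ l : ℤ, Prime l → l ∣ b → l ∣ a ^ 2 + b ^ 2 → False := fun l hl h1 h2 => by
    have h3 : l ∣ a ^ 2 := by
      have := dvd_sub h2 (dvd_pow h1 two_ne_zero)
      simpa using this
    exact prime_coprime_false hl cop (hl.dvd_of_dvd_pow h3) h1
  have cA' : ∀ l : ℤ, Prime l → l ∣ a → l ∣ a ^ 2 + 6 * a * b - b ^ 2 → False := fun l hl h1 h2 => by
    have h3 : l ∣ b ^ 2 := by
      have := dvd_sub (h1.mul_right (a + 6 * b)) h2
      have e : a * (a + 6 * b) - (a ^ 2 + 6 * a * b - b ^ 2) = b ^ 2 := by ring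
      rwa [e] at this
    exact prime_coprime_false hl cop h1 (hl.dvd_of_dvd_pow h3)
  have cB' : ∀ l : ℤ, Prime l → l ∣ b → l ∣ a ^ 2 + 6 * a * b - b ^ 2 → False := fun l hl h1 h2 => by
    have h3 : l ∣ a ^ 2 := by
      have := dvd_sub h2 (h1.mul_right (6 * a - b))
      have e : (a ^ 2 + 6 * a * b - b ^ 2) - b * (6 * a - b) = a ^ 2 := by ring
      rwa [e] at this
    exact prime_coprime_false hl cop (hl.dvd_of_dvd_pow h3) h1
  have AE : ∀ l : ℤ, Prime l → l ∣ a ^ 2 + b ^ 2 → l ∣ a ^ 2 + 6 * a * b - b ^ 2 → l ∣ 10 := by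
    intro l hl h1 h2
    have h3 : l ∣ 20 * a ^ 2 * b := by
      have := dvd_add (dvd_mul_of_dvd_right (dvd_sub h2 h1) (3 * a + b)) (dvd_mul_of_dvd_right h1 (2 * b))
      have e : (3 * a + b) * ((a ^ 2 + 6 * a * b - b ^ 2) - (a ^ 2 + b ^ 2)) + 2 * b * (a ^ 2 + b ^ 2) =
        20 * a ^ 2 * b := by ring
      rwa [e] at this
    rcases hl.dvd_or_dvd h3 with h3 | h3
    · rcases prime_dvd_mul_pow 2 hl h3 with h3 | h3
      · exact hl.dvd_of_dvd_pow (n := 2) (h3.trans (by norm_num))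
      · exact (cA l hl h3 h1).elim
    · exact (cB l hl h3 h1).elim
  have AG : ∀ l : ℤ, Prime l → l ∣ a ^ 2 + b ^ 2 → l ∣ Gf a b → l ∣ 170 := by
    intro l hl h1 h2
    have h3 : l ∣ 5780 * a ^ 7 := by
      obtain ⟨u, hu⟩ := h1
      obtain ⟨v, hv⟩ := h2
      have hb2 : b ^ 2 = l * u - a ^ 2 := by linarith
      have : ∃ w, Gf a b * (22 * a - 31 * b) = -5780 * a ^ 7 + (a ^ 2 + b ^ 2) * w := by
        refine ⟨(31) * a ^ 0 * b ^ 5 + (-394) * a ^ 1 * b ^ 4 + (1628) * a ^ 2 * b ^ 3 + (-5184) * a ^ 3 * b ^ 2 + (233) * a ^ 4 * b ^ 1 + (5802) * a ^ 5 * b ^ 0, ?_⟩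
        unfold Gf; ring
      obtain ⟨w, hw⟩ := this
      exact ⟨u * w - v * (22 * a - 31 * b), by rw [hu, hv] at hw; linear_combination hw⟩
    rcases prime_dvd_mul_pow 7 hl h3 with h3 | h3
    · exact hl.dvd_of_dvd_pow (n := 2) (h3.trans (by norm_num))
    · exact (cA l hl h3 h1).elim
  have EG : ∀ l : ℤ, Prime l → l ∣ a ^ 2 + 6 * a * b - b ^ 2 → l ∣ Gf a b → l ∣ 10 := by
    intro l hl h1 h2
    have h3 : l ∣ 100 * a ^ 3 * b ^ 3 := by
      obtain ⟨u, hu⟩ := h1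
      have hy : a ^ 2 + 4 * a * b - b ^ 2 = l * u - 2 * a * b := by linarith
      have : Gf a b = l * (u * (l ^ 2 * u ^ 2 - 6 * a * b * l * u + 12 * a ^ 2 * b ^ 2)) +
          100 * a ^ 3 * b ^ 3 := by
        unfold Gf; rw [hy]; ring
      rw [this] at h2
      exact (dvd_add_right (dvd_mul_right _ _)).1 h2
    rcases prime_dvd_mul_pow 3 hl h3 with h3 | h3
    · rcases prime_dvd_mul_pow 3 hl h3 with h3 | h3
      · exact hl.dvd_of_dvd_pow (n := 2) (h3.trans (by norm_num))
      · exact (cA' l hl h3 h1).elim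
    · exact (cB' l hl h3 h1).elim
  have D1 : d1 ∣ 170 := by
    apply sqfree_dvd hs1 (by norm_num)
    intro l hl hld
    have h1 : l ∣ a ^ 2 + b ^ 2 := by rw [hd1]; exact hld.mul_right _
    rcases hl.dvd_or_dvd (hp1 l hl hld) with h2 | h2
    · exact (AE l hl h1 h2).trans (by norm_num)
    · exact AG l hl h1 h2
  have D2 : d2 ∣ 10 := by
    apply sqfree_dvd hs2 (by norm_num)
    intro l hl hld
    have h1 : l ∣ a ^ 2 + 6 * a * b - b ^ 2 := by rw [hd2]; exact hld.mul_right _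
    rcases hl.dvd_or_dvd (hp2 l hl hld) with h2 | h2
    · exact AE l hl h2 h1
    · exact EG l hl h1 h2
  have d1pos : 0 < d1 := by
    rw [hd1] at hA0
    exact pos_of_mul_pos_left hA0 (sq_nonneg s)
  have s0 : s ≠ 0 := by rintro rfl; rw [hd1] at hA0; simp at hA0
  have t0 : t ≠ 0 := by rintro rfl; apply hE0; rw [hd2]; ring
  obtain ⟨g, hg⟩ : ∃ g : ℤ, d1 * d2 * Gf a b = g ^ 2 := by
    have s0q : (s : ℚ) ≠ 0 := by exact_mod_cast s0
    have t0q : (t : ℚ) ≠ 0 := by exact_mod_cast t0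
    rw [hd1, hd2] at h
    have hq : ((d1 * s ^ 2 * (d2 * t ^ 2) * Gf a b : ℤ) : ℚ) = k ^ 2 := by exact_mod_cast h
    have : (k / (s * t) : ℚ) ^ 2 = (d1 * d2 * Gf a b : ℤ) := by
      push_cast at hq ⊢
      field_simp
      linear_combination -hq
    obtain ⟨g, -, hg⟩ := sq_rat_int this
    exact ⟨g, hg.symm⟩
  rcases mem_d1 D1 d1pos with rfl | rfl | rfl | rfl | rfl | rfl | rfl | rfl
  · rcases mem_d2 D2 with rfl | rfl | rfl | rfl | rfl | rfl | rfl | rfl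
    · exact Sol.false (c := s) (e := t) (w := g) ⟨hb, cop, by linarith, by linarith⟩ (by linarith)
    · refine Sol.false (a := -b) (b := a) (c := s) (e := t) (w := g)
        ⟨ha, cop.symm.neg_left, by linarith, by linarith⟩ ?_
      rw [← hg]; unfold Gf; ring
    all_goals exact loc_kill 8 4 _ _ _ cop hd1 hd2 hg (by decide +kernel) (by decide +kernel)
  · rcases mem_d2 D2 with rfl | rfl | rfl | rfl | rfl | rfl | rfl | rfl <;>
      exact loc_kill 11 1 _ _ _ cop hd1 hd2 hg (by decide +kernel) (by decide +kernel)
  · rcases mem_d2 D2 with rfl | rfl | rfl | rfl | rfl | rfl | rfl | rfl <;>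
      exact loc_kill 7 1 _ _ _ cop hd1 hd2 hg (by decide +kernel) (by decide +kernel)
  · rcases mem_d2 D2 with rfl | rfl | rfl | rfl | rfl | rfl | rfl | rfl <;>
      exact loc_kill 7 1 _ _ _ cop hd1 hd2 hg (by decide +kernel) (by decide +kernel)
  · rcases mem_d2 D2 with rfl | rfl | rfl | rfl | rfl | rfl | rfl | rfl <;>
      exact loc_kill 7 1 _ _ _ cop hd1 hd2 hg (by decide +kernel) (by decide +kernel)
  · rcases mem_d2 D2 with rfl | rfl | rfl | rfl | rfl | rfl | rfl | rfl <;>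
      exact loc_kill 7 1 _ _ _ cop hd1 hd2 hg (by decide +kernel) (by decide +kernel)
  · rcases mem_d2 D2 with rfl | rfl | rfl | rfl | rfl | rfl | rfl | rfl <;>
      exact loc_kill 11 1 _ _ _ cop hd1 hd2 hg (by decide +kernel) (by decide +kernel)
  · have hq : ∀ ε : ℤ, 170 * (10 * ε) * Gf a b = g ^ 2 → ∃ g', 17 * ε * Gf a b = g' ^ 2 := by
      intro ε hε
      have : (10 : ℤ) ^ 2 ∣ g ^ 2 := ⟨17 * ε * Gf a b, by rw [← hε]; ring⟩
      obtain ⟨g', rfl⟩ := (Int.pow_dvd_pow_iff two_ne_zero).1 this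
      exact ⟨g', by linarith⟩
    rcases mem_d2 D2 with rfl | rfl | rfl | rfl | rfl | rfl | rfl | rfl
    iterate 6 exact loc_kill 16 8 _ _ _ cop hd1 hd2 hg (by decide +kernel) (by decide +kernel)
    · obtain ⟨g', hg'⟩ := hq 1 (by linarith)
      exact loc_kill 25 5 _ _ _ cop hd1 hd2 hg' (by decide +kernel) (by decide +kernel)
    · obtain ⟨g', hg'⟩ := hq (-1) (by linarith)
      exact loc_kill 25 5 _ _ _ cop hd1 hd2 hg' (by decide +kernel) (by decide +kernel)

lemma no_mz {m z : ℚ} (hm : m ≠ 0) (hz : z ≠ 0)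
    (h : z ^ 2 = (m ^ 2 + 1) * (m ^ 2 + 6 * m - 1) * Gf m 1) : False := by
  have hb : (m.den : ℚ) ≠ 0 := by exact_mod_cast m.den_ne_zero
  have hmd : m = m.num / m.den := (Rat.num_div_den m).symm
  obtain ⟨a, ha⟩ : ∃ a, a = m.num := ⟨_, rfl⟩
  obtain ⟨b, hb'⟩ : ∃ b : ℤ, b = m.den := ⟨_, rfl⟩
  have hbq : (b : ℚ) ≠ 0 := by rw [hb']; exact_mod_cast hb
  have hab : m = a / b := by rw [ha, hb']; exact_mod_cast hmd
  have ha0 : a ≠ 0 := by rw [ha]; simpa using hm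
  have cop : IsCoprime a b := by
    rw [ha, hb', Int.isCoprime_iff_nat_coprime]
    simpa using m.reduced
  have h1 : (z * b ^ 5) ^ 2 =
      (((a ^ 2 + b ^ 2) * (a ^ 2 + 6 * a * b - b ^ 2) * Gf a b : ℤ) : ℚ) := by
    rw [mul_pow, h, hab]
    unfold Gf
    push_cast
    field_simp
  obtain ⟨k, hk1, hk2⟩ := sq_rat_int h1
  have hk0 : k ≠ 0 := by
    rintro rfl
    have : z * (b : ℚ) ^ 5 ≠ 0 := mul_ne_zero hz (pow_ne_zero 5 hbq)
    exact this (by simpa using hk1)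
  exact no_abk cop ha0 (by exact_mod_cast hbq) hk0 hk2.symm

lemma no_cube_root (r : ℚ) : r ^ 3 + 108 ≠ 0 := by
  intro h
  have h1 : r ^ 3 = -((108 : ℕ) : ℚ) := by push_cast; linarith
  have h2 := congrArg (padicValRat 2) h1
  rw [padicValRat.pow, padicValRat.neg, padicValRat.of_nat] at h2
  have h3 : padicValNat 2 108 = 2 := by
    rw [show 108 = 2 ^ 2 * 27 by norm_num, padicValNat.mul (by norm_num) (by norm_num),
      padicValNat.prime_pow, padicValNat.eq_zero_of_not_dvd (by norm_num)]
  rw [h3] at h2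
  push_cast at h2
  omega

lemma curve_forward {s x : ℚ}
    (h : x ^ 4 - 32 * (s + 5) * ((s - 1) ^ 2 + 4) * ((s + 3) ^ 3 + 108) * x ^ 2 +
      256 * (s - 1) ^ 2 * (s + 5) ^ 2 * ((s - 1) ^ 2 + 4) * ((s + 3) ^ 3 + 108) ^ 2 = 0) :
    (s = -5 ∧ x = 0) ∨ (s = 1 ∧ x = 0) := by
  have hC := no_cube_root (s + 3)
  generalize hCdef : (s + 3) ^ 3 + 108 = C at *
  by_cases hs : s + 5 = 0
  · left
    refine ⟨by linarith, ?_⟩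
    rw [hs] at h
    have : x ^ 4 = 0 := by linarith
    simpa using this
  right
  obtain ⟨d, hd⟩ : ∃ d, d = (x ^ 2 - 16 * (s + 5) * C * ((s - 1) ^ 2 + 4)) / (32 * (s + 5) * C) :=
    ⟨_, rfl⟩
  have hd1 : x ^ 2 = 16 * (s + 5) * C * ((s - 1) ^ 2 + 4) + 32 * (s + 5) * C * d := by
    rw [hd]; field_simp; ring
  have hd2 : d ^ 2 = (s - 1) ^ 2 + 4 := by
    have hK : (32 * (s + 5) * C) ^ 2 ≠ 0 := by positivity
    apply mul_left_cancel₀ hK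
    have hx4 : x ^ 4 = (x ^ 2) ^ 2 := by ring
    rw [hx4, hd1] at h
    linear_combination h
  obtain ⟨m, hm⟩ : ∃ m, m = (d + (s - 1)) / 2 := ⟨_, rfl⟩
  have hmd : m * (d - (s - 1)) = 2 := by rw [hm]; linear_combination hd2 / 2
  have hm0 : m ≠ 0 := by rintro rfl; norm_num at hmd
  have e1 : d = m + 1 / m := by field_simp; rw [hm] at *; linarith
  have e2 : s = 1 + m - 1 / m := by field_simp; rw [hm] at *; linarith
  have key : x ^ 2 * m ^ 6 = 16 * (m + 1) ^ 2 * ((m ^ 2 + 1) * (m ^ 2 + 6 * m - 1) * Gf m 1) := by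
    have hx : x ^ 2 = 16 * (s + 5) * ((s + 3) ^ 3 + 108) * (d * (d + 2)) := by
      rw [hCdef]; linear_combination hd1 - 16 * (s + 5) * C * hd2
    rw [hx, e1, e2]
    unfold Gf
    field_simp
    ring
  by_cases hm1 : m + 1 = 0
  · have hm1' : m = -1 := by linarith
    rw [hm1'] at e2 key
    refine ⟨by rw [e2]; norm_num, ?_⟩
    norm_num at key
    exact key
  · exfalso
    have hx0 : x ≠ 0 := by
      rintro rfl
      have h1 : 16 * (s + 5) * C * (d * (d + 2)) = 0 := by
        linear_combination 16 * (s + 5) * C * hd2 - hd1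
      have h2 : d * (d + 2) = 0 := (mul_eq_zero.1 h1).resolve_left (by positivity)
      rcases mul_eq_zero.1 h2 with h2 | h2
      · nlinarith
      · have hd' : d = -2 := by linarith
        have : s - 1 = 0 := by
          have : (s - 1) ^ 2 = 0 := by rw [hd'] at hd2; linarith
          simpa using this
        apply hm1
        rw [hm, hd', this]; norm_num
    refine no_mz (m := m) (z := x * m ^ 3 / (4 * (m + 1))) hm0 (by positivity) ?_
    field_simp
    linear_combination key

/-- The rational points of the curve `𝒜₄ : x⁴ − p(t)x² + q(t) = 0`, where
`p(t) = 32(4t + 5)(16t² − 8t + 5)(64t³ + 144t² + 108t + 135)` and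
`q(t) = 256(4t − 1)²(4t + 5)²(16t² − 8t + 5)(64t³ + 144t² + 108t + 135)²`,
are exactly `(−5/4, 0)` and `(1/4, 0)`. -/
theorem curve_A4_points (t x : ℚ) :
    x ^ 4 - (32 * (4 * t + 5) * (16 * t ^ 2 - 8 * t + 5) *
        (64 * t ^ 3 + 144 * t ^ 2 + 108 * t + 135)) * x ^ 2 +
      256 * (4 * t - 1) ^ 2 * (4 * t + 5) ^ 2 * (16 * t ^ 2 - 8 * t + 5) *
        (64 * t ^ 3 + 144 * t ^ 2 + 108 * t + 135) ^ 2 = 0 ↔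
    (t = -5/4 ∧ x = 0) ∨ (t = 1/4 ∧ x = 0) := by
  constructor
  · intro h
    rcases curve_forward (s := 4 * t) (x := x) (by linear_combination h) with ⟨h1, h2⟩ | ⟨h1, h2⟩
    · left; exact ⟨by linarith, h2⟩
    · right; exact ⟨by linarith, h2⟩
  · rintro (⟨rfl, rfl⟩ | ⟨rfl, rfl⟩) <;> norm_num
end

section
/- The set of pairs (t,x) ∈ ℚ × ℚ satisfying x⁴ + p(t)x² + q(t) = 0 is exactly {(−5/4, 0), (1/4, 0)}. -/
lemma zmod8_pos : ∀ a b z : ZMod 8, 4 * (a + b) = 4 → a ^ 2 - b ^ 2 = z ^ 2 →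
    (a ^ 2 + b ^ 2) * (a ^ 2 - b ^ 2) * (3 * b ^ 2 + 2 * a * b - 3 * a ^ 2) = 5 := by
  decide +kernel

lemma zmod8_neg : ∀ a b z : ZMod 8, 4 * (a + b) = 4 → a ^ 2 - b ^ 2 = -z ^ 2 →
    (a ^ 2 + b ^ 2) * (a ^ 2 - b ^ 2) * (3 * b ^ 2 + 2 * a * b - 3 * a ^ 2) = 5 := by
  decide +kernel

lemma zmod8_sq : ∀ c : ZMod 8, c ^ 2 ≠ 5 := by decide +kernel

lemma zmod8_five : ∀ a b s : ZMod 8, 4 * (a + b) = 4 → a ^ 4 + b ^ 4 ≠ 5 * s ^ 2 := by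
  decide +kernel

lemma odd_zmod8 {n : ℤ} (h : Odd n) : 4 * (n : ZMod 8) = 4 := by
  obtain ⟨k, rfl⟩ := h
  push_cast
  have h8 : (8 : ZMod 8) = 0 := by decide
  linear_combination (k : ZMod 8) * h8

/-- opposite parity case -/
lemma case_odd {a b c : ℤ} (hab : IsCoprime a b) (hodd : Odd (a + b))
    (h : (a ^ 2 + b ^ 2) * (a ^ 2 - b ^ 2) * (3 * b ^ 2 + 2 * a * b - 3 * a ^ 2) = c ^ 2) :
    False := by
  have h2 : IsCoprime (a ^ 2 - b ^ 2) 2 := by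
    obtain ⟨k, hk⟩ := hodd
    refine ⟨1, -(2 * k ^ 2 + 2 * k - (2 * k + 1) * b), ?_⟩
    have : a = 2 * k + 1 - b := by linarith
    subst this
    ring
  have hFb : IsCoprime (a ^ 2 - b ^ 2) b := by
    have := (hab.pow_left (m := 2)).add_mul_left_left (-b)
    ring_nf at this ⊢; exact this
  have hFa : IsCoprime (a ^ 2 - b ^ 2) a := by
    have := ((hab.symm.pow_left (m := 2)).neg_left).add_mul_left_left a
    ring_nf at this ⊢; exact this
  have h1 : IsCoprime (a ^ 2 - b ^ 2) (a ^ 2 + b ^ 2) := by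
    have := (h2.mul_right (hFb.pow_right (n := 2))).add_mul_left_right 1
    ring_nf at this ⊢; exact this
  have h3 : IsCoprime (a ^ 2 - b ^ 2) (3 * b ^ 2 + 2 * a * b - 3 * a ^ 2) := by
    have := (h2.mul_right (hFa.mul_right hFb)).add_mul_left_right (-3)
    ring_nf at this ⊢; exact this
  obtain ⟨z, hz⟩ := Int.sq_of_isCoprime (h1.mul_right h3) (c := c) (by rw [← h]; ring)
  have ho := odd_zmod8 hodd
  push_cast at ho
  have h8 := congrArg (Int.cast : ℤ → ZMod 8) h
  push_cast at h8
  rcases hz with hz | hz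
  · have hz8 := congrArg (Int.cast : ℤ → ZMod 8) hz
    push_cast at hz8
    exact zmod8_sq _ (h8.symm.trans (zmod8_pos _ _ _ ho hz8))
  · have hz8 := congrArg (Int.cast : ℤ → ZMod 8) hz
    push_cast at hz8
    exact zmod8_sq _ (h8.symm.trans (zmod8_neg _ _ _ ho hz8))

lemma case_even {p q e : ℤ} (hpq : IsCoprime p q) (hodd : Odd (p + q))
    (h : p * q * (p ^ 2 + q ^ 2) * (p ^ 2 - 6 * p * q - q ^ 2) = e ^ 2) : p * q = 0 := by
  by_contra hne
  have hp0 : p ≠ 0 := left_ne_zero_of_mul hne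
  have hq0 : q ≠ 0 := right_ne_zero_of_mul hne
  have hpG : IsCoprime p (p ^ 2 + q ^ 2) := by
    have := (hpq.pow_right (n := 2)).add_mul_left_right p
    ring_nf at this ⊢; exact this
  have hqG : IsCoprime q (p ^ 2 + q ^ 2) := by
    have := (hpq.symm.pow_right (n := 2)).add_mul_left_right q
    ring_nf at this ⊢; exact this
  have hpH : IsCoprime p (p ^ 2 - 6 * p * q - q ^ 2) := by
    have := ((hpq.pow_right (n := 2)).neg_right).add_mul_left_right (p - 6 * q)
    ring_nf at this ⊢; exact this
  have hqH : IsCoprime q (p ^ 2 - 6 * p * q - q ^ 2) := by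
    have := (hpq.symm.pow_right (n := 2)).add_mul_left_right (-6 * p - q)
    ring_nf at this ⊢; exact this
  obtain ⟨P, hP⟩ := Int.sq_of_isCoprime (hpq.mul_right (hpG.mul_right hpH)) (c := e)
    (by rw [← h]; ring)
  obtain ⟨Q, hQ⟩ := Int.sq_of_isCoprime (hpq.symm.mul_right (hqG.mul_right hqH)) (c := e)
    (by rw [← h]; ring)
  have hP4 : p ^ 2 = P ^ 4 := by rcases hP with hP | hP <;> rw [hP] <;> ring
  have hQ4 : q ^ 2 = Q ^ 4 := by rcases hQ with hQ | hQ <;> rw [hQ] <;> ring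
  have hP0 : P ≠ 0 := by rintro rfl; simp at hP4; exact hp0 hP4
  have hQ0 : Q ≠ 0 := by rintro rfl; simp at hQ4; exact hq0 hQ4
  have hGpos : 0 < p ^ 2 + q ^ 2 := by positivity
  have hd0 : 0 < Int.gcd (p ^ 2 + q ^ 2) (p ^ 2 - 6 * p * q - q ^ 2) :=
    Int.gcd_pos_of_ne_zero_left _ hGpos.ne'
  obtain ⟨G', H', hcop, hG', hH'⟩ := Int.exists_gcd_one hd0
  set d : ℤ := (Int.gcd (p ^ 2 + q ^ 2) (p ^ 2 - 6 * p * q - q ^ 2) : ℤ) with hd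
  have hdpos : 0 < d := by rw [hd]; exact_mod_cast hd0
  have hdG : d ∣ p ^ 2 + q ^ 2 := Int.gcd_dvd_left ..
  have hdH : d ∣ p ^ 2 - 6 * p * q - q ^ 2 := Int.gcd_dvd_right ..
  have hdp : IsCoprime d p := (hpG.of_isCoprime_of_dvd_right hdG).symm
  have hdq : IsCoprime d q := (hqG.of_isCoprime_of_dvd_right hdG).symm
  have hd2 : IsCoprime d 2 := by
    have : IsCoprime (p ^ 2 + q ^ 2) 2 := by
      obtain ⟨k, hk⟩ := hodd
      refine ⟨1, -(2 * k ^ 2 + 2 * k - (2 * k + 1) * q + q ^ 2), ?_⟩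
      have : p = 2 * k + 1 - q := by linarith
      rw [this]
      ring
    exact this.of_isCoprime_of_dvd_left hdG
  have e1 : d ∣ p - 3 * q := by
    apply (hd2.mul_right hdp).dvd_of_dvd_mul_left
    have := dvd_add hdG hdH
    convert this using 1; ring
  have e2 : d ∣ q + 3 * p := by
    apply (hd2.mul_right hdq).dvd_of_dvd_mul_left
    have := dvd_sub hdG hdH
    convert this using 1; ring
  have e3 : d ∣ 5 := by
    apply (hd2.mul_right hdp).dvd_of_dvd_mul_left
    have := dvd_add (e2.mul_left 3) e1
    convert this using 1; ring
  have hd15 : d = 1 ∨ d = 5 := by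
    have := Int.le_of_dvd (by norm_num) e3
    interval_cases d <;> revert e3 <;> decide
  have hde : d ∣ e := by
    rw [← Int.pow_dvd_pow_iff (n := 2) (by norm_num), ← h]
    refine ⟨p * q * G' * H', ?_⟩
    rw [hG', hH']; ring
  obtain ⟨f, rfl⟩ := hde
  have hdG2 : G' ∣ p ^ 2 + q ^ 2 := ⟨d, hG'⟩
  have c1 : IsCoprime G' (p * q * H') :=
    (((hpG.of_isCoprime_of_dvd_right hdG2).symm).mul_right
      ((hqG.of_isCoprime_of_dvd_right hdG2).symm)).mul_right
      (Int.isCoprime_iff_gcd_eq_one.mpr hcop)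
  have c2 : G' * (p * q * H') = f ^ 2 := by
    have hd' : d ^ 2 ≠ 0 := by positivity
    apply mul_left_cancel₀ hd'
    rw [hG', hH'] at h
    linear_combination h
  obtain ⟨s, hs⟩ := Int.sq_of_isCoprime c1 c2
  have hs' : G' = s ^ 2 := by
    rcases hs with hs | hs
    · exact hs
    · exfalso
      rw [hG', hs] at hGpos
      nlinarith [mul_nonneg (sq_nonneg s) hdpos.le]
  have hfin : P ^ 4 + Q ^ 4 = s ^ 2 * d := by rw [← hP4, ← hQ4, hG', hs']
  rcases hd15 with h1 | h5
  · rw [h1, mul_one] at hfin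
    exact not_fermat_42 hP0 hQ0 hfin
  · rw [h5] at hfin
    have ho : Odd (P + Q) := by
      have : Odd (p ^ 2 + q ^ 2) := by
        have := hodd
        simp only [Int.odd_add, Int.even_pow, Int.odd_pow] at this ⊢
        grind
      rw [hP4, hQ4] at this
      simp only [Int.odd_add, Int.even_pow, Int.odd_pow] at this ⊢
      grind
    have ho8 := odd_zmod8 ho
    have h8 := congrArg (Int.cast : ℤ → ZMod 8) hfin
    push_cast at ho8 h8
    exact zmod8_five _ _ (s : ZMod 8) ho8 (by rw [h8]; ring)

lemma int_main {a b c : ℤ} (hab : IsCoprime a b)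
    (h : (a ^ 2 + b ^ 2) * (a ^ 2 - b ^ 2) * (3 * b ^ 2 + 2 * a * b - 3 * a ^ 2) = c ^ 2) :
    a ^ 2 = b ^ 2 := by
  rcases Int.even_or_odd (a + b) with he | ho
  · obtain ⟨p, hp⟩ := he
    obtain ⟨q, rfl⟩ : ∃ q, b = p - q := ⟨p - b, by ring⟩
    obtain rfl : a = p + q := by linarith
    have hpq : IsCoprime p q := by
      obtain ⟨u, v, huv⟩ := hab
      exact ⟨u + v, u - v, by linear_combination huv⟩
    have hodd : Odd (p + q) := by
      by_contra hcon
      rw [Int.not_odd_iff_even] at hcon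
      have h1 : (2 : ℤ) ∣ p + q := hcon.two_dvd
      have h2 : (2 : ℤ) ∣ p - q := by omega
      have := hab.isUnit_of_dvd' h1 h2
      revert this; decide
    have h4 : (4 : ℤ) ∣ c := by
      rw [← Int.pow_dvd_pow_iff (n := 2) (by norm_num), ← h]
      exact ⟨p * q * (p ^ 2 + q ^ 2) * (p ^ 2 - 6 * p * q - q ^ 2), by ring⟩
    obtain ⟨e, rfl⟩ := h4
    have := case_even (e := e) hpq hodd (by linarith)
    linear_combination 4 * this
  · exact (case_odd hab ho h).elim

lemma rat_main {m y : ℚ}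
    (h : (m ^ 2 + 1) * (m ^ 2 - 1) * (3 + 2 * m - 3 * m ^ 2) = y ^ 2) : m ^ 2 = 1 := by
  have hd : (m.den : ℚ) ≠ 0 := by exact_mod_cast m.den_ne_zero
  have hm : (m.num : ℚ) = m * m.den := (Rat.mul_den_eq_num m).symm
  have hsq : IsSquare ((((m.num ^ 2 + (m.den : ℤ) ^ 2) * (m.num ^ 2 - (m.den : ℤ) ^ 2) *
      (3 * (m.den : ℤ) ^ 2 + 2 * m.num * m.den - 3 * m.num ^ 2) : ℤ)) : ℚ) := by
    refine ⟨y * m.den ^ 3, ?_⟩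
    push_cast
    rw [hm]
    linear_combination (m.den : ℚ) ^ 6 * h
  rw [Rat.isSquare_intCast_iff] at hsq
  obtain ⟨c, hc⟩ := hsq
  have := int_main (c := c) (a := m.num) (b := (m.den : ℤ))
    (Int.isCoprime_iff_gcd_eq_one.mpr (by simpa [Int.gcd, Nat.Coprime] using m.reduced)) (by rw [hc]; ring)
  have h2 : (m.num : ℚ) ^ 2 = (m.den : ℚ) ^ 2 := by exact_mod_cast this
  rw [hm] at h2
  have hd2 : (m.den : ℚ) ^ 2 ≠ 0 := by positivity
  apply mul_right_cancel₀ hd2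
  linear_combination h2

lemma curve_u {u x : ℚ} (hu : u ≠ 0) (hu6 : u + 6 ≠ 0)
    (h : x ^ 4 + 2 * (u + 6) * (u ^ 2 + 4) * x ^ 2 + u ^ 2 * (u + 6) ^ 2 * (u ^ 2 + 4) = 0) :
    False := by
  obtain ⟨w, hw⟩ : ∃ w, x ^ 2 + (u + 6) * (u ^ 2 + 4) = 2 * (u + 6) * w :=
    ⟨(x ^ 2 + (u + 6) * (u ^ 2 + 4)) / (2 * (u + 6)), by field_simp⟩
  have hw2 : w ^ 2 = u ^ 2 + 4 := by
    have h4 : 4 * (u + 6) ^ 2 ≠ 0 := by positivity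
    apply mul_left_cancel₀ h4
    linear_combination h -
      (x ^ 2 + (u + 6) * (u ^ 2 + 4) + 2 * (u + 6) * w) * hw
  obtain ⟨m, hm⟩ : ∃ m, w = m * u + 2 := ⟨(w - 2) / u, by field_simp; ring⟩
  have hum : u * (1 - m ^ 2) = 4 * m := by
    apply mul_left_cancel₀ hu
    rw [hm] at hw2
    linear_combination -hw2
  have hm0 : m ≠ 0 := by
    rintro rfl
    simp at hum; exact hu hum
  have hm1 : 1 - m ^ 2 ≠ 0 := by
    intro h0; rw [h0] at hum; apply hm0; linarith
  have hu' : u = 4 * m / (1 - m ^ 2) := by field_simp; linarith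
  have hx : x ^ 2 = (u + 6) * (2 * w - w ^ 2) := by rw [hw2]; linear_combination hw
  have hx2 : x ^ 2 * (1 - m ^ 2) ^ 4 =
      16 * m ^ 2 * ((m ^ 2 + 1) * (m ^ 2 - 1) * (3 + 2 * m - 3 * m ^ 2)) := by
    rw [hx, hm, hu']
    field_simp
    ring
  have := rat_main (m := m) (y := x * (1 - m ^ 2) ^ 2 / (4 * m)) (by
    field_simp
    linear_combination -hx2)
  apply hm1; linarith

/-- The rational points of the curve `𝒜₅ : x⁴ + p(t)x² + q(t) = 0`, where
`p(t) = 2(4t + 5)(16t² − 8t + 5)` and `q(t) = (4t − 1)²(4t + 5)²(16t² − 8t + 5)`,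
are exactly `(−5/4, 0)` and `(1/4, 0)`. -/
theorem curve_A5_points (t x : ℚ) :
    x ^ 4 + (2 * (4 * t + 5) * (16 * t ^ 2 - 8 * t + 5)) * x ^ 2 +
      (4 * t - 1) ^ 2 * (4 * t + 5) ^ 2 * (16 * t ^ 2 - 8 * t + 5) = 0 ↔
    (t = -5/4 ∧ x = 0) ∨ (t = 1/4 ∧ x = 0) := by
  constructor
  · intro h
    by_cases h1 : t = -5/4
    · left
      refine ⟨h1, ?_⟩
      subst h1
      norm_num at h
      exact h
    by_cases h2 : t = 1/4
    · right
      refine ⟨h2, ?_⟩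
      subst h2
      norm_num at h
      by_contra hx
      have : 0 < x ^ 4 := by positivity
      nlinarith [sq_nonneg x]
    exfalso
    refine curve_u (u := 4 * t - 1) (x := x) ?_ ?_ ?_
    · intro h0; apply h2; linarith
    · intro h0; apply h1; linarith
    · linear_combination h
  · rintro (⟨rfl, rfl⟩ | ⟨rfl, rfl⟩) <;> norm_num
end
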